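/- (Homogeneous radial Strichartz estimate for the half-wave propagators.) Let n ≥ 2, let σ ∈ ℝ, and let f be a spherically symmetric Schwartz function on ℝⁿ with values in ℂ. For either choice of sign ±, define v_±(t,x) = ∫_{ℝⁿ} e^{2πi x·ξ} |ξ|^{σ} e^{±2πi t |ξ|} f̂(ξ) dξ for t > 0, x ∈ ℝⁿ. Let (q, r) be a radially wave-admissible pair and set s = n/2 − n/r − 1/q + σ. Then there is a constant C = C(n, q, r, σ), independent of f, such that ‖ t ↦ ‖v_±(t,·)‖_{L^r(ℝⁿ)} ‖_{L^q((0,∞))} ≤ C ‖ ξ ↦ |ξ|^s f̂(ξ) ‖_{L²(ℝⁿ)}, whenever the right-hand side is finite and the integral defining v_± converges absolutely for each (t,x). -/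

import Mathlib

open MeasureTheory ENNReal Real
open scoped FourierTransform RealInnerProductSpace

/-- The mixed norm `‖G‖_{L^q((0,∞))}` of an `ℝ≥0∞`-valued function `G` on `ℝ`,
with the usual modification `essSup` when `q = ∞`. -/
noncomputable def timeNorm (q : ℝ≥0∞) (G : ℝ → ℝ≥0∞) : ℝ≥0∞ :=
  if q = ∞ then essSup G (volume.restrict (Set.Ioi (0 : ℝ)))
  else (∫⁻ t in Set.Ioi (0 : ℝ), G t ^ q.toReal) ^ (1 / q.toReal)

/-- A pair `(q, r)` with `2 ≤ q, r ≤ ∞` is radially wave-admissible in dimension `n` if either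
`(q, r) ≠ (∞, ∞)` and `1/q + (n-1)/r < (n-1)/2`, or `(q, r) = (∞, 2)`. -/
def RadWaveAdmissible (n : ℕ) (q r : ℝ≥0∞) : Prop :=
  2 ≤ q ∧ 2 ≤ r ∧
    ((¬(q = ∞ ∧ r = ∞) ∧ 1 / q + ((n : ℝ≥0∞) - 1) / r < ((n : ℝ≥0∞) - 1) / 2)
      ∨ (q = ∞ ∧ r = 2))

/-!
In polar coordinates the half-wave with radial amplitude `G` is the one-dimensional oscillatory
integral `∫₀^∞ e^{2πitρ} J(ρR) ρ^{n-1} G(ρ) dρ` at `R = ‖x‖`, where `J` is the Fourier transform of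
the surface measure of the sphere. The function `y^{(n-1)/2} J(y)` solves a perturbed oscillator
equation, so its energy is bounded and `J` and `J'` decay like `y^{-(n-1)/2}`. Decomposing the
frequency `ρ` and the radius `R` dyadically, Plancherel in time and a Sobolev inequality in `R`
bound every block, with a gain that is summable along the diagonals of the double decomposition
when the admissibility inequality is strict.

For `r = ∞` and `q > 2` the blocks are almost orthogonal in `L^q` of time. For `q = 2`, `r = ∞` and
`n ≥ 3`, Poisson's integral `J(y) = c ∫_{-1}^1 (1 - s²)^{(n-3)/2} e^{-2πisy} ds` bounds the solution
by a maximal function in time of `𝓕⁻ (ρ^{n-1} G)`, which is bounded on `L²`.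
-/

namespace RadialStrichartz

open Set Metric Module Filter
open scoped Pointwise

section Fourier

variable {E : Type*} [NormedAddCommGroup E] [InnerProductSpace ℝ E] [FiniteDimensional ℝ E]
  [MeasurableSpace E] [BorelSpace E]

section L1

variable {F : Type*} [NormedAddCommGroup F] [NormedSpace ℂ F] {u : E → F}

theorem continuous_fourier (hu : Integrable u) : Continuous (𝓕 u) :=
  VectorFourier.fourierIntegral_continuous Real.continuous_fourierChar
    (innerSL ℝ).continuous₂ hu

theorem continuous_fourierInv (hu : Integrable u) : Continuous (𝓕⁻ u) := by
  have h : 𝓕⁻ u = fun x => 𝓕 u (-x) := funext fun x => Real.fourierInv_eq_fourier_neg u x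
  exact h ▸ (continuous_fourier hu).comp continuous_neg

theorem enorm_fourierInv_le_lintegral (u : E → F) (x : E) :
    ‖𝓕⁻ u x‖ₑ ≤ ∫⁻ ξ, ‖u ξ‖ₑ := by
  rw [Real.fourierInv_eq]
  exact (enorm_integral_le_lintegral_enorm _).trans_eq
    (by simp [← ofReal_norm])

end L1

section L2

variable {F : Type*} [NormedAddCommGroup F] [InnerProductSpace ℂ F] [CompleteSpace F] {u : E → F}

/- Both sides define the same tempered distribution: on test functions this is the
self-adjointness of the Fourier integral. -/
theorem fourier_toLp_ae_eq (hu : Integrable u) (hu2 : MemLp u 2) :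
    (𝓕 (hu2.toLp u) : Lp (α := E) F 2) =ᵐ[volume] 𝓕 u := by
  refine ae_eq_of_integral_contDiff_smul_eq ((Lp.memLp _).locallyIntegrable (by norm_num))
    (continuous_fourier hu).locallyIntegrable fun g hg hgc => ?_
  have hgC : ContDiff ℝ (⊤ : ℕ∞) (fun x => (g x : ℂ)) := Complex.ofRealCLM.contDiff.comp hg
  have hgCc : HasCompactSupport (fun x => (g x : ℂ)) := hgc.comp_left Complex.ofReal_zero
  let ψ : SchwartzMap E ℂ := hgCc.toSchwartzMap hgC
  have h_distr := congrArg (fun T => T ψ) (Lp.fourier_toTemperedDistribution_eq (hu2.toLp u))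
  simp only [TemperedDistribution.fourier_apply, Lp.toTemperedDistribution_apply] at h_distr
  have h_rep : ∫ x, (𝓕 ψ) x • (hu2.toLp u) x = ∫ x, (𝓕 ψ) x • u x :=
    integral_congr_ae (by filter_upwards [hu2.coeFn_toLp] with x hx; rw [hx])
  have h_flip := VectorFourier.integral_fourierIntegral_smul_eq_flip (μ := volume) (ν := volume)
    (L := innerₗ E) Real.continuous_fourierChar (by exact (innerSL ℝ).continuous₂)
    (ψ.integrable (μ := volume)) hu
  have h_test : (∫ x, ψ x • (𝓕 (hu2.toLp u) : Lp (α := E) F 2 volume) x)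
      = ∫ x, ψ x • 𝓕 u x := by
    rw [← h_distr, h_rep, SchwartzMap.fourier_coe]
    refine h_flip.trans ?_
    simp only [flip_innerₗ]
    rfl
  simpa [ψ] using h_test

theorem eLpNorm_fourier_le (hu : Integrable u) :
    eLpNorm (𝓕 u) 2 volume ≤ eLpNorm u 2 volume := by
  by_cases h : eLpNorm u 2 volume < ⊤
  · have hu2 : MemLp u 2 := ⟨hu.aestronglyMeasurable, h⟩
    have h_isometry := Lp.norm_fourier_eq (hu2.toLp u)
    rw [Lp.norm_def, Lp.norm_def, ENNReal.toReal_eq_toReal_iff' (Lp.eLpNorm_ne_top _)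
      (Lp.eLpNorm_ne_top _)] at h_isometry
    rw [← eLpNorm_congr_ae (fourier_toLp_ae_eq hu hu2), h_isometry,
      eLpNorm_congr_ae hu2.coeFn_toLp]
  · exact not_lt_top_iff.1 h ▸ le_top

theorem eLpNorm_fourierInv_le (hu : Integrable u) :
    eLpNorm (𝓕⁻ u) 2 volume ≤ eLpNorm u 2 volume := by
  have h : 𝓕⁻ u = 𝓕 u ∘ Neg.neg := funext fun x => Real.fourierInv_eq_fourier_neg u x
  rw [h, eLpNorm_comp_measurePreserving (continuous_fourier hu).aestronglyMeasurable
    (Measure.measurePreserving_neg _)]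
  exact eLpNorm_fourier_le hu

theorem lintegral_enorm_sq_eq {α G : Type*} [MeasurableSpace α] {μ : Measure α}
    [TopologicalSpace G] [ContinuousENorm G] (v : α → G) :
    ∫⁻ x, ‖v x‖ₑ ^ 2 ∂μ = eLpNorm v 2 μ ^ 2 := by
  simpa using (eLpNorm_nnreal_pow_eq_lintegral (f := v) (μ := μ) (p := 2) (by norm_num)).symm

theorem lintegral_enorm_fourierInv_sq_le (hu : Integrable u) :
    ∫⁻ t, ‖𝓕⁻ u t‖ₑ ^ 2 ≤ ∫⁻ ξ, ‖u ξ‖ₑ ^ 2 := by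
  simp_rw [lintegral_enorm_sq_eq]
  gcongr
  exact eLpNorm_fourierInv_le hu

end L2

end Fourier

section Oscillation

theorem le_mul_exp_of_hasDerivAt_le_div_sq {f f' : ℝ → ℝ} {c : ℝ}
    (hf : ∀ y, 1 ≤ y → HasDerivAt f (f' y) y) (hf' : ∀ y, 1 ≤ y → f' y ≤ c / y ^ 2 * f y)
    {y : ℝ} (hy : 1 ≤ y) : f y ≤ f 1 * Real.exp (c * (1 - y⁻¹)) := by
  have h_deriv : ∀ z, 1 ≤ z → HasDerivAt (fun z => f z * Real.exp (c * z⁻¹))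
      (f' z * Real.exp (c * z⁻¹) + f z * (Real.exp (c * z⁻¹) * (c * -(z ^ 2)⁻¹))) z := fun z hz =>
    (hf z hz).mul (((hasDerivAt_inv (zero_lt_one.trans_le hz).ne').const_mul c).exp)
  have h_anti : AntitoneOn (fun z => f z * Real.exp (c * z⁻¹)) (Ici 1) := by
    refine antitoneOn_of_hasDerivWithinAt_nonpos (convex_Ici 1)
      (fun z hz => (h_deriv z hz).continuousAt.continuousWithinAt)
      (fun z hz => (h_deriv z (interior_subset hz)).hasDerivWithinAt) fun z hz => ?_
    have h := mul_le_mul_of_nonneg_right (hf' z (interior_subset hz)) (Real.exp_pos (c * z⁻¹)).le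
    rw [div_eq_mul_inv] at h
    linarith
  have h := h_anti self_mem_Ici hy hy
  rw [mul_sub, mul_one, Real.exp_sub, ← mul_div_assoc, le_div_iff₀ (Real.exp_pos _)]
  simpa using h

theorem exists_bound_of_perturbed_oscillator {w w' : ℝ → ℝ} {a b : ℝ} (ha : 0 < a)
    (hw : ∀ y, 1 ≤ y → HasDerivAt w (w' y) y)
    (hw' : ∀ y, 1 ≤ y → HasDerivAt w' ((b / y ^ 2 - a ^ 2) * w y) y) :
    ∃ C, ∀ y, 1 ≤ y → |w y| ≤ C ∧ |w' y| ≤ C := by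
  set energy : ℝ → ℝ := fun y => a ^ 2 * w y ^ 2 + w' y ^ 2 with h_energy
  have h_deriv : ∀ y, 1 ≤ y → HasDerivAt energy (2 * b / y ^ 2 * (w y * w' y)) y := fun y hy => by
    convert! (((hw y hy).pow 2).const_mul (a ^ 2)).add ((hw' y hy).pow 2) using 1
    simp only [Nat.cast_ofNat, Nat.add_one_sub_one, pow_one]
    ring
  have h_growth : ∀ y, 1 ≤ y → 2 * b / y ^ 2 * (w y * w' y) ≤ |b| / a / y ^ 2 * energy y := by
    intro y hy
    have h_amgm : 2 * (|a * w y| * |w' y|) ≤ energy y := by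
      have := two_mul_le_add_sq |a * w y| |w' y|
      simp only [sq_abs, mul_pow] at this
      linarith
    calc 2 * b / y ^ 2 * (w y * w' y) = b / a / y ^ 2 * (2 * (a * w y * w' y)) := by
          field_simp
      _ ≤ |b / a / y ^ 2 * (2 * (a * w y * w' y))| := le_abs_self _
      _ = |b| / a / y ^ 2 * (2 * (|a * w y| * |w' y|)) := by
          simp only [abs_mul, abs_div, abs_of_pos ha, abs_pow, sq_abs, abs_two]
      _ ≤ |b| / a / y ^ 2 * energy y := by gcongr
  have h_bound : ∀ y, 1 ≤ y → energy y ≤ energy 1 * Real.exp (|b| / a) := fun y hy =>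
    (le_mul_exp_of_hasDerivAt_le_div_sq h_deriv h_growth hy).trans <| by
      have : 0 ≤ y⁻¹ := by positivity
      gcongr
      exact mul_le_of_le_one_right (by positivity) (by linarith)
  set B := √(energy 1 * Real.exp (|b| / a))
  refine ⟨max (B / a) B, fun y hy => ⟨le_max_of_le_left ?_, le_max_of_le_right ?_⟩⟩
  · rw [le_div_iff₀ ha, show |w y| * a = |a * w y| by rw [abs_mul, abs_of_pos ha, mul_comm]]
    refine Real.abs_le_sqrt ((le_add_of_nonneg_right (sq_nonneg (w' y))).trans ?_)
    simpa only [mul_pow] using h_bound y hy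
  · exact Real.abs_le_sqrt ((le_add_of_nonneg_left (by positivity)).trans (h_bound y hy))

/- The substitution `w = y ^ m * J` removes the first order term and leaves
`w'' = ((m ^ 2 - m) / y ^ 2 - a ^ 2) * w`. -/
theorem exists_rpow_decay_of_damped_oscillator {J J' J'' : ℝ → ℝ} {m a : ℝ} (ha : 0 < a)
    (hJ : ∀ y, HasDerivAt J (J' y) y) (hJ' : ∀ y, HasDerivAt J' (J'' y) y)
    (hode : ∀ y, 0 < y → J'' y = -(2 * m / y) * J' y - a ^ 2 * J y) :
    ∃ C, ∀ y, 1 ≤ y → |J y| ≤ C * y ^ (-m) ∧ |J' y| ≤ C * y ^ (-m) := by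
  set w : ℝ → ℝ := fun y => y ^ m * J y
  set w' : ℝ → ℝ := fun y => y ^ m * (J' y + m * y⁻¹ * J y)
  have h_pow : ∀ y : ℝ, 1 ≤ y → HasDerivAt (fun y : ℝ => y ^ m) (y ^ m * (m * y⁻¹)) y :=
    fun y hy => by
      have hy0 : 0 < y := by linarith
      convert! Real.hasDerivAt_rpow_const (p := m) (Or.inl hy0.ne') using 1
      rw [Real.rpow_sub_one hy0.ne']
      ring
  have hw : ∀ y, 1 ≤ y → HasDerivAt w (w' y) y := fun y hy => by
    convert! (h_pow y hy).mul (hJ y) using 1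
    ring
  have hw' : ∀ y, 1 ≤ y → HasDerivAt w' (((m ^ 2 - m) / y ^ 2 - a ^ 2) * w y) y := fun y hy => by
    have hy0 : 0 < y := by linarith
    convert! (h_pow y hy).mul ((hJ' y).add (((hasDerivAt_inv hy0.ne').const_mul m).mul (hJ y)))
      using 1
    simp only [w, hode y hy0, Pi.add_apply, Pi.mul_apply]
    field_simp
    ring
  obtain ⟨C, hC⟩ := exists_bound_of_perturbed_oscillator ha hw hw'
  refine ⟨(1 + |m|) * C, fun y hy => ?_⟩
  have hy0 : 0 < y := by linarith
  have hym : 0 < y ^ m := Real.rpow_pos_of_pos hy0 m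
  obtain ⟨hwC, hwC'⟩ := hC y hy
  rw [Real.rpow_neg hy0.le, ← div_eq_mul_inv, le_div_iff₀ hym, le_div_iff₀ hym]
  have hJw : |J y| * y ^ m = |w y| := by rw [abs_mul, abs_of_pos hym, mul_comm]
  have hJw' : J' y * y ^ m = w' y - m * y⁻¹ * w y := by simp only [w, w']; ring
  refine ⟨hJw ▸ by nlinarith [abs_nonneg m, abs_nonneg (w y)], ?_⟩
  calc |J' y| * y ^ m = |w' y - m * y⁻¹ * w y| := by rw [← hJw', abs_mul, abs_of_pos hym]
    _ ≤ |w' y| + |m| * y⁻¹ * |w y| := by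
        simpa only [abs_mul, abs_inv, abs_of_pos hy0] using abs_sub (w' y) (m * y⁻¹ * w y)
    _ ≤ C + |m| * 1 * C := by gcongr; exact inv_le_one_of_one_le₀ hy
    _ = (1 + |m|) * C := by ring

end Oscillation

section Sphere

variable {E : Type*} [NormedAddCommGroup E] [InnerProductSpace ℝ E]

theorem abs_two_pi_mul_inner_sphere_le (v : E) (ω : sphere (0 : E) 1) :
    |2 * π * ⟪v, ω⟫| ≤ 2 * π * ‖v‖ := by
  rw [abs_mul, abs_of_pos Real.two_pi_pos]
  gcongr
  simpa using abs_real_inner_le_norm v (ω : E)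

theorem hasDerivAt_two_pi_mul_inner (x v w : E) (τ : ℝ) :
    HasDerivAt (fun τ : ℝ => 2 * π * ⟪x + τ • v, w⟫) (2 * π * ⟪v, w⟫) τ := by
  have h := (((hasDerivAt_id τ).mul_const ⟪v, w⟫).const_add ⟪x, w⟫).const_mul (2 * π)
  simpa [inner_add_left, inner_smul_left] using h

/-- The action of a linear isometry on the unit sphere. -/
def sphereMap (L : E ≃ₗᵢ[ℝ] E) (ω : sphere (0 : E) 1) : sphere (0 : E) 1 := ⟨L ω, by simp⟩

theorem continuous_sphereMap (L : E ≃ₗᵢ[ℝ] E) : Continuous (sphereMap L) :=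
  (L.continuous.comp continuous_subtype_val).subtype_mk _

variable [FiniteDimensional ℝ E] [MeasurableSpace E] [BorelSpace E]

theorem measurePreserving_sphereMap (L : E ≃ₗᵢ[ℝ] E) :
    MeasurePreserving (sphereMap L) volume.toSphere volume.toSphere := by
  have h_meas := (continuous_sphereMap L).measurable
  refine ⟨h_meas, Measure.ext fun s hs => ?_⟩
  have h_preimage : L ⁻¹' (Ioo (0 : ℝ) 1 • (Subtype.val '' s)) =
      Ioo (0 : ℝ) 1 • (Subtype.val '' (sphereMap L ⁻¹' s)) := by
    ext x
    simp only [Set.mem_smul, mem_image, mem_preimage]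
    constructor
    · rintro ⟨a, ha, _, ⟨ω, hω, rfl⟩, h⟩
      have h_inv : sphereMap L (sphereMap L.symm ω) = ω := Subtype.ext (by simp [sphereMap])
      exact ⟨a, ha, _, ⟨sphereMap L.symm ω, by rwa [h_inv], rfl⟩,
        L.injective (by simpa [sphereMap] using h)⟩
    · rintro ⟨a, ha, _, ⟨ω, hω, rfl⟩, rfl⟩
      exact ⟨a, ha, L ω, ⟨sphereMap L ω, hω, rfl⟩, by simp⟩
  rw [Measure.map_apply h_meas hs, Measure.toSphere_apply' _ hs,
    Measure.toSphere_apply' _ (h_meas hs), ← h_preimage,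
    L.measurePreserving.measure_preimage_emb L.toHomeomorph.measurableEmbedding]

theorem integral_sphereMap {F : Type*} [NormedAddCommGroup F] [NormedSpace ℝ F]
    (L : E ≃ₗᵢ[ℝ] E) {f : sphere (0 : E) 1 → F} (hf : Continuous f) :
    ∫ ω, f (sphereMap L ω) ∂volume.toSphere = ∫ ω, f ω ∂volume.toSphere := by
  have h := measurePreserving_sphereMap L
  rw [← integral_map h.aemeasurable (h.map_eq ▸ hf.aestronglyMeasurable), h.map_eq]

theorem integrable_sphere {F : Type*} [NormedAddCommGroup F] {f : sphere (0 : E) 1 → F}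
    (hf : Continuous f) : Integrable f volume.toSphere :=
  hf.integrable_of_hasCompactSupport (HasCompactSupport.of_compactSpace f)

theorem abs_integral_sphere_le {f : sphere (0 : E) 1 → ℝ} {B : ℝ} (hf : ∀ ω, |f ω| ≤ B) :
    |∫ ω, f ω ∂volume.toSphere| ≤ B * (volume : Measure E).toSphere.real univ := by
  rw [← Real.norm_eq_abs]
  exact norm_integral_le_of_norm_le_const (Eventually.of_forall hf)

theorem hasDerivAt_integral_sphere {f f' : ℝ → sphere (0 : E) 1 → ℝ} {B : ℝ}
    (hf : ∀ y, Continuous (f y)) (hf' : ∀ y, Continuous (f' y)) (hB : ∀ y ω, |f' y ω| ≤ B)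
    (h_deriv : ∀ y ω, HasDerivAt (fun y => f y ω) (f' y ω) y) (y : ℝ) :
    HasDerivAt (fun y => ∫ ω, f y ω ∂volume.toSphere) (∫ ω, f' y ω ∂volume.toSphere) y :=
  (hasDerivAt_integral_of_dominated_loc_of_deriv_le (bound := fun _ => B) univ_mem
    (Eventually.of_forall fun y => (hf y).aestronglyMeasurable)
    (integrable_sphere (hf y)) (hf' y).aestronglyMeasurable
    (Eventually.of_forall fun ω y _ => hB y ω) (integrable_const B)
    (Eventually.of_forall fun ω y _ => h_deriv y ω)).2

/-- The cosine transform of the surface measure of the unit sphere. By symmetry under `ω ↦ -ω`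
it is the full Fourier transform of that measure. -/
noncomputable def sphereCos (x : E) : ℝ :=
  ∫ ω : sphere (0 : E) 1, Real.cos (2 * π * ⟪x, ω⟫) ∂volume.toSphere

/-- The derivative of `sphereCos` at `x` in the direction `v`. -/
noncomputable def sphereCosDeriv (x v : E) : ℝ :=
  ∫ ω : sphere (0 : E) 1, -(2 * π * ⟪v, ω⟫ * Real.sin (2 * π * ⟪x, ω⟫)) ∂volume.toSphere

/-- The second derivative of `sphereCos` at `x` in the direction `v`. -/
noncomputable def sphereCosDeriv₂ (x v : E) : ℝ :=
  ∫ ω : sphere (0 : E) 1, -((2 * π * ⟪v, ω⟫) ^ 2 * Real.cos (2 * π * ⟪x, ω⟫)) ∂volume.toSphere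

theorem sphereCos_eq_of_norm_eq {x y : E} (h : ‖x‖ = ‖y‖) : sphereCos x = sphereCos y := by
  set L := (ℝ ∙ (x - y))ᗮ.reflection
  have hL : L x = y := Submodule.reflection_sub h
  rw [sphereCos, ← integral_sphereMap L (by fun_prop), sphereCos]
  congr with ω
  have hLL : L (L (ω : E)) = ω := Submodule.reflection_reflection _ _
  rw [← hL, sphereMap, ← L.inner_map_map x, hLL]

theorem integral_sphere_sin_eq_zero (x : E) :
    ∫ ω : sphere (0 : E) 1, Real.sin (2 * π * ⟪x, ω⟫) ∂volume.toSphere = 0 := by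
  have h := integral_sphereMap (E := E) (LinearIsometryEquiv.neg ℝ)
    (f := fun ω => Real.sin (2 * π * ⟪x, ω⟫)) (by fun_prop)
  simp only [sphereMap, LinearIsometryEquiv.coe_neg, inner_neg_right, mul_neg, Real.sin_neg,
    integral_neg] at h
  linarith

theorem integral_sphere_fourierChar (x : E) :
    ∫ ω : sphere (0 : E) 1, (𝐞 ⟪(ω : E), x⟫ : ℂ) ∂volume.toSphere = sphereCos x := by
  have h_euler : ∀ ω : sphere (0 : E) 1, (𝐞 ⟪(ω : E), x⟫ : ℂ) =
      (Real.cos (2 * π * ⟪x, ω⟫) : ℂ) + (Real.sin (2 * π * ⟪x, ω⟫) : ℂ) * Complex.I := fun ω => by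
    rw [Real.fourierChar_apply, real_inner_comm, Complex.exp_mul_I, ← Complex.ofReal_cos,
      ← Complex.ofReal_sin]
  simp_rw [h_euler]
  rw [integral_add (integrable_sphere (by fun_prop)) (integrable_sphere (by fun_prop)),
    integral_mul_const, integral_complex_ofReal, integral_complex_ofReal,
    integral_sphere_sin_eq_zero]
  simp [sphereCos]

theorem hasDerivAt_sphereCos (x v : E) (τ : ℝ) :
    HasDerivAt (fun τ : ℝ => sphereCos (x + τ • v)) (sphereCosDeriv (x + τ • v) v) τ := by
  unfold sphereCos sphereCosDeriv
  refine hasDerivAt_integral_sphere (B := 2 * π * ‖v‖)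
    (f := fun τ (ω : sphere (0 : E) 1) => Real.cos (2 * π * ⟪x + τ • v, (ω : E)⟫))
    (f' := fun τ (ω : sphere (0 : E) 1) =>
      -(2 * π * ⟪v, (ω : E)⟫ * Real.sin (2 * π * ⟪x + τ • v, (ω : E)⟫)))
    (fun τ => by fun_prop) (fun τ => by fun_prop) (fun τ ω => ?_) (fun τ ω => ?_) τ
  · rw [abs_neg, abs_mul]
    exact (mul_le_of_le_one_right (abs_nonneg _) (Real.abs_sin_le_one _)).trans
      (abs_two_pi_mul_inner_sphere_le v ω)
  · convert! (hasDerivAt_two_pi_mul_inner x v ω τ).cos using 1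
    ring

theorem hasDerivAt_sphereCosDeriv (x v : E) (τ : ℝ) :
    HasDerivAt (fun τ : ℝ => sphereCosDeriv (x + τ • v) v) (sphereCosDeriv₂ (x + τ • v) v) τ := by
  unfold sphereCosDeriv sphereCosDeriv₂
  refine hasDerivAt_integral_sphere (B := (2 * π * ‖v‖) ^ 2)
    (f := fun τ (ω : sphere (0 : E) 1) =>
      -(2 * π * ⟪v, (ω : E)⟫ * Real.sin (2 * π * ⟪x + τ • v, (ω : E)⟫)))
    (f' := fun τ (ω : sphere (0 : E) 1) =>
      -((2 * π * ⟪v, (ω : E)⟫) ^ 2 * Real.cos (2 * π * ⟪x + τ • v, (ω : E)⟫)))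
    (fun τ => by fun_prop) (fun τ => by fun_prop) (fun τ ω => ?_) (fun τ ω => ?_) τ
  · rw [abs_neg, abs_mul, abs_pow]
    exact (mul_le_of_le_one_right (by positivity) (Real.abs_cos_le_one _)).trans
      (pow_le_pow_left₀ (abs_nonneg _) (abs_two_pi_mul_inner_sphere_le v ω) 2)
  · convert! ((hasDerivAt_two_pi_mul_inner x v ω τ).sin.const_mul (2 * π * ⟪v, (ω : E)⟫)).neg
      using 1
    ring

/- `sphereCos` is an eigenfunction of the Laplacian, because the frequencies lie on the sphere. -/
theorem sum_sphereCosDeriv₂ {ι : Type*} [Fintype ι] (b : OrthonormalBasis ι ℝ E) (x : E) :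
    ∑ i, sphereCosDeriv₂ x (b i) = -((2 * π) ^ 2 * sphereCos x) := by
  have h_parseval : ∀ ω : sphere (0 : E) 1, ∑ i, ⟪b i, (ω : E)⟫ ^ 2 = 1 := fun ω => by
    simpa using b.sum_sq_norm_inner_right (ω : E)
  simp only [sphereCosDeriv₂, sphereCos]
  rw [← integral_finsetSum _ fun i _ => integrable_sphere (by fun_prop), ← integral_const_mul,
    ← integral_neg]
  congr with ω
  rw [Finset.sum_neg_distrib, ← Finset.sum_mul]
  simp_rw [mul_pow _ ⟪_, _⟫]
  rw [← Finset.mul_sum, h_parseval, mul_one]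

end Sphere

section Kernel

variable (E : Type*) [NormedAddCommGroup E] [InnerProductSpace ℝ E]

/-- A choice of unit vector, used to evaluate radial functions. -/
noncomputable def unitVector [Nontrivial E] : E := (exists_norm_eq E zero_le_one).choose

theorem norm_unitVector [Nontrivial E] : ‖unitVector E‖ = 1 :=
  (exists_norm_eq E zero_le_one).choose_spec

theorem norm_smul_unitVector [Nontrivial E] (y : ℝ) : ‖y • unitVector E‖ = |y| := by
  rw [norm_smul, norm_unitVector, mul_one, Real.norm_eq_abs]

variable [Nontrivial E] [FiniteDimensional ℝ E]

theorem exists_orthonormalBasis_unitVector :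
    ∃ (b : OrthonormalBasis (Fin (finrank ℝ E)) ℝ E) (i : Fin (finrank ℝ E)),
      b i = unitVector E := by
  have : NeZero (finrank ℝ E) := ⟨finrank_pos.ne'⟩
  obtain ⟨b, hb⟩ := Orthonormal.exists_orthonormalBasis_extension_of_card_eq (𝕜 := ℝ) (E := E)
    (ι := Fin (finrank ℝ E)) (by simp) (v := fun _ => unitVector E) (s := {0})
    (orthonormal_subsingleton_iff.2 fun _ => norm_unitVector E)
  exact ⟨b, 0, hb 0 rfl⟩

variable [MeasurableSpace E] [BorelSpace E]

/-- The radial profile of the Fourier transform of the surface measure of the unit sphere. -/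
noncomputable def sphereKernel (y : ℝ) : ℝ := sphereCos (y • unitVector E)

/-- The derivative of `sphereKernel`. -/
noncomputable def sphereKernelDeriv (y : ℝ) : ℝ :=
  sphereCosDeriv (y • unitVector E) (unitVector E)

theorem sphereCos_eq_sphereKernel (x : E) : sphereCos x = sphereKernel E ‖x‖ :=
  sphereCos_eq_of_norm_eq (by rw [norm_smul_unitVector, abs_norm])

theorem hasDerivAt_sphereKernel (y : ℝ) :
    HasDerivAt (sphereKernel E) (sphereKernelDeriv E y) y := by
  have h := hasDerivAt_sphereCos 0 (unitVector E) y
  simp only [zero_add] at h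
  exact h

theorem hasDerivAt_sphereKernelDeriv (y : ℝ) :
    HasDerivAt (sphereKernelDeriv E) (sphereCosDeriv₂ (y • unitVector E) (unitVector E)) y := by
  have h := hasDerivAt_sphereCosDeriv 0 (unitVector E) y
  simp only [zero_add] at h
  exact h

theorem continuous_sphereKernelDeriv : Continuous (sphereKernelDeriv E) :=
  continuous_iff_continuousAt.2 fun y => (hasDerivAt_sphereKernelDeriv E y).continuousAt

variable {E} in
/- Along the tangent line `y • e + τ • v` the radial function is `J (√(y ^ 2 + τ ^ 2))`, whose
derivative is `τ * h τ` with `h` continuous at `0`. -/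
theorem sphereCosDeriv₂_of_inner_eq_zero {v : E} (hv : ‖v‖ = 1) (h_orth : ⟪unitVector E, v⟫ = 0)
    {y : ℝ} (hy : 0 < y) :
    sphereCosDeriv₂ (y • unitVector E) v = sphereKernelDeriv E y / y := by
  set h : ℝ → ℝ := fun τ => sphereKernelDeriv E √(y ^ 2 + τ ^ 2) / √(y ^ 2 + τ ^ 2)
  have h_pos : ∀ τ : ℝ, 0 < y ^ 2 + τ ^ 2 := fun τ => by positivity
  have h_norm : ∀ τ : ℝ, ‖y • unitVector E + τ • v‖ = √(y ^ 2 + τ ^ 2) := fun τ => by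
    rw [← Real.sqrt_sq (norm_nonneg _), sq, norm_add_sq_eq_norm_sq_add_norm_sq_real
      (by rw [inner_smul_left, inner_smul_right, h_orth]; simp), ← sq, ← sq, norm_smul_unitVector,
      norm_smul, hv, mul_one, Real.norm_eq_abs, sq_abs, sq_abs]
  have h_first : ∀ τ, sphereCosDeriv (y • unitVector E + τ • v) v = τ * h τ := fun τ => by
    refine (hasDerivAt_sphereCos (y • unitVector E) v τ).unique ?_
    simp_rw [sphereCos_eq_sphereKernel, h_norm]
    convert! (hasDerivAt_sphereKernel E _).comp τ
      (((hasDerivAt_pow 2 τ).const_add (y ^ 2)).sqrt (h_pos τ).ne') using 1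
    simp only [h]
    ring
  have h_cont : ContinuousAt h 0 := by
    refine (((continuous_sphereKernelDeriv E).comp ?_).continuousAt).div ?_
      (Real.sqrt_pos.2 (h_pos 0)).ne' <;> fun_prop
  have h_second : HasDerivAt (fun τ => τ * h τ) (h 0) 0 := by
    rw [hasDerivAt_iff_tendsto_slope_zero]
    refine (h_cont.tendsto.mono_left nhdsWithin_le_nhds).congr' ?_
    filter_upwards [self_mem_nhdsWithin] with τ (hτ : τ ≠ 0)
    simp [hτ]
  have h_deriv := hasDerivAt_sphereCosDeriv (y • unitVector E) v 0
  simp_rw [h_first, zero_smul, add_zero] at h_deriv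
  simpa [h, Real.sqrt_sq hy.le] using h_deriv.unique h_second

/- Bessel's equation: the radial form of `Δ u = -(2 * π) ^ 2 * u`. -/
theorem sphereKernel_ode {y : ℝ} (hy : 0 < y) :
    sphereCosDeriv₂ (y • unitVector E) (unitVector E) =
      -(2 * ((finrank ℝ E - 1) / 2) / y) * sphereKernelDeriv E y
        - (2 * π) ^ 2 * sphereKernel E y := by
  obtain ⟨b, i, hb⟩ := exists_orthonormalBasis_unitVector E
  have h_sum := sum_sphereCosDeriv₂ b (y • unitVector E)
  have h_tangent : ∀ j ∈ Finset.univ.erase i,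
      sphereCosDeriv₂ (y • unitVector E) (b j) = sphereKernelDeriv E y / y := fun j hj =>
    sphereCosDeriv₂_of_inner_eq_zero (b.norm_eq_one j)
      (by rw [← hb, b.inner_eq_zero (Finset.ne_of_mem_erase hj).symm]) hy
  rw [← Finset.add_sum_erase _ _ (Finset.mem_univ i), hb, Finset.sum_congr rfl h_tangent,
    Finset.sum_const, Finset.card_erase_of_mem (Finset.mem_univ i), Finset.card_univ,
    Fintype.card_fin, nsmul_eq_mul, Nat.cast_pred finrank_pos] at h_sum
  rw [sphereKernel]
  linear_combination h_sum

theorem abs_sphereKernel_le (y : ℝ) :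
    |sphereKernel E y| ≤ 2 * π * (volume : Measure E).toSphere.real univ := by
  refine abs_integral_sphere_le fun ω => (Real.abs_cos_le_one _).trans ?_
  linarith [Real.pi_gt_three]

theorem abs_sphereKernelDeriv_le (y : ℝ) :
    |sphereKernelDeriv E y| ≤ 2 * π * (volume : Measure E).toSphere.real univ := by
  refine abs_integral_sphere_le fun ω => ?_
  rw [abs_neg, abs_mul]
  refine (mul_le_of_le_one_right (abs_nonneg _) (Real.abs_sin_le_one _)).trans ?_
  simpa [norm_unitVector] using abs_two_pi_mul_inner_sphere_le (unitVector E) ω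

/-- `J` has derivative `J'`, both are bounded by `C`, and both decay like `y ^ (-m)` as
`y → ∞`. -/
structure IsDecayingKernel (J J' : ℝ → ℝ) (C m : ℝ) : Prop where
  nonneg : 0 ≤ m
  hasDerivAt : ∀ y, HasDerivAt J (J' y) y
  continuous_deriv : Continuous J'
  abs_le : ∀ y, |J y| ≤ C * max 1 y ^ (-m)
  abs_deriv_le : ∀ y, |J' y| ≤ C * max 1 y ^ (-m)

theorem exists_isDecayingKernel_sphereKernel :
    ∃ C, IsDecayingKernel (sphereKernel E) (sphereKernelDeriv E) C ((finrank ℝ E - 1) / 2) := by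
  obtain ⟨D, hD⟩ := exists_rpow_decay_of_damped_oscillator Real.two_pi_pos
    (hasDerivAt_sphereKernel E) (hasDerivAt_sphereKernelDeriv E) fun y hy => sphereKernel_ode E hy
  have h_dim : (1 : ℝ) ≤ finrank ℝ E := by exact_mod_cast (finrank_pos : 0 < finrank ℝ E)
  set B := 2 * π * (volume : Measure E).toSphere.real univ
  have h_glue : ∀ {f : ℝ → ℝ}, (∀ y, |f y| ≤ B) →
      (∀ y, 1 ≤ y → |f y| ≤ D * y ^ (-((finrank ℝ E - 1) / 2 : ℝ))) →
      ∀ y, |f y| ≤ max B D * max 1 y ^ (-((finrank ℝ E - 1) / 2 : ℝ)) := by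
    intro f h_bdd h_decay y
    rcases le_total y 1 with hy | hy
    · simpa [max_eq_left hy] using Or.inl (h_bdd y)
    · rw [max_eq_right hy]
      exact (h_decay y hy).trans (by gcongr; exact le_max_right _ _)
  exact ⟨max B D, by linarith, hasDerivAt_sphereKernel E, continuous_sphereKernelDeriv E,
    h_glue (abs_sphereKernel_le E) fun y hy => (hD y hy).1,
    h_glue (abs_sphereKernelDeriv_le E) fun y hy => (hD y hy).2⟩

end Kernel

section Sobolev

variable {F : Type*} [NormedAddCommGroup F] [InnerProductSpace ℝ F] {f f' : ℝ → F} {a b μ x : ℝ}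

theorem abs_two_mul_inner_le (hμ : 0 < μ) (v w : F) :
    |2 * ⟪v, w⟫| ≤ μ * ‖v‖ ^ 2 + μ⁻¹ * ‖w‖ ^ 2 := by
  have h_square : 0 ≤ μ⁻¹ * (μ * ‖v‖ - ‖w‖) ^ 2 := by positivity
  have h_expand : μ⁻¹ * (μ * ‖v‖ - ‖w‖) ^ 2 =
      μ * ‖v‖ ^ 2 - 2 * (‖v‖ * ‖w‖) + μ⁻¹ * ‖w‖ ^ 2 := by field_simp; ring
  rw [abs_mul, abs_two]
  linarith [abs_real_inner_le_norm v w]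

theorem norm_sq_sub_norm_sq_le (hf : ∀ x, HasDerivAt f (f' x) x) (hf' : Continuous f')
    (hμ : 0 < μ) (hx : x ∈ Icc a b) {y : ℝ} (hy : y ∈ Icc a b) :
    ‖f x‖ ^ 2 - ‖f y‖ ^ 2 ≤ ∫ z in Icc a b, (μ * ‖f z‖ ^ 2 + μ⁻¹ * ‖f' z‖ ^ 2) := by
  have hf_cont : Continuous f := continuous_iff_continuousAt.2 fun y => (hf y).continuousAt
  have h_inner : Continuous fun z => 2 * ⟪f z, f' z⟫ := by fun_prop
  have h_major : Continuous fun z => μ * ‖f z‖ ^ 2 + μ⁻¹ * ‖f' z‖ ^ 2 := by fun_prop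
  calc ‖f x‖ ^ 2 - ‖f y‖ ^ 2
    _ = ∫ z in y..x, 2 * ⟪f z, f' z⟫ := (intervalIntegral.integral_eq_sub_of_hasDerivAt
        (fun z _ => (hf z).norm_sq) (h_inner.intervalIntegrable _ _)).symm
    _ ≤ ∫ z in uIoc y x, ‖2 * ⟪f z, f' z⟫‖ :=
      (Real.le_norm_self _).trans intervalIntegral.norm_integral_le_integral_norm_uIoc
    _ ≤ ∫ z in uIoc y x, (μ * ‖f z‖ ^ 2 + μ⁻¹ * ‖f' z‖ ^ 2) :=
      setIntegral_mono_on h_inner.norm.integrableOn_uIoc h_major.integrableOn_uIoc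
        measurableSet_uIoc fun z _ => abs_two_mul_inner_le hμ _ _
    _ ≤ _ := setIntegral_mono_set h_major.integrableOn_Icc
        (Eventually.of_forall fun z => by positivity)
        (uIoc_subset_uIcc.trans (uIcc_subset_Icc hy hx)).eventuallyLE

/- Compare `‖f x‖ ^ 2` with its average over the interval. -/
theorem norm_sq_le_of_hasDerivAt (hf : ∀ x, HasDerivAt f (f' x) x) (hf' : Continuous f')
    (hab : a < b) (hμ : 0 < μ) (hx : x ∈ Icc a b) :
    ‖f x‖ ^ 2 ≤ ((b - a)⁻¹ + μ) * (∫ z in Icc a b, ‖f z‖ ^ 2) +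
      μ⁻¹ * ∫ z in Icc a b, ‖f' z‖ ^ 2 := by
  have hf_cont : Continuous f := continuous_iff_continuousAt.2 fun y => (hf y).continuousAt
  have h_int : IntegrableOn (fun z => ‖f z‖ ^ 2) (Icc a b) :=
    (by fun_prop : Continuous fun z => ‖f z‖ ^ 2).integrableOn_Icc
  have h_int' : IntegrableOn (fun z => ‖f' z‖ ^ 2) (Icc a b) :=
    (by fun_prop : Continuous fun z => ‖f' z‖ ^ 2).integrableOn_Icc
  obtain ⟨y, hy, h_avg⟩ := exists_le_setAverage (μ := volume) (s := Icc a b)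
    (by simpa using hab) (by simp) h_int
  have h_diff := norm_sq_sub_norm_sq_le hf hf' hμ hx hy
  rw [integral_add (h_int.const_mul μ) (h_int'.const_mul μ⁻¹), integral_const_mul,
    integral_const_mul] at h_diff
  rw [setAverage_eq, Real.volume_real_Icc_of_le hab.le, smul_eq_mul] at h_avg
  linarith

theorem enorm_sq_le_of_hasDerivAt (hf : ∀ x, HasDerivAt f (f' x) x) (hf' : Continuous f')
    (hab : a < b) (hμ : 0 < μ) (hx : x ∈ Icc a b) :
    ‖f x‖ₑ ^ 2 ≤ ENNReal.ofReal ((b - a)⁻¹ + μ) * (∫⁻ z in Icc a b, ‖f z‖ₑ ^ 2) +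
      ENNReal.ofReal μ⁻¹ * ∫⁻ z in Icc a b, ‖f' z‖ₑ ^ 2 := by
  have hf_cont : Continuous f := continuous_iff_continuousAt.2 fun y => (hf y).continuousAt
  have h_ofReal : ∀ {g : ℝ → F}, Continuous g → ∫⁻ z in Icc a b, ‖g z‖ₑ ^ 2 =
      ENNReal.ofReal (∫ z in Icc a b, ‖g z‖ ^ 2) := fun {g} hg => by
    rw [ofReal_integral_eq_lintegral_ofReal
      ((by fun_prop : Continuous fun z => ‖g z‖ ^ 2).integrableOn_Icc)
      (Eventually.of_forall fun z => by positivity)]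
    simp_rw [ENNReal.ofReal_pow (norm_nonneg _), ofReal_norm]
  have : 0 < b - a := sub_pos.2 hab
  rw [h_ofReal hf_cont, h_ofReal hf', ← ENNReal.ofReal_mul (by positivity),
    ← ENNReal.ofReal_mul (by positivity), ← ENNReal.ofReal_add (by positivity) (by positivity),
    ← ofReal_norm, ← ENNReal.ofReal_pow (norm_nonneg _)]
  exact ENNReal.ofReal_le_ofReal (norm_sq_le_of_hasDerivAt hf hf' hab hμ hx)

end Sobolev

section WaveIntegral

/-- The wave `∫ e ^ (2 π i t ρ) K(ρ, R) u(ρ) dρ` at time `t` and radius `R` with amplitude `u` and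
kernel `K`, written as an inverse Fourier transform in time. -/
noncomputable def waveInt (u : ℝ → ℂ) (K : ℝ → ℝ → ℝ) (t R : ℝ) : ℂ :=
  𝓕⁻ (fun ρ => K ρ R • u ρ) t

/-- The largest modulus of the wave `waveInt u K` at time `t` over the radii in `S`. -/
noncomputable def waveMax (u : ℝ → ℂ) (K : ℝ → ℝ → ℝ) (S : Set ℝ) (t : ℝ) : ℝ≥0∞ :=
  ⨆ R ∈ S, ‖waveInt u K t R‖ₑ

variable {u : ℝ → ℂ} {K K' : ℝ → ℝ → ℝ} {S : Set ℝ} {κ κ' : ℝ}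

theorem waveInt_eq_integral (t R : ℝ) : waveInt u K t R = ∫ ρ, 𝐞 (t * ρ) • K ρ R • u ρ := by
  simp [waveInt, Real.fourierInv_eq]

theorem enorm_waveInt_le_waveMax {t R : ℝ} (hR : R ∈ S) :
    ‖waveInt u K t R‖ₑ ≤ waveMax u K S t :=
  le_iSup₂ (f := fun R _ => ‖waveInt u K t R‖ₑ) R hR

theorem norm_smul_le_of_abs_le {k : ℝ} {z : ℂ} (h : z ≠ 0 → |k| ≤ κ) : ‖k • z‖ ≤ κ * ‖z‖ := by
  rcases eq_or_ne z 0 with rfl | hz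
  · simp
  · rw [norm_smul, Real.norm_eq_abs]
    gcongr
    exact h hz

theorem enorm_smul_le_of_abs_le {k : ℝ} {z : ℂ} (h : z ≠ 0 → |k| ≤ κ) :
    ‖k • z‖ₑ ≤ ENNReal.ofReal κ * ‖z‖ₑ := by
  rw [← ofReal_norm, ← ofReal_norm, ← ENNReal.ofReal_mul' (norm_nonneg z)]
  exact ENNReal.ofReal_le_ofReal (norm_smul_le_of_abs_le h)

theorem aestronglyMeasurable_kernel_smul (hu : Integrable u)
    (hK : Continuous (Function.uncurry K)) (R : ℝ) :
    AEStronglyMeasurable (fun ρ => K ρ R • u ρ) := by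
  have hK_slice : Continuous fun ρ => K ρ R := hK.comp (by fun_prop : Continuous fun ρ => (ρ, R))
  exact hK_slice.aestronglyMeasurable.smul hu.aestronglyMeasurable

theorem integrable_kernel_smul (hu : Integrable u) (hK : Continuous (Function.uncurry K)) {R : ℝ}
    (hκ : ∀ ρ, u ρ ≠ 0 → |K ρ R| ≤ κ) : Integrable fun ρ => K ρ R • u ρ :=
  (hu.norm.const_mul κ).mono' (aestronglyMeasurable_kernel_smul hu hK R)
    (Eventually.of_forall fun ρ => norm_smul_le_of_abs_le (hκ ρ))

theorem enorm_waveInt_le {R : ℝ} (hκ : ∀ ρ, u ρ ≠ 0 → |K ρ R| ≤ κ) (t : ℝ) :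
    ‖waveInt u K t R‖ₑ ≤ ENNReal.ofReal κ * ∫⁻ ρ, ‖u ρ‖ₑ := by
  rw [← lintegral_const_mul' _ _ ENNReal.ofReal_ne_top]
  exact (enorm_fourierInv_le_lintegral _ _).trans
    (lintegral_mono fun ρ => enorm_smul_le_of_abs_le (hκ ρ))

theorem waveMax_le (hκ : ∀ ρ, u ρ ≠ 0 → ∀ R ∈ S, |K ρ R| ≤ κ) (t : ℝ) :
    waveMax u K S t ≤ ENNReal.ofReal κ * ∫⁻ ρ, ‖u ρ‖ₑ :=
  iSup₂_le fun R hR => enorm_waveInt_le (fun ρ hρ => hκ ρ hρ R hR) t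

theorem lintegral_enorm_waveInt_sq_le (hu : Integrable u) (hK : Continuous (Function.uncurry K))
    {R : ℝ} (hκ : ∀ ρ, u ρ ≠ 0 → |K ρ R| ≤ κ) :
    ∫⁻ t, ‖waveInt u K t R‖ₑ ^ 2 ≤ ENNReal.ofReal κ ^ 2 * ∫⁻ ρ, ‖u ρ‖ₑ ^ 2 := by
  rw [← lintegral_const_mul' _ _ (by finiteness)]
  refine (lintegral_enorm_fourierInv_sq_le (integrable_kernel_smul hu hK hκ)).trans
    (lintegral_mono fun ρ => ?_)
  rw [← mul_pow]
  exact pow_le_pow_left' (enorm_smul_le_of_abs_le (hκ ρ)) 2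

theorem exists_kernel_bound (hu : HasCompactSupport u) (hK : Continuous (Function.uncurry K))
    (R₀ : ℝ) : ∃ B, ∀ R ∈ closedBall R₀ 1, ∀ ρ, u ρ ≠ 0 → |K ρ R| ≤ B := by
  obtain ⟨B, hB⟩ := (IsCompact.prod hu (isCompact_closedBall R₀ 1)).exists_bound_of_continuousOn
    hK.continuousOn
  exact ⟨B, fun R hR ρ hρ => hB (ρ, R) ⟨subset_tsupport u hρ, hR⟩⟩

variable (hu : Integrable u) (hu_supp : HasCompactSupport u) (hK : Continuous (Function.uncurry K))
  (hK' : Continuous (Function.uncurry K')) (h_deriv : ∀ ρ R, HasDerivAt (K ρ) (K' ρ R) R)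
include hu hu_supp hK

theorem integrable_kernel_smul_of_hasCompactSupport (R : ℝ) :
    Integrable fun ρ => K ρ R • u ρ := by
  obtain ⟨B, hB⟩ := exists_kernel_bound hu_supp hK R
  exact integrable_kernel_smul hu hK (hB R (mem_closedBall_self zero_le_one))

theorem continuous_waveInt : Continuous (Function.uncurry (waveInt u K)) := by
  simp_rw [Function.uncurry_def, waveInt_eq_integral]
  refine continuous_iff_continuousAt.2 fun ⟨t₀, R₀⟩ => ?_
  obtain ⟨B, hB⟩ := exists_kernel_bound hu_supp hK R₀
  have h_near : ∀ᶠ p : ℝ × ℝ in nhds (t₀, R₀), p.2 ∈ closedBall R₀ 1 :=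
    continuousAt_snd.eventually (closedBall_mem_nhds R₀ one_pos)
  refine continuousAt_of_dominated (bound := fun ρ => B * ‖u ρ‖)
    (Eventually.of_forall fun p => ?_) (h_near.mono fun p hp => Eventually.of_forall fun ρ => ?_)
    (hu.norm.const_mul B) (Eventually.of_forall fun ρ => ?_)
  · exact ((by fun_prop : Continuous fun ρ => 𝐞 (p.1 * ρ)).aestronglyMeasurable).smul
      (aestronglyMeasurable_kernel_smul hu hK p.2)
  · rw [Circle.norm_smul]
    exact norm_smul_le_of_abs_le (hB _ hp ρ)
  · have : Continuous fun p : ℝ × ℝ => K ρ p.2 :=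
      hK.comp (by fun_prop : Continuous fun p : ℝ × ℝ => (ρ, p.2))
    fun_prop

include hK' h_deriv in
theorem hasDerivAt_waveInt (t R : ℝ) : HasDerivAt (waveInt u K t) (waveInt u K' t R) R := by
  have h_meas : ∀ {G : ℝ → ℝ → ℝ}, Continuous (Function.uncurry G) → ∀ R,
      AEStronglyMeasurable (fun ρ => 𝐞 (t * ρ) • G ρ R • u ρ) := fun hG R =>
    ((by fun_prop : Continuous fun ρ => 𝐞 (t * ρ)).aestronglyMeasurable).smul
      (aestronglyMeasurable_kernel_smul hu hG R)
  obtain ⟨B, hB⟩ := exists_kernel_bound hu_supp hK' R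
  simp_rw [funext fun R => waveInt_eq_integral (u := u) (K := K) t R,
    waveInt_eq_integral (K := K')]
  refine (hasDerivAt_integral_of_dominated_loc_of_deriv_le (bound := fun ρ => B * ‖u ρ‖)
    (F := fun R ρ => 𝐞 (t * ρ) • K ρ R • u ρ) (F' := fun R ρ => 𝐞 (t * ρ) • K' ρ R • u ρ)
    (closedBall_mem_nhds R one_pos) (Eventually.of_forall (h_meas hK)) ?_ (h_meas hK' R)
    (Eventually.of_forall fun ρ x hx => ?_) (hu.norm.const_mul B)
    (Eventually.of_forall fun ρ x _ => ?_)).2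
  · refine (integrable_kernel_smul_of_hasCompactSupport hu hu_supp hK R).mono (h_meas hK R)
      (Eventually.of_forall fun ρ => ?_)
    rw [Circle.norm_smul]
  · rw [Circle.norm_smul]
    exact norm_smul_le_of_abs_le (hB x hx ρ)
  · exact ((h_deriv ρ x).smul_const (u ρ)).const_smul _

theorem measurable_waveMax (S : Set ℝ) : Measurable (waveMax u K S) := by
  refine (lowerSemicontinuous_biSup fun R _ => Continuous.lowerSemicontinuous ?_).measurable
  exact (continuous_fourierInv
    (integrable_kernel_smul_of_hasCompactSupport hu hu_supp hK R)).enorm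

theorem lintegral_lintegral_enorm_waveInt_sq_le {a b : ℝ}
    (hκ : ∀ ρ, u ρ ≠ 0 → ∀ R ∈ Icc a b, |K ρ R| ≤ κ) :
    ∫⁻ t, ∫⁻ R in Icc a b, ‖waveInt u K t R‖ₑ ^ 2 ≤
      ENNReal.ofReal (b - a) * ENNReal.ofReal κ ^ 2 * ∫⁻ ρ, ‖u ρ‖ₑ ^ 2 := by
  have h_meas := ((continuous_waveInt hu hu_supp hK).enorm.measurable.pow_const 2).aemeasurable
    (μ := volume.prod (volume.restrict (Icc a b)))
  rw [lintegral_lintegral_swap h_meas]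
  refine (setLIntegral_mono' measurableSet_Icc fun R hR =>
    lintegral_enorm_waveInt_sq_le hu hK fun ρ hρ => hκ ρ hρ R hR).trans_eq ?_
  rw [setLIntegral_const, Real.volume_Icc]
  ring

include hK' h_deriv in
theorem waveMax_Icc_sq_le {a b μ : ℝ} (hab : a < b) (hμ : 0 < μ) (t : ℝ) :
    waveMax u K (Icc a b) t ^ 2 ≤
      ENNReal.ofReal ((b - a)⁻¹ + μ) * (∫⁻ R in Icc a b, ‖waveInt u K t R‖ₑ ^ 2) +
        ENNReal.ofReal μ⁻¹ * ∫⁻ R in Icc a b, ‖waveInt u K' t R‖ₑ ^ 2 := by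
  rw [← ENNReal.rpow_two, ← ENNReal.le_rpow_inv_iff two_pos]
  refine iSup₂_le fun R hR => ?_
  rw [ENNReal.le_rpow_inv_iff two_pos, ENNReal.rpow_two]
  exact enorm_sq_le_of_hasDerivAt (hasDerivAt_waveInt hu hu_supp hK hK' h_deriv t)
    ((continuous_waveInt hu hu_supp hK').uncurry_left t) hab hμ hR

include hK' h_deriv in
theorem eLpNorm_waveMax_Icc_le {a b μ L : ℝ} (hab : a < b) (hμ : 0 < μ)
    (hκ : ∀ ρ, u ρ ≠ 0 → ∀ R ∈ Icc a b, |K ρ R| ≤ κ)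
    (hκ' : ∀ ρ, u ρ ≠ 0 → ∀ R ∈ Icc a b, |K' ρ R| ≤ κ')
    (hκ_nonneg : 0 ≤ κ) (hκ'_nonneg : 0 ≤ κ')
    (hL : (1 + μ * (b - a)) * κ ^ 2 + μ⁻¹ * (b - a) * κ' ^ 2 ≤ L ^ 2) (hL_nonneg : 0 ≤ L) :
    eLpNorm (waveMax u K (Icc a b)) 2 ≤ ENNReal.ofReal L * eLpNorm u 2 := by
  have h_len : 0 < b - a := sub_pos.2 hab
  have h_meas : Measurable fun t => ∫⁻ R in Icc a b, ‖waveInt u K t R‖ₑ ^ 2 :=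
    ((continuous_waveInt hu hu_supp hK).enorm.measurable.pow_const 2).lintegral_prod_right'
  have h_meas' : Measurable fun t => ∫⁻ R in Icc a b, ‖waveInt u K' t R‖ₑ ^ 2 :=
    ((continuous_waveInt hu hu_supp hK').enorm.measurable.pow_const 2).lintegral_prod_right'
  refine (ENNReal.pow_le_pow_left_iff two_ne_zero).1 ?_
  rw [mul_pow, ← lintegral_enorm_sq_eq, ← lintegral_enorm_sq_eq, ← ENNReal.ofReal_pow hL_nonneg]
  refine (lintegral_mono fun t =>
    waveMax_Icc_sq_le hu hu_supp hK hK' h_deriv hab hμ t).trans ?_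
  rw [lintegral_add_left (h_meas.const_mul _), lintegral_const_mul _ h_meas,
    lintegral_const_mul _ h_meas']
  calc _ ≤ ENNReal.ofReal ((b - a)⁻¹ + μ) *
        (ENNReal.ofReal (b - a) * ENNReal.ofReal κ ^ 2 * ∫⁻ ρ, ‖u ρ‖ₑ ^ 2) +
        ENNReal.ofReal μ⁻¹ *
        (ENNReal.ofReal (b - a) * ENNReal.ofReal κ' ^ 2 * ∫⁻ ρ, ‖u ρ‖ₑ ^ 2) := by
        gcongr
        · exact lintegral_lintegral_enorm_waveInt_sq_le hu hu_supp hK hκ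
        · exact lintegral_lintegral_enorm_waveInt_sq_le hu hu_supp hK' hκ'
    _ = ENNReal.ofReal ((1 + μ * (b - a)) * κ ^ 2 + μ⁻¹ * (b - a) * κ' ^ 2) *
        ∫⁻ ρ, ‖u ρ‖ₑ ^ 2 := by
      rw [← ENNReal.ofReal_pow hκ_nonneg, ← ENNReal.ofReal_pow hκ'_nonneg,
        ← mul_assoc _ _ (∫⁻ ρ, _), ← mul_assoc _ _ (∫⁻ ρ, _), ← add_mul,
        ← ENNReal.ofReal_mul h_len.le, ← ENNReal.ofReal_mul h_len.le,
        ← ENNReal.ofReal_mul (by positivity), ← ENNReal.ofReal_mul (by positivity),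
        ← ENNReal.ofReal_add (by positivity) (by positivity)]
      congr 2
      field_simp
    _ ≤ _ := by gcongr

end WaveIntegral

section L2Norm

variable {ι : Type*}

/-- The `ℓ²` norm of a family of extended nonnegative numbers. -/
noncomputable def l2Norm (x : ι → ℝ≥0∞) : ℝ≥0∞ :=
  (∑' i, x i ^ 2) ^ (2⁻¹ : ℝ)

theorem l2Norm_sq (x : ι → ℝ≥0∞) : l2Norm x ^ 2 = ∑' i, x i ^ 2 := by
  rw [l2Norm, ← ENNReal.rpow_two, ENNReal.rpow_inv_rpow two_ne_zero]

theorem le_l2Norm (x : ι → ℝ≥0∞) (i : ι) : x i ≤ l2Norm x :=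
  (ENNReal.pow_le_pow_left_iff two_ne_zero).1 ((ENNReal.le_tsum i).trans_eq (l2Norm_sq x).symm)

theorem l2Norm_mono {x y : ι → ℝ≥0∞} (h : ∀ i, x i ≤ y i) : l2Norm x ≤ l2Norm y := by
  unfold l2Norm
  gcongr with i
  exact h i

theorem l2Norm_const_mul (c : ℝ≥0∞) (x : ι → ℝ≥0∞) : l2Norm (fun i => c * x i) = c * l2Norm x := by
  rw [← (ENNReal.pow_right_strictMono two_ne_zero).injective.eq_iff, mul_pow]
  simp_rw [l2Norm_sq, mul_pow, ENNReal.tsum_mul_left]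

theorem sq_tsum_mul_le (w x : ι → ℝ≥0∞) :
    (∑' i, w i * x i) ^ 2 ≤ (∑' i, w i) * ∑' i, w i * x i ^ 2 := by
  rw [← ENNReal.rpow_two, ← ENNReal.le_rpow_inv_iff two_pos, ENNReal.tsum_eq_iSup_sum]
  refine iSup_le fun s => ?_
  refine (ENNReal.inner_le_weight_mul_Lp_of_nonneg s one_le_two w x).trans ?_
  rw [ENNReal.mul_rpow_of_nonneg _ _ (by norm_num)]
  norm_num only
  simp_rw [ENNReal.rpow_two]
  gcongr <;> exact ENNReal.sum_le_tsum s

theorem l2Norm_tsum_mul_le (w a : ℤ → ℝ≥0∞) :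
    l2Norm (fun j => ∑' i, w (i + j) * a i) ≤ (∑' k, w k) * l2Norm a := by
  refine (ENNReal.pow_le_pow_left_iff two_ne_zero).1 ?_
  rw [l2Norm_sq, mul_pow, l2Norm_sq]
  calc ∑' j, (∑' i, w (i + j) * a i) ^ 2
    _ ≤ ∑' j, (∑' k, w k) * ∑' i, w (i + j) * a i ^ 2 := by
      gcongr with j
      rw [← (Equiv.addRight j).tsum_eq w]
      exact sq_tsum_mul_le (fun i => w (i + j)) a
    _ = (∑' k, w k) * ∑' i, ∑' j, w (i + j) * a i ^ 2 := by
      rw [ENNReal.tsum_mul_left, ENNReal.tsum_comm]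
    _ = (∑' k, w k) ^ 2 * ∑' i, a i ^ 2 := by
      have h_shift : ∀ i, ∑' j, w (i + j) = ∑' k, w k := fun i => (Equiv.addLeft i).tsum_eq w
      simp_rw [ENNReal.tsum_mul_right, h_shift, ENNReal.tsum_mul_left]
      ring

theorem tsum_prod_mul_mul_le (w a : ℤ → ℝ≥0∞) :
    ∑' p : ℤ × ℤ, w (p.2 - p.1) * (a p.1 * a p.2) ≤ (2 * ∑' k, w k) * l2Norm a ^ 2 := by
  have h_mul_le : ∀ y z : ℝ≥0∞, y * z ≤ y ^ 2 + z ^ 2 := fun y z => by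
    rcases le_total y z with h | h
    · exact (mul_le_mul_left h z).trans ((sq z).symm.le.trans le_add_self)
    · exact (mul_le_mul_right h y).trans ((sq y).symm.le.trans le_self_add)
  have h_right : ∀ i, ∑' k, w (k - i) = ∑' k, w k := fun i => (Equiv.subRight i).tsum_eq w
  have h_left : ∀ k, ∑' i, w (k - i) = ∑' i, w i := fun k => (Equiv.subLeft k).tsum_eq w
  have h_fst : ∑' p : ℤ × ℤ, w (p.2 - p.1) * a p.1 ^ 2 = (∑' k, w k) * ∑' i, a i ^ 2 := by
    rw [ENNReal.tsum_prod (f := fun i k => w (k - i) * a i ^ 2)]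
    simp_rw [ENNReal.tsum_mul_right, h_right, ENNReal.tsum_mul_left]
  have h_snd : ∑' p : ℤ × ℤ, w (p.2 - p.1) * a p.2 ^ 2 = (∑' k, w k) * ∑' i, a i ^ 2 := by
    rw [ENNReal.tsum_prod (f := fun i k => w (k - i) * a k ^ 2), ENNReal.tsum_comm]
    simp_rw [ENNReal.tsum_mul_right, h_left, ENNReal.tsum_mul_left]
  calc ∑' p : ℤ × ℤ, w (p.2 - p.1) * (a p.1 * a p.2)
    _ ≤ ∑' p : ℤ × ℤ, (w (p.2 - p.1) * a p.1 ^ 2 + w (p.2 - p.1) * a p.2 ^ 2) := by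
      simp_rw [← mul_add]
      gcongr
      exact h_mul_le _ _
    _ = (2 * ∑' k, w k) * l2Norm a ^ 2 := by
      rw [ENNReal.tsum_add, h_fst, h_snd, l2Norm_sq]
      ring

end L2Norm

section Lp

variable {α : Type*} [MeasurableSpace α] {μ : Measure α} {q : ℝ≥0∞}

theorem eLpNorm_rpow_toReal {ε : Type*} [TopologicalSpace ε] [ContinuousENorm ε] (f : α → ε)
    (hq0 : q ≠ 0) (hq : q ≠ ∞) : eLpNorm f q μ ^ q.toReal = ∫⁻ x, ‖f x‖ₑ ^ q.toReal ∂μ := by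
  rw [eLpNorm_eq_lintegral_rpow_enorm_toReal hq0 hq, one_div,
    ENNReal.rpow_inv_rpow (ENNReal.toReal_pos hq0 hq).ne']

theorem two_le_toReal (hq : 2 ≤ q) (hq_top : q ≠ ∞) : 2 ≤ q.toReal := by
  simpa using ENNReal.toReal_mono hq_top hq

theorem two_div_toReal_le_one (hq : 2 ≤ q) : 2 / q.toReal ≤ 1 := by
  rcases eq_or_ne q ∞ with rfl | hq_top
  · simp
  · exact div_le_one_of_le₀ (two_le_toReal hq hq_top) ENNReal.toReal_nonneg

theorem one_le_half (hq : 2 ≤ q) : 1 ≤ q / 2 := by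
  rw [ENNReal.le_div_iff_mul_le (by simp) (by simp), one_mul]
  exact hq

theorem eLpNorm_le_of_forall_le {f g : α → ℝ≥0∞} (h : ∀ x, f x ≤ g x) :
    eLpNorm f q μ ≤ eLpNorm g q μ :=
  eLpNorm_mono_enorm fun x => by simpa using h x

theorem eLpNorm_sq_half (f : α → ℝ≥0∞) :
    eLpNorm (fun x => f x ^ 2) (q / 2) μ = eLpNorm f q μ ^ 2 := by
  simpa [ENNReal.div_mul_cancel two_ne_zero ofNat_ne_top] using
    eLpNorm_enorm_rpow (μ := μ) f (p := q / 2) (q := 2) two_pos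

theorem eLpNorm_tsum_le {ι : Type*} [Countable ι] {f : ι → α → ℝ≥0∞} (hf : ∀ i, Measurable (f i))
    (hq : 1 ≤ q) : eLpNorm (fun x => ∑' i, f i x) q μ ≤ ∑' i, eLpNorm (f i) q μ := by
  rcases eq_or_ne q ∞ with rfl | hq_top
  · simp_rw [eLpNorm_exponent_top]
    refine essSup_le_of_ae_le _ ?_
    filter_upwards [ae_all_iff.2 fun i => enorm_ae_le_eLpNormEssSup (f i) μ] with x hx
    exact ENNReal.tsum_le_tsum hx
  have hq0 : q ≠ 0 := (one_pos.trans_le hq).ne'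
  have hq_pos : 0 < q.toReal := ENNReal.toReal_pos hq0 hq_top
  have h_finset : ∀ s : Finset ι,
      ∫⁻ x, (∑ i ∈ s, f i x) ^ q.toReal ∂μ ≤ (∑' i, eLpNorm (f i) q μ) ^ q.toReal := fun s => by
    have h_le : eLpNorm (∑ i ∈ s, f i) q μ ≤ ∑' i, eLpNorm (f i) q μ :=
      (eLpNorm_sum_le (fun i _ => (hf i).aestronglyMeasurable) hq).trans (ENNReal.sum_le_tsum s)
    rw [← ENNReal.rpow_le_rpow_iff hq_pos, eLpNorm_rpow_toReal _ hq0 hq_top] at h_le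
    simpa only [enorm_eq_self, Finset.sum_apply] using h_le
  have h_iSup : ∀ x, (∑' i, f i x) ^ q.toReal = ⨆ s : Finset ι, (∑ i ∈ s, f i x) ^ q.toReal :=
    fun x => by
      rw [ENNReal.tsum_eq_iSup_sum]
      exact (ENNReal.orderIsoRpow q.toReal hq_pos).map_iSup _
  refine (ENNReal.rpow_le_rpow_iff hq_pos).1 ?_
  rw [eLpNorm_rpow_toReal _ hq0 hq_top]
  simp_rw [enorm_eq_self, h_iSup]
  rw [lintegral_iSup_directed]
  · exact iSup_le h_finset
  · exact fun s => ((Finset.measurable_fun_sum s fun i _ => hf i).pow_const _).aemeasurable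
  · refine Monotone.directed_le fun s t hst x => ?_
    exact ENNReal.rpow_le_rpow (Finset.sum_le_sum_of_subset hst) hq_pos.le

theorem measurable_l2Norm {ι : Type*} [Countable ι] {f : ι → α → ℝ≥0∞}
    (hf : ∀ i, Measurable (f i)) : Measurable fun x => l2Norm fun i => f i x :=
  (Measurable.tsum fun i => (hf i).pow_const 2).pow_const _

theorem eLpNorm_l2Norm_le {ι : Type*} [Countable ι] {f : ι → α → ℝ≥0∞}
    (hf : ∀ i, Measurable (f i)) (hq : 2 ≤ q) :
    eLpNorm (fun x => l2Norm fun i => f i x) q μ ≤ l2Norm fun i => eLpNorm (f i) q μ := by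
  refine (ENNReal.pow_le_pow_left_iff two_ne_zero).1 ?_
  simp_rw [← eLpNorm_sq_half, l2Norm_sq]
  refine (eLpNorm_tsum_le (fun i => (hf i).pow_const 2) (one_le_half hq)).trans_eq ?_
  simp_rw [eLpNorm_sq_half]

theorem eLpNorm_le_l2Norm_eLpNorm_restrict {ι : Type*} [Countable ι] {s : ι → Set α}
    (hs : ∀ i, MeasurableSet (s i)) (h_cover : ∀ᵐ x ∂μ, x ∈ ⋃ i, s i) {f : α → ℝ≥0∞}
    (hf : Measurable f) (hq : 2 ≤ q) :
    eLpNorm f q μ ≤ l2Norm fun i => eLpNorm f q (μ.restrict (s i)) := by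
  simp_rw [← eLpNorm_indicator_eq_eLpNorm_restrict (hs _)]
  refine le_trans (eLpNorm_mono_enorm_ae ?_) (eLpNorm_l2Norm_le (fun i => hf.indicator (hs i)) hq)
  filter_upwards [h_cover] with x hx
  obtain ⟨i, hi⟩ := mem_iUnion.1 hx
  simpa [hi] using le_l2Norm (fun i => (s i).indicator f x) i

theorem eLpNorm_le_eLpNorm_top_rpow_mul {F : Type*} [TopologicalSpace F] [ContinuousENorm F]
    {f : α → F} (hf : AEMeasurable (fun x => ‖f x‖ₑ) μ) (hq : 2 ≤ q) :
    eLpNorm f q μ ≤ eLpNorm f ∞ μ ^ (1 - 2 / q.toReal) * eLpNorm f 2 μ ^ (2 / q.toReal) := by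
  rcases eq_or_ne q ∞ with rfl | hq_top
  · simp
  have hq2 := two_le_toReal hq hq_top
  have hq_pos : 0 < q.toReal := by linarith
  refine (ENNReal.rpow_le_rpow_iff hq_pos).1 ?_
  rw [eLpNorm_rpow_toReal _ (two_pos.trans_le hq).ne' hq_top,
    ENNReal.mul_rpow_of_nonneg _ _ hq_pos.le, ← ENNReal.rpow_mul, ← ENNReal.rpow_mul,
    sub_mul, one_mul, div_mul_cancel₀ _ hq_pos.ne', ENNReal.rpow_two, ← lintegral_enorm_sq_eq,
    ← lintegral_const_mul'' _ (hf.pow_const 2)]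
  refine lintegral_mono_ae ?_
  filter_upwards [enorm_ae_le_eLpNormEssSup f μ] with x hx
  calc ‖f x‖ₑ ^ q.toReal
    _ = ‖f x‖ₑ ^ (q.toReal - 2) * ‖f x‖ₑ ^ 2 := by
      rw [← ENNReal.rpow_two, ← ENNReal.rpow_add_of_nonneg _ _ (by linarith) zero_le_two,
        sub_add_cancel]
    _ ≤ _ := by
      rw [eLpNorm_exponent_top]
      gcongr

theorem eLpNorm_rpow_mul_rpow_le {X Y : α → ℝ≥0∞} (hX : AEMeasurable X μ) (hY : AEMeasurable Y μ)
    (hq : q ≠ 0) {θ : ℝ} (hθ0 : 0 ≤ θ) (hθ1 : θ ≤ 1) :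
    eLpNorm (fun t => X t ^ θ * Y t ^ (1 - θ)) q μ ≤
      eLpNorm X q μ ^ θ * eLpNorm Y q μ ^ (1 - θ) := by
  have hθ' : 0 ≤ 1 - θ := sub_nonneg.2 hθ1
  rcases eq_or_ne q ∞ with rfl | hq_top
  · simp_rw [eLpNorm_exponent_top]
    refine essSup_le_of_ae_le _ ?_
    filter_upwards [enorm_ae_le_eLpNormEssSup X μ, enorm_ae_le_eLpNormEssSup Y μ] with t hX_le hY_le
    simp only [enorm_eq_self] at hX_le hY_le ⊢
    gcongr
  have h_comm : ∀ (z : ℝ≥0∞) (x : ℝ), (z ^ x) ^ q.toReal = (z ^ q.toReal) ^ x := fun z x => by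
    rw [← ENNReal.rpow_mul, ← ENNReal.rpow_mul, mul_comm]
  refine (ENNReal.rpow_le_rpow_iff (ENNReal.toReal_pos hq hq_top)).1 ?_
  rw [ENNReal.mul_rpow_of_nonneg _ _ ENNReal.toReal_nonneg, h_comm, h_comm,
    eLpNorm_rpow_toReal _ hq hq_top, eLpNorm_rpow_toReal _ hq hq_top,
    eLpNorm_rpow_toReal _ hq hq_top]
  simp_rw [enorm_eq_self, ENNReal.mul_rpow_of_nonneg _ _ ENNReal.toReal_nonneg, h_comm]
  exact ENNReal.lintegral_mul_norm_pow_le (hX.pow_const _) (hY.pow_const _) hθ0 hθ' (by ring)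

end Lp

section HalfWave

variable {E : Type*} [NormedAddCommGroup E] [InnerProductSpace ℝ E] [FiniteDimensional ℝ E]
  [MeasurableSpace E] [BorelSpace E] {u : E → ℂ}

/-- The half-wave `e ^ (2 π i t |D|)` with frequency profile `u`, at time `t`. -/
noncomputable def halfWave (u : E → ℂ) (t : ℝ) : E → ℂ :=
  𝓕⁻ fun ξ => 𝐞 (t * ‖ξ‖) • u ξ

theorem integrable_fourierChar_smul {φ : E → ℝ} (hφ : Continuous φ) (hu : Integrable u) :
    Integrable fun ξ => 𝐞 (φ ξ) • u ξ :=
  hu.norm.mono' (by fun_prop) (Eventually.of_forall fun ξ => (Circle.norm_smul _ _).le)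

theorem eLpNorm_halfWave_two_le (hu : Integrable u) (t : ℝ) :
    eLpNorm (halfWave u t) 2 ≤ eLpNorm u 2 := by
  refine (eLpNorm_fourierInv_le (integrable_fourierChar_smul (by fun_prop) hu)).trans_eq ?_
  exact eLpNorm_congr_norm_ae (Eventually.of_forall fun ξ => Circle.norm_smul _ _)

end HalfWave

section Polar

variable {E : Type*} [NormedAddCommGroup E] [InnerProductSpace ℝ E] [FiniteDimensional ℝ E]
  [MeasurableSpace E] [BorelSpace E] [Nontrivial E]

theorem lintegral_fun_norm {f : ℝ → ℝ≥0∞} (hf : Measurable f) :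
    ∫⁻ x : E, f ‖x‖ = (volume : Measure E).toSphere univ *
      ∫⁻ ρ in Ioi (0 : ℝ), ENNReal.ofReal (ρ ^ (finrank ℝ E - 1)) * f ρ := by
  calc ∫⁻ x : E, f ‖x‖
    _ = ∫⁻ x : ({0}ᶜ : Set E), f ‖(x : E)‖ ∂(volume.comap Subtype.val) := by
      rw [lintegral_subtype_comap (measurableSet_singleton _).compl (fun x : E => f ‖x‖),
        restrict_compl_singleton]
    _ = ∫⁻ p, f (p.2 : ℝ) ∂(volume.toSphere.prod (Measure.volumeIoiPow (finrank ℝ E - 1))) := by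
      simpa only [homeomorphUnitSphereProd_apply_snd_coe] using
        (volume : Measure E).measurePreserving_homeomorphUnitSphereProd.lintegral_comp_emb
          (Homeomorph.measurableEmbedding _) (fun p => f (p.2 : ℝ))
    _ = volume.toSphere univ * ∫⁻ ρ : Ioi (0 : ℝ), f ρ ∂Measure.volumeIoiPow (finrank ℝ E - 1) := by
      rw [lintegral_prod_symm' _ (by fun_prop)]
      simp only [lintegral_const]
      rw [lintegral_mul_const _ (by fun_prop), mul_comm]
    _ = _ := by
      rw [Measure.volumeIoiPow,
        lintegral_withDensity_eq_lintegral_mul _ (by fun_prop) (by fun_prop)]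
      congr 1
      exact lintegral_subtype_comap measurableSet_Ioi
        (fun ρ : ℝ => ENNReal.ofReal (ρ ^ (finrank ℝ E - 1)) * f ρ)

theorem integral_eq_integral_Ioi_sphere {F : E → ℂ} (hF : Integrable F) :
    ∫ x, F x = ∫ ρ in Ioi (0 : ℝ),
      ρ ^ (finrank ℝ E - 1) • ∫ ω : sphere (0 : E) 1, F (ρ • (ω : E)) ∂volume.toSphere := by
  have h_mp := (volume : Measure E).measurePreserving_homeomorphUnitSphereProd
  set g : sphere (0 : E) 1 × Ioi (0 : ℝ) → ℂ := fun p => F ((p.2 : ℝ) • (p.1 : E))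
  have h_comp : ∀ x : ({0}ᶜ : Set E), g (homeomorphUnitSphereProd E x) = F x := fun x => by
    simp [g, smul_smul, norm_ne_zero_iff.2 x.2]
  have hg : Integrable g (volume.toSphere.prod (Measure.volumeIoiPow (finrank ℝ E - 1))) := by
    rw [← h_mp.integrable_comp_emb (Homeomorph.measurableEmbedding _), Function.comp_def]
    simp_rw [h_comp]
    exact (integrableOn_iff_comap_subtypeVal (measurableSet_singleton _).compl).1 hF.integrableOn
  calc ∫ x, F x
    _ = ∫ x : ({0}ᶜ : Set E), F x ∂(volume.comap Subtype.val) := by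
      rw [integral_subtype_comap (measurableSet_singleton _).compl F, restrict_compl_singleton]
    _ = ∫ p, g p ∂(volume.toSphere.prod (Measure.volumeIoiPow (finrank ℝ E - 1))) := by
      simpa only [h_comp] using h_mp.integral_comp (Homeomorph.measurableEmbedding _) g
    _ = ∫ ρ : Ioi (0 : ℝ), ∫ ω, g (ω, ρ) ∂volume.toSphere
          ∂Measure.volumeIoiPow (finrank ℝ E - 1) := integral_prod_symm _ hg
    _ = _ := by
      simp only [Measure.volumeIoiPow, ENNReal.ofReal]
      rw [integral_withDensity_eq_integral_smul
        ((measurable_subtype_coe.pow_const _).real_toNNReal),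
        integral_subtype_comap measurableSet_Ioi fun ρ : ℝ => Real.toNNReal
          (ρ ^ (finrank ℝ E - 1)) • ∫ ω : sphere (0 : E) 1, F (ρ • (ω : E)) ∂volume.toSphere]
      refine setIntegral_congr_fun measurableSet_Ioi fun ρ hρ => ?_
      simp only [NNReal.smul_def]
      rw [Real.coe_toNNReal _ (pow_nonneg (le_of_lt hρ) _)]

variable (E) in
/-- The amplitude `ρ ^ (n - 1) G(ρ)`, `ρ > 0`, which the radial profile `G` on the `n`-dimensional
space `E` contributes in polar coordinates. -/
noncomputable def radAmp (G : ℝ → ℂ) : ℝ → ℂ :=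
  (Ioi 0).indicator fun ρ => ρ ^ (finrank ℝ E - 1) • G ρ

variable {G : ℝ → ℂ}

theorem integrable_radAmp (hG : Integrable fun ξ : E => G ‖ξ‖) : Integrable (radAmp E G) :=
  (integrable_indicator_iff measurableSet_Ioi).2 ((integrable_fun_norm_addHaar volume).1 hG)

theorem halfWave_radial (hG : Integrable fun ξ : E => G ‖ξ‖) (t : ℝ) (x : E) :
    halfWave (fun ξ => G ‖ξ‖) t x =
      waveInt (radAmp E G) (fun ρ R => sphereKernel E (ρ * R)) t ‖x‖ := by
  have h_sphere : ∀ ρ ∈ Ioi (0 : ℝ), ρ ^ (finrank ℝ E - 1) • ∫ ω : sphere (0 : E) 1,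
      𝐞 ⟪ρ • (ω : E), x⟫ • 𝐞 (t * ‖ρ • (ω : E)‖) • G ‖ρ • (ω : E)‖ ∂volume.toSphere =
      𝐞 (t * ρ) • sphereKernel E (ρ * ‖x‖) • ρ ^ (finrank ℝ E - 1) • G ρ := fun ρ hρ => by
    have h_norm : ∀ ω : sphere (0 : E) 1, ‖ρ • (ω : E)‖ = ρ := fun ω => by
      simp [norm_smul, abs_of_pos (mem_Ioi.1 hρ)]
    have h_inner : ∀ ω : sphere (0 : E) 1, ⟪ρ • (ω : E), x⟫ = ⟪(ω : E), ρ • x⟫ := fun ω => by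
      rw [inner_smul_left, inner_smul_right, RCLike.conj_to_real]
    simp_rw [h_norm, h_inner, Circle.smul_def]
    rw [integral_smul_const, integral_sphere_fourierChar, sphereCos_eq_sphereKernel, norm_smul,
      Real.norm_of_nonneg (le_of_lt hρ)]
    simp only [Complex.real_smul, smul_eq_mul]
    ring
  rw [halfWave, Real.fourierInv_eq, integral_eq_integral_Ioi_sphere (integrable_fourierChar_smul
    (by fun_prop) (integrable_fourierChar_smul (by fun_prop) hG)),
    waveInt_eq_integral, setIntegral_congr_fun measurableSet_Ioi h_sphere,
    ← integral_indicator measurableSet_Ioi]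
  congr 1 with ρ
  by_cases hρ : ρ ∈ Ioi (0 : ℝ) <;> simp [radAmp, hρ]

theorem eLpNorm_radial_two (hG : Measurable G) (α : ℝ) :
    eLpNorm (fun ξ : E => ‖ξ‖ ^ α • G ‖ξ‖) 2 =
      (volume : Measure E).toSphere univ ^ (2⁻¹ : ℝ) *
        eLpNorm (fun ρ => ρ ^ (α - (finrank ℝ E - 1) / 2) • radAmp E G ρ) 2
          (volume.restrict (Ioi 0)) := by
  refine (ENNReal.pow_right_strictMono two_ne_zero).injective ?_
  have h_polar := lintegral_fun_norm (E := E) (f := fun ρ => ‖ρ ^ α • G ρ‖ₑ ^ 2) (by fun_prop)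
  simp only [mul_pow, ← lintegral_enorm_sq_eq]
  rw [h_polar, ← ENNReal.rpow_two, ENNReal.rpow_inv_rpow two_ne_zero]
  congr 1
  refine setLIntegral_congr_fun measurableSet_Ioi fun ρ hρ => ?_
  have hρ0 : 0 < ρ := hρ
  have h_pow : ρ ^ (finrank ℝ E - 1) = (ρ ^ ((finrank ℝ E - 1) / 2 : ℝ)) ^ 2 := by
    rw [← Real.rpow_natCast, ← Real.rpow_natCast, ← Real.rpow_mul hρ0.le,
      Nat.cast_pred finrank_pos]
    norm_num
  have h_weight : ρ ^ (finrank ℝ E - 1) * (ρ ^ α) ^ 2 =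
      (ρ ^ (α - (finrank ℝ E - 1) / 2) * ρ ^ (finrank ℝ E - 1)) ^ 2 := by
    rw [h_pow, Real.rpow_sub hρ0]
    field_simp
  simp only [radAmp, indicator_of_mem hρ, enorm_smul, mul_pow, ← mul_assoc]
  rw [Real.enorm_of_nonneg (by positivity), Real.enorm_of_nonneg (by positivity),
    Real.enorm_of_nonneg (by positivity), ← mul_pow, ← ENNReal.ofReal_mul (by positivity),
    ← ENNReal.ofReal_pow (by positivity), ← ENNReal.ofReal_pow (by positivity),
    ← ENNReal.ofReal_mul (by positivity), h_weight]

variable (E) in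
theorem exists_eLpNorm_radAmp_le : ∃ c ≠ ∞, ∀ G : ℝ → ℂ, Measurable G → ∀ α : ℝ,
    eLpNorm (fun ρ => ρ ^ (α - (finrank ℝ E - 1) / 2) • radAmp E G ρ) 2
      (volume.restrict (Ioi 0)) ≤ c * eLpNorm (fun ξ : E => ‖ξ‖ ^ α • G ‖ξ‖) 2 := by
  set T := (volume : Measure E).toSphere univ ^ (2⁻¹ : ℝ)
  have hT_top : T ≠ ∞ := by finiteness
  have hT_zero : T ≠ 0 := (ENNReal.rpow_pos
    (Measure.measure_univ_pos.2 (volume : Measure E).toSphere_ne_zero) (by finiteness)).ne'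
  refine ⟨T⁻¹, by finiteness, fun G hG α => ?_⟩
  rw [eLpNorm_radial_two hG, ← mul_assoc, ENNReal.inv_mul_cancel hT_zero hT_top, one_mul]

end Polar

section TwoRpow

theorem two_rpow_pos (x : ℝ) : (0 : ℝ) < 2 ^ x := Real.rpow_pos_of_pos two_pos x

theorem ofReal_two_rpow (x : ℝ) : ENNReal.ofReal ((2 : ℝ) ^ x) = 2 ^ x := by
  rw [← ENNReal.ofReal_rpow_of_pos two_pos, ENNReal.ofReal_ofNat]

theorem two_rpow_add (x y : ℝ) : (2 : ℝ≥0∞) ^ (x + y) = 2 ^ x * 2 ^ y :=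
  ENNReal.rpow_add x y two_ne_zero ofNat_ne_top

theorem rpow_mul_rpow_le_mul_two_rpow {X Y c b : ℝ≥0∞} {x y z θ : ℝ}
    (hX : X ≤ c * 2 ^ x * b) (hY : Y ≤ c * 2 ^ y * b) (hθ0 : 0 ≤ θ) (hθ1 : θ ≤ 1)
    (hz : (1 - θ) * x + θ * y = z) : X ^ (1 - θ) * Y ^ θ ≤ c * 2 ^ z * b := by
  have hθ' : 0 ≤ 1 - θ := sub_nonneg.2 hθ1
  have h_self : ∀ a : ℝ≥0∞, a ^ (1 - θ) * a ^ θ = a := fun a => by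
    rw [← ENNReal.rpow_add_of_nonneg _ _ hθ' hθ0, sub_add_cancel, ENNReal.rpow_one]
  refine (mul_le_mul' (ENNReal.rpow_le_rpow hX hθ') (ENNReal.rpow_le_rpow hY hθ0)).trans_eq ?_
  rw [ENNReal.mul_rpow_of_nonneg _ _ hθ', ENNReal.mul_rpow_of_nonneg _ _ hθ',
    ENNReal.mul_rpow_of_nonneg _ _ hθ0, ENNReal.mul_rpow_of_nonneg _ _ hθ0,
    ← ENNReal.rpow_mul, ← ENNReal.rpow_mul, ← hz, two_rpow_add, mul_comm x, mul_comm y]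
  calc _ = (c ^ (1 - θ) * c ^ θ) * (2 ^ ((1 - θ) * x) * 2 ^ (θ * y)) * (b ^ (1 - θ) * b ^ θ) := by
        ring
    _ = _ := by rw [h_self, h_self]

theorem tsum_two_rpow_neg_abs_ne_top {d : ℝ} (hd : 0 < d) :
    ∑' k : ℤ, (2 : ℝ≥0∞) ^ (-(d * |(k : ℝ)|)) ≠ ∞ := by
  have h_nat : Summable fun k : ℕ => (2 : ℝ) ^ (-(d * |(k : ℝ)|)) := by
    refine (summable_geometric_of_lt_one (r := (2 : ℝ) ^ (-d)) (by positivity)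
      (Real.rpow_lt_one_of_one_lt_of_neg one_lt_two (by linarith))).congr fun k => ?_
    rw [← Real.rpow_natCast, ← Real.rpow_mul zero_le_two, Nat.abs_cast, neg_mul]
  simp_rw [← ofReal_two_rpow]
  exact (Summable.of_nat_of_neg (by simpa using h_nat) (by simpa using h_nat)).tsum_ofReal_ne_top

end TwoRpow

section Shell

/-- The dyadic interval `[2 ^ i, 2 ^ (i + 1))`. -/
def shell (i : ℤ) : Set ℝ := Ico (2 ^ (i : ℝ)) (2 * 2 ^ (i : ℝ))

theorem shell_eq_Ico_zpow (i : ℤ) : shell i = Ico ((2 : ℝ) ^ i) (2 ^ (i + 1)) := by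
  rw [shell, zpow_add_one₀ two_ne_zero, Real.rpow_intCast, mul_comm]

theorem measurableSet_shell (i : ℤ) : MeasurableSet (shell i) := measurableSet_Ico

theorem pos_of_mem_shell {i : ℤ} {ρ : ℝ} (h : ρ ∈ shell i) : 0 < ρ :=
  (two_rpow_pos i).trans_le h.1

theorem iUnion_shell : ⋃ i, shell i = Ioi 0 := by
  ext ρ
  simp only [mem_iUnion, mem_Ioi]
  refine ⟨fun ⟨i, hi⟩ => pos_of_mem_shell hi, fun h => ?_⟩
  simpa only [shell_eq_Ico_zpow] using exists_mem_Ico_zpow h one_lt_two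

theorem pairwise_disjoint_shell : Pairwise (Function.onFun Disjoint shell) := by
  have h := (zpow_right_strictMono₀ (one_lt_two (α := ℝ))).monotone.pairwise_disjoint_on_Ico_succ
  simpa [funext shell_eq_Ico_zpow, Order.succ] using! h

theorem volume_shell (i : ℤ) : volume (shell i) = 2 ^ (i : ℝ) := by
  rw [shell, Real.volume_Ico, two_mul, add_sub_cancel_right, ofReal_two_rpow]

/-- The restriction of `H` to the dyadic interval `shell i`. -/
noncomputable def block (H : ℝ → ℂ) (i : ℤ) : ℝ → ℂ := (shell i).indicator H

variable {H : ℝ → ℂ} {i : ℤ}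

theorem mem_shell_of_block_ne_zero {ρ : ℝ} (h : block H i ρ ≠ 0) : ρ ∈ shell i :=
  mem_of_indicator_ne_zero h

theorem integrable_block (hH : Integrable H) (i : ℤ) : Integrable (block H i) :=
  hH.indicator (measurableSet_shell i)

theorem hasCompactSupport_block (H : ℝ → ℂ) (i : ℤ) : HasCompactSupport (block H i) :=
  HasCompactSupport.of_support_subset_isCompact isCompact_Icc
    (support_indicator_subset.trans Ico_subset_Icc_self)

theorem lintegral_enorm_block_le (hH : Integrable H) (i : ℤ) :
    ∫⁻ ρ, ‖block H i ρ‖ₑ ≤ 2 ^ ((i : ℝ) / 2) * eLpNorm (block H i) 2 := by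
  have h := eLpNorm_le_eLpNorm_mul_rpow_measure_univ (p := 1) (q := 2)
    (μ := volume.restrict (shell i)) one_le_two hH.aestronglyMeasurable.restrict
  rw [← eLpNorm_indicator_eq_eLpNorm_restrict (measurableSet_shell i),
    ← eLpNorm_indicator_eq_eLpNorm_restrict (measurableSet_shell i),
    Measure.restrict_apply_univ, volume_shell, ← ENNReal.rpow_mul,
    eLpNorm_one_eq_lintegral_enorm, mul_comm] at h
  have h_exp : (i : ℝ) / 2 = i * (1 / (1 : ℝ≥0∞).toReal - 1 / (2 : ℝ≥0∞).toReal) := by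
    norm_num
    ring
  rw [h_exp]
  exact h

theorem l2Norm_eLpNorm_restrict_shell (g : ℝ → ℂ) :
    l2Norm (fun i : ℤ => eLpNorm g 2 (volume.restrict (shell i))) =
      eLpNorm g 2 (volume.restrict (Ioi 0)) := by
  refine (ENNReal.pow_right_strictMono two_ne_zero).injective ?_
  simp only [l2Norm_sq, ← lintegral_enorm_sq_eq]
  rw [← iUnion_shell, lintegral_iUnion measurableSet_shell pairwise_disjoint_shell]

theorem two_rpow_le_mul_rpow_of_mem_shell (γ : ℝ) {ρ : ℝ} (hρ : ρ ∈ shell i) :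
    (2 : ℝ) ^ (i * γ) ≤ 2 ^ |γ| * ρ ^ γ := by
  have hρ0 := pos_of_mem_shell hρ
  have h_le_one : 2 ^ (i : ℝ) / ρ ≤ 1 := (div_le_one₀ hρ0).2 hρ.1
  have h_half_le : 2⁻¹ ≤ 2 ^ (i : ℝ) / ρ := by
    rw [le_div_iff₀ hρ0]
    linarith [hρ.2]
  have h_ratio : (2 ^ (i : ℝ) / ρ) ^ γ ≤ (2 : ℝ) ^ |γ| := by
    rcases le_total 0 γ with hγ | hγ
    · exact (Real.rpow_le_one (by positivity) h_le_one hγ).trans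
        (Real.one_le_rpow one_le_two (abs_nonneg γ))
    · refine (Real.rpow_le_rpow_of_nonpos (by positivity) h_half_le hγ).trans_eq ?_
      rw [Real.inv_rpow zero_le_two, ← Real.rpow_neg zero_le_two, abs_of_nonpos hγ]
  rwa [Real.div_rpow (by positivity) hρ0.le, ← Real.rpow_mul zero_le_two,
    div_le_iff₀ (by positivity)] at h_ratio

theorem l2Norm_two_rpow_mul_eLpNorm_block_le (H : ℝ → ℂ) (γ : ℝ) :
    l2Norm (fun i : ℤ => 2 ^ ((i : ℝ) * γ) * eLpNorm (block H i) 2) ≤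
      2 ^ |γ| * eLpNorm (fun ρ => ρ ^ γ • H ρ) 2 (volume.restrict (Ioi 0)) := by
  rw [← l2Norm_eLpNorm_restrict_shell, ← l2Norm_const_mul]
  refine l2Norm_mono fun i => ?_
  simp_rw [← ofReal_two_rpow, ← Real.enorm_of_nonneg (two_rpow_pos _).le, ← eLpNorm_const_smul]
  rw [block, eLpNorm_const_smul, eLpNorm_indicator_eq_eLpNorm_restrict (measurableSet_shell i),
    ← eLpNorm_const_smul]
  refine eLpNorm_mono_ae ((ae_restrict_mem (measurableSet_shell i)).mono fun ρ hρ => ?_)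
  have hρ0 := pos_of_mem_shell hρ
  simp only [Pi.smul_apply, norm_smul, Real.norm_eq_abs, Real.abs_rpow_of_nonneg zero_le_two,
    Real.abs_rpow_of_nonneg hρ0.le, abs_two, abs_of_pos hρ0, ← mul_assoc]
  gcongr
  exact two_rpow_le_mul_rpow_of_mem_shell γ hρ

end Shell

section BlockMax

variable {H : ℝ → ℂ} {i : ℤ} {K K' : ℝ → ℝ → ℝ} {q : ℝ≥0∞}

theorem eLpNorm_waveMax_block_le (hH : Integrable H) (hK : Continuous (Function.uncurry K))
    (hK' : Continuous (Function.uncurry K')) (h_deriv : ∀ ρ R, HasDerivAt (K ρ) (K' ρ R) R)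
    {a b κ k : ℝ} (hab : a < b) (hk : 0 ≤ k) (h_len : 2 ^ (i : ℝ) * (b - a) ≤ 2 ^ k)
    (hκ_nonneg : 0 ≤ κ) (hκ : ∀ ρ ∈ shell i, ∀ R ∈ Icc a b, |K ρ R| ≤ κ)
    (hκ' : ∀ ρ ∈ shell i, ∀ R ∈ Icc a b, |K' ρ R| ≤ 2 ^ (i : ℝ) * (2 * κ)) (hq : 2 ≤ q) :
    eLpNorm (waveMax (block H i) K (Icc a b)) q ≤ ENNReal.ofReal (3 * κ) *
      2 ^ (i * (1 / 2 - 1 / q.toReal) + k / q.toReal) * eLpNorm (block H i) 2 := by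
  have hu := integrable_block hH i
  have hu_supp := hasCompactSupport_block H i
  have hκ_block : ∀ ρ, block H i ρ ≠ 0 → ∀ R ∈ Icc a b, |K ρ R| ≤ κ := fun ρ hρ =>
    hκ ρ (mem_shell_of_block_ne_zero hρ)
  have h_top : eLpNorm (waveMax (block H i) K (Icc a b)) ∞ ≤
      ENNReal.ofReal (3 * κ) * 2 ^ ((i : ℝ) / 2) * eLpNorm (block H i) 2 := by
    refine eLpNormEssSup_le_of_ae_enorm_bound (Eventually.of_forall fun t => ?_)
    rw [enorm_eq_self, mul_assoc]
    refine (waveMax_le hκ_block t).trans ?_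
    gcongr
    · linarith
    · exact lintegral_enorm_block_le hH i
  have h_two : eLpNorm (waveMax (block H i) K (Icc a b)) 2 ≤
      ENNReal.ofReal (3 * κ) * 2 ^ (k / 2) * eLpNorm (block H i) 2 := by
    rw [← ofReal_two_rpow, ← ENNReal.ofReal_mul (by positivity)]
    refine eLpNorm_waveMax_Icc_le hu hu_supp hK hK' h_deriv hab (two_rpow_pos i) hκ_block
      (fun ρ hρ => hκ' ρ (mem_shell_of_block_ne_zero hρ)) hκ_nonneg (by positivity) ?_
      (by positivity)
    have h_sq : ((2 : ℝ) ^ (k / 2)) ^ 2 = 2 ^ k := by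
      rw [← Real.rpow_natCast, ← Real.rpow_mul zero_le_two]
      norm_num
    have h_one : (1 : ℝ) ≤ 2 ^ k := Real.one_le_rpow one_le_two hk
    calc (1 + 2 ^ (i : ℝ) * (b - a)) * κ ^ 2 +
          (2 ^ (i : ℝ))⁻¹ * (b - a) * (2 ^ (i : ℝ) * (2 * κ)) ^ 2
      _ = (1 + 5 * (2 ^ (i : ℝ) * (b - a))) * κ ^ 2 := by field_simp; ring
      _ ≤ (9 * 2 ^ k) * κ ^ 2 := by gcongr; linarith
      _ = (3 * κ * 2 ^ (k / 2)) ^ 2 := by rw [mul_pow, h_sq]; ring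
  have hθ : 2 / q.toReal ≤ 1 := two_div_toReal_le_one hq
  refine (eLpNorm_le_eLpNorm_top_rpow_mul
    (measurable_waveMax hu hu_supp hK _).enorm.aemeasurable hq).trans
    (rpow_mul_rpow_le_mul_two_rpow h_top h_two (by positivity) hθ (by ring))

variable {J J' : ℝ → ℝ} {C m : ℝ}

namespace IsDecayingKernel

theorem const_nonneg (hJ : IsDecayingKernel J J' C m) : 0 ≤ C := by
  simpa using (abs_nonneg _).trans (hJ.abs_le 0)

theorem continuous (hJ : IsDecayingKernel J J' C m) : Continuous J :=
  continuous_iff_continuousAt.2 fun y => (hJ.hasDerivAt y).continuousAt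

theorem continuous_uncurry_mul (hJ : IsDecayingKernel J J' C m) :
    Continuous (Function.uncurry fun ρ R => J (ρ * R)) := by
  have := hJ.continuous
  fun_prop

theorem continuous_uncurry_deriv (hJ : IsDecayingKernel J J' C m) :
    Continuous (Function.uncurry fun ρ R => ρ * J' (ρ * R)) := by
  have := hJ.continuous_deriv
  fun_prop

theorem hasDerivAt_mul (hJ : IsDecayingKernel J J' C m) (ρ R : ℝ) :
    HasDerivAt (fun R => J (ρ * R)) (ρ * J' (ρ * R)) R := by
  have h := (hJ.hasDerivAt (ρ * R)).comp R (hasDerivAt_const_mul ρ)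
  rwa [mul_comm] at h

theorem abs_le_const (hJ : IsDecayingKernel J J' C m) (y : ℝ) : |J y| ≤ C :=
  (hJ.abs_le y).trans (mul_le_of_le_one_right hJ.const_nonneg
    (Real.rpow_le_one_of_one_le_of_nonpos (le_max_left _ _) (neg_nonpos.2 hJ.nonneg)))

theorem abs_deriv_le_const (hJ : IsDecayingKernel J J' C m) (y : ℝ) : |J' y| ≤ C :=
  (hJ.abs_deriv_le y).trans (mul_le_of_le_one_right hJ.const_nonneg
    (Real.rpow_le_one_of_one_le_of_nonpos (le_max_left _ _) (neg_nonpos.2 hJ.nonneg)))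

end IsDecayingKernel

theorem mul_max_one_rpow_le {i j : ℤ} {ρ R : ℝ} (hC : 0 ≤ C) (hm : 0 ≤ m) (hρ : ρ ∈ shell i)
    (hR : 2 ^ (j : ℝ) ≤ R) :
    C * max 1 (ρ * R) ^ (-m) ≤ C * 2 ^ (-(max ((i : ℝ) + j) 0 * m)) := by
  have h_scale : (2 : ℝ) ^ max ((i : ℝ) + j) 0 ≤ max 1 (ρ * R) := by
    rcases max_choice ((i : ℝ) + j) 0 with h | h <;> rw [h]
    · rw [Real.rpow_add two_pos]
      exact le_max_of_le_right (mul_le_mul hρ.1 hR (by positivity) (pos_of_mem_shell hρ).le)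
    · simp
  rw [← mul_neg, Real.rpow_mul zero_le_two]
  exact mul_le_mul_of_nonneg_left
    (Real.rpow_le_rpow_of_nonpos (by positivity) h_scale (neg_nonpos.2 hm)) hC

theorem abs_mul_le_of_mem_shell {ρ y A : ℝ} (hρ : ρ ∈ shell i) (hy : |y| ≤ A) :
    |ρ * y| ≤ 2 ^ (i : ℝ) * (2 * A) := by
  have hρ0 := pos_of_mem_shell hρ
  rw [abs_mul, abs_of_pos hρ0, ← mul_assoc, mul_comm _ (2 : ℝ)]
  gcongr
  exact hρ.2.le

theorem eLpNorm_waveMax_block_annulus_le (hJ : IsDecayingKernel J J' C m) (hH : Integrable H)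
    (hq : 2 ≤ q) (i j : ℤ) :
    eLpNorm (waveMax (block H i) (fun ρ R => J (ρ * R)) (Icc (2 ^ (j : ℝ)) (2 * 2 ^ (j : ℝ)))) q ≤
      ENNReal.ofReal (3 * C) * 2 ^ (i * (1 / 2 - 1 / q.toReal) -
        max ((i : ℝ) + j) 0 * (m - 1 / q.toReal)) * eLpNorm (block H i) 2 := by
  set k := max ((i : ℝ) + j) 0
  have hC := hJ.const_nonneg
  have h2j := two_rpow_pos j
  refine (eLpNorm_waveMax_block_le hH hJ.continuous_uncurry_mul hJ.continuous_uncurry_deriv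
    hJ.hasDerivAt_mul (κ := C * 2 ^ (-(k * m))) (k := k) (by linarith) (le_max_right _ _) ?_
    (by positivity) (fun ρ hρ R hR => (hJ.abs_le _).trans
      (mul_max_one_rpow_le hC hJ.nonneg hρ hR.1))
    (fun ρ hρ R hR => abs_mul_le_of_mem_shell hρ ((hJ.abs_deriv_le _).trans
      (mul_max_one_rpow_le hC hJ.nonneg hρ hR.1))) hq).trans_eq ?_
  · rw [two_mul, add_sub_cancel_right, ← Real.rpow_add two_pos]
    exact Real.rpow_le_rpow_of_exponent_le one_le_two (le_max_left _ _)
  · rw [← mul_assoc, ENNReal.ofReal_mul (by positivity), ofReal_two_rpow,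
      mul_assoc (ENNReal.ofReal _), ← two_rpow_add]
    ring_nf

theorem eLpNorm_waveMax_block_core_le (hJ : IsDecayingKernel J J' C m) (hH : Integrable H)
    (hq : 2 ≤ q) (i : ℤ) :
    eLpNorm (waveMax (block H i) (fun ρ R => J (ρ * R)) (Icc 0 (2 ^ (-(i : ℝ))))) q ≤
      ENNReal.ofReal (3 * C) * 2 ^ (i * (1 / 2 - 1 / q.toReal)) * eLpNorm (block H i) 2 := by
  simpa using eLpNorm_waveMax_block_le hH hJ.continuous_uncurry_mul hJ.continuous_uncurry_deriv
    hJ.hasDerivAt_mul (i := i) (a := 0) (b := 2 ^ (-(i : ℝ))) (k := 0) (by positivity) le_rfl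
    (by rw [_root_.sub_zero, ← Real.rpow_add two_pos]; simp) hJ.const_nonneg
    (fun ρ _ R _ => hJ.abs_le_const _)
    (fun ρ hρ R _ => abs_mul_le_of_mem_shell hρ (hJ.abs_deriv_le_const _)) hq

end BlockMax

section DyadicSum

variable {α : Type*} [MeasurableSpace α] {μ : Measure α} {q : ℝ≥0∞}

theorem eLpNorm_l2Norm_tsum_le {M : ℤ → ℤ → α → ℝ≥0∞} (hM : ∀ i j, Measurable (M i j))
    (hq : 2 ≤ q) {c : ℝ≥0∞} {d : ℝ} {a : ℤ → ℝ≥0∞}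
    (h_le : ∀ i j : ℤ, eLpNorm (M i j) q μ ≤ c * 2 ^ (-(d * |(i : ℝ) + j|)) * a i) :
    eLpNorm (fun t => l2Norm fun j => ∑' i, M i j t) q μ ≤
      c * (∑' k : ℤ, 2 ^ (-(d * |(k : ℝ)|))) * l2Norm a := by
  refine (eLpNorm_l2Norm_le (fun j => Measurable.tsum fun i => hM i j) hq).trans ?_
  calc l2Norm (fun j => eLpNorm (fun t => ∑' i, M i j t) q μ)
    _ ≤ l2Norm (fun j : ℤ => ∑' i : ℤ, c * 2 ^ (-(d * |((i + j : ℤ) : ℝ)|)) * a i) := by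
      refine l2Norm_mono fun j =>
        (eLpNorm_tsum_le (fun i => hM i j) (one_le_two.trans hq)).trans ?_
      gcongr with i
      push_cast
      exact h_le i j
    _ ≤ _ := l2Norm_tsum_mul_le (fun k : ℤ => c * 2 ^ (-(d * |(k : ℝ)|))) a
    _ = _ := by rw [ENNReal.tsum_mul_left]

end DyadicSum

section Decomposition

theorem enorm_waveInt_le_tsum {u : ℝ → ℂ} (hu : Integrable u) (hu_neg : ∀ ρ ≤ 0, u ρ = 0)
    {K : ℝ → ℝ → ℝ} (hK : Continuous (Function.uncurry K)) {κ R : ℝ}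
    (hκ : ∀ ρ, u ρ ≠ 0 → |K ρ R| ≤ κ) (t : ℝ) :
    ‖waveInt u K t R‖ₑ ≤ ∑' i, ‖waveInt (block u i) K t R‖ₑ := by
  have h_block : ∀ i, waveInt (block u i) K t R =
      ∫ ρ in shell i, 𝐞 (t * ρ) • K ρ R • u ρ := fun i => by
    rw [waveInt_eq_integral, ← integral_indicator (measurableSet_shell i)]
    congr with ρ
    by_cases h : ρ ∈ shell i <;> simp [block, h]
  have h_all : waveInt u K t R = ∫ ρ in ⋃ i, shell i, 𝐞 (t * ρ) • K ρ R • u ρ := by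
    rw [iUnion_shell, setIntegral_eq_integral_of_forall_compl_eq_zero, waveInt_eq_integral]
    intro ρ hρ
    simp [hu_neg ρ (not_lt.1 hρ)]
  have h_int : Integrable fun ρ => 𝐞 (t * ρ) • K ρ R • u ρ :=
    integrable_fourierChar_smul (by fun_prop) (integrable_kernel_smul hu hK hκ)
  rw [h_all, integral_iUnion measurableSet_shell pairwise_disjoint_shell h_int.integrableOn]
  simp_rw [← h_block]
  exact enorm_tsum_le_tsum_enorm

variable (E : Type*) [NormedAddCommGroup E]

/-- The dyadic annulus `2 ^ j ≤ ‖x‖ < 2 ^ (j + 1)`. -/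
def annulus (j : ℤ) : Set E := (fun x => ‖x‖) ⁻¹' shell j

variable [MeasurableSpace E]

theorem ae_mem_iUnion_annulus (μ : Measure E) [NullSingletonClass μ] :
    ∀ᵐ x ∂μ, x ∈ ⋃ j, annulus E j := by
  filter_upwards [compl_mem_ae_iff.2 (measure_singleton (0 : E))] with x hx
  have h_norm : ‖x‖ ∈ ⋃ j, shell j := by
    rw [iUnion_shell]
    exact norm_pos_iff.2 hx
  simpa [annulus] using h_norm

variable [BorelSpace E]

theorem measurableSet_annulus (j : ℤ) : MeasurableSet (annulus E j) :=
  measurable_norm (measurableSet_shell j)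

theorem addHaar_annulus_le [NormedSpace ℝ E] [FiniteDimensional ℝ E] (μ : Measure E)
    [μ.IsAddHaarMeasure] (j : ℤ) :
    μ (annulus E j) ≤ 2 ^ (j * (finrank ℝ E : ℝ)) * μ (ball 0 2) := by
  have h_subset : annulus E j ⊆ ball 0 (2 ^ (j : ℝ) * 2) := fun x hx => by
    rw [mem_ball_zero_iff, mul_comm]
    exact hx.2
  refine (measure_mono h_subset).trans_eq ?_
  rw [Measure.addHaar_ball_mul_of_pos _ _ (two_rpow_pos j), ← Real.rpow_natCast,
    ← Real.rpow_mul zero_le_two, ofReal_two_rpow]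

theorem addHaar_annulus_rpow_le [NormedSpace ℝ E] [FiniteDimensional ℝ E] (μ : Measure E)
    [μ.IsAddHaarMeasure] (j : ℤ) :
    μ (annulus E j) ^ (2⁻¹ : ℝ) ≤
      μ (ball 0 2) ^ (2⁻¹ : ℝ) * 2 ^ (j * (finrank ℝ E / 2) : ℝ) := by
  refine (ENNReal.rpow_le_rpow (addHaar_annulus_le E μ j) (by norm_num)).trans_eq ?_
  rw [ENNReal.mul_rpow_of_nonneg _ _ (by norm_num), ← ENNReal.rpow_mul, mul_comm]
  ring_nf

end Decomposition

section RadialWave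

variable {E : Type*} [NormedAddCommGroup E] [InnerProductSpace ℝ E] [FiniteDimensional ℝ E]
  [Nontrivial E] [MeasurableSpace E] [BorelSpace E] {u : ℝ → ℂ} {s : Set E} {κ : ℝ}

variable (E) in
/-- The radial half-wave on `E` with polar amplitude `u`, as a function of time and space. -/
noncomputable def radWave (u : ℝ → ℂ) (t : ℝ) (x : E) : ℂ :=
  waveInt u (fun ρ R => sphereKernel E (ρ * R)) t ‖x‖

theorem halfWave_eq_radWave {G : ℝ → ℂ} (hG : Integrable fun ξ : E => G ‖ξ‖) (t : ℝ) :
    halfWave (fun ξ => G ‖ξ‖) t = radWave E (radAmp E G) t :=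
  funext (halfWave_radial hG t)

variable (E) in
theorem continuous_sphereKernel_mul :
    Continuous (Function.uncurry fun ρ R => sphereKernel E (ρ * R)) :=
  (exists_isDecayingKernel_sphereKernel E).choose_spec.continuous_uncurry_mul

theorem continuous_radWave (hu : Integrable u) (hu_supp : HasCompactSupport u) :
    Continuous (Function.uncurry (radWave E u)) := by
  have h_polar : Continuous fun p : ℝ × E => (p.1, ‖p.2‖) := by fun_prop
  have h_wave := (continuous_waveInt hu hu_supp (continuous_sphereKernel_mul E)).comp h_polar
  exact h_wave

theorem measurable_eLpNorm_radWave (hu : Integrable u) (hu_supp : HasCompactSupport u)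
    (s : Set E) {r : ℝ≥0∞} (hr0 : r ≠ 0) (hr_top : r ≠ ∞) :
    Measurable fun t => eLpNorm (radWave E u t) r (volume.restrict s) := by
  simp_rw [eLpNorm_eq_lintegral_rpow_enorm_toReal hr0 hr_top]
  exact ((continuous_radWave hu hu_supp).enorm.measurable.pow_const _).lintegral_prod_right'
    |>.pow_const _

theorem eLpNorm_radWave_le (hs : MeasurableSet s)
    (hκ : ∀ ρ, u ρ ≠ 0 → ∀ x ∈ s, |sphereKernel E (ρ * ‖x‖)| ≤ κ) (t : ℝ) :
    eLpNorm (radWave E u t) 2 (volume.restrict s) ≤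
      ENNReal.ofReal κ * volume s ^ (2⁻¹ : ℝ) * ∫⁻ ρ, ‖u ρ‖ₑ := by
  have h_bound : ∀ᵐ x ∂volume.restrict s,
      ‖radWave E u t x‖ₑ ≤ ENNReal.ofReal κ * ∫⁻ ρ, ‖u ρ‖ₑ :=
    (ae_restrict_mem hs).mono fun x hx => enorm_waveInt_le (fun ρ hρ => hκ ρ hρ x hx) t
  refine (eLpNorm_le_of_ae_enorm_bound h_bound).trans_eq ?_
  rw [Measure.restrict_apply_univ, ENNReal.toReal_ofNat, smul_eq_mul]
  ring

theorem eLpNorm_eLpNorm_radWave_le (hu : Integrable u) (hu_supp : HasCompactSupport u)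
    (hs : MeasurableSet s)
    (hκ : ∀ ρ, u ρ ≠ 0 → ∀ x ∈ s, |sphereKernel E (ρ * ‖x‖)| ≤ κ) :
    eLpNorm (fun t => eLpNorm (radWave E u t) 2 (volume.restrict s)) 2 ≤
      ENNReal.ofReal κ * volume s ^ (2⁻¹ : ℝ) * eLpNorm u 2 := by
  refine (ENNReal.pow_le_pow_left_iff two_ne_zero).1 ?_
  rw [← lintegral_enorm_sq_eq]
  simp_rw [enorm_eq_self, ← lintegral_enorm_sq_eq]
  rw [lintegral_lintegral_swap
    ((continuous_radWave hu hu_supp).enorm.measurable.pow_const 2).aemeasurable]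
  refine (setLIntegral_mono' hs fun x hx => lintegral_enorm_waveInt_sq_le hu
    (continuous_sphereKernel_mul E) fun ρ hρ => hκ ρ hρ x hx).trans_eq ?_
  rw [setLIntegral_const, mul_pow, mul_pow, ← lintegral_enorm_sq_eq, ← ENNReal.rpow_two (_ ^ _),
    ENNReal.rpow_inv_rpow two_ne_zero]
  ring

end RadialWave

section BlockEnergy

theorem eLpNorm_rpow_neg_smul_block_le (H : ℝ → ℂ) {m : ℝ} (hm : 0 ≤ m) (i : ℤ) :
    eLpNorm (fun ρ => ρ ^ (-m) • block H i ρ) 2 (volume.restrict (Ioi 0)) ≤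
      2 ^ (-(i * m)) * eLpNorm (block H i) 2 := by
  rw [← ofReal_two_rpow, ← Real.enorm_of_nonneg (two_rpow_pos _).le, ← eLpNorm_const_smul]
  refine (eLpNorm_mono fun ρ => ?_).trans (eLpNorm_restrict_le _ _ _ _)
  by_cases hρ : ρ ∈ shell i
  · have hρ0 := pos_of_mem_shell hρ
    rw [Pi.smul_apply, norm_smul, norm_smul, Real.norm_of_nonneg (by positivity),
      Real.norm_of_nonneg (by positivity), ← mul_neg, Real.rpow_mul zero_le_two]
    exact mul_le_mul_of_nonneg_right
      (Real.rpow_le_rpow_of_nonpos (by positivity) hρ.1 (neg_nonpos.2 hm)) (norm_nonneg _)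
  · simp [block, hρ]

theorem radAmp_block (E : Type*) [NormedAddCommGroup E] [InnerProductSpace ℝ E] (G : ℝ → ℂ)
    (i : ℤ) : radAmp E (block G i) = block (radAmp E G) i := by
  ext ρ
  by_cases hρ : ρ ∈ shell i
  · simp [radAmp, block, hρ, pos_of_mem_shell hρ]
  · simp [radAmp, block, hρ, indicator_apply]

variable {E : Type*} [NormedAddCommGroup E] [InnerProductSpace ℝ E] [FiniteDimensional ℝ E]
  [Nontrivial E] [MeasurableSpace E] [BorelSpace E] {G : ℝ → ℂ}

theorem eLpNorm_radWave_block_le (hG : Measurable G) (hG_int : Integrable fun ξ : E => G ‖ξ‖)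
    (i : ℤ) (t : ℝ) :
    eLpNorm (radWave E (block (radAmp E G) i) t) 2 ≤
      (volume : Measure E).toSphere univ ^ (2⁻¹ : ℝ) *
        (2 ^ (-(i * ((finrank ℝ E - 1) / 2 : ℝ))) * eLpNorm (block (radAmp E G) i) 2) := by
  have h_dim : (1 : ℝ) ≤ finrank ℝ E := by exact_mod_cast (finrank_pos : 0 < finrank ℝ E)
  have h_int : Integrable fun ξ : E => block G i ‖ξ‖ :=
    hG_int.indicator (measurableSet_annulus E i)
  have h_norm := eLpNorm_radial_two (E := E) (hG.indicator (measurableSet_shell i)) 0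
  simp only [Real.rpow_zero, one_smul, zero_sub] at h_norm
  rw [← radAmp_block, ← halfWave_eq_radWave h_int]
  refine (eLpNorm_halfWave_two_le h_int t).trans (h_norm.trans_le ?_)
  gcongr
  change eLpNorm (fun ρ => ρ ^ _ • radAmp E (block G i) ρ) _ _ ≤ _
  rw [radAmp_block]
  exact eLpNorm_rpow_neg_smul_block_le _ (by linarith) i

end BlockEnergy

section MixedBlock

variable {E : Type*} [NormedAddCommGroup E] [InnerProductSpace ℝ E] [FiniteDimensional ℝ E]
  [Nontrivial E] [MeasurableSpace E] [BorelSpace E] {G : ℝ → ℂ} {C : ℝ} {q r : ℝ≥0∞}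

theorem abs_sphereKernel_mul_le_of_mem
    (hJ : IsDecayingKernel (sphereKernel E) (sphereKernelDeriv E) C ((finrank ℝ E - 1) / 2))
    {u : ℝ → ℂ} {i j : ℤ} {ρ : ℝ} (hρ : block u i ρ ≠ 0) {x : E} (hx : x ∈ annulus E j) :
    |sphereKernel E (ρ * ‖x‖)| ≤
      C * 2 ^ (-(max ((i : ℝ) + j) 0 * ((finrank ℝ E - 1) / 2))) :=
  (hJ.abs_le _).trans
    (mul_max_one_rpow_le hJ.const_nonneg hJ.nonneg (mem_shell_of_block_ne_zero hρ) hx.1)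

theorem eLpNorm_radWave_block_annulus_le
    (hJ : IsDecayingKernel (sphereKernel E) (sphereKernelDeriv E) C ((finrank ℝ E - 1) / 2))
    (hG : Measurable G) (hG_int : Integrable fun ξ : E => G ‖ξ‖) (i j : ℤ) (t : ℝ) :
    eLpNorm (radWave E (block (radAmp E G) i) t) 2 (volume.restrict (annulus E j)) ≤
      ((volume : Measure E).toSphere univ ^ (2⁻¹ : ℝ) +
          ENNReal.ofReal C * volume (ball (0 : E) 2) ^ (2⁻¹ : ℝ)) *
        2 ^ (min ((i : ℝ) + j) 0 * (finrank ℝ E / 2) - i * ((finrank ℝ E - 1) / 2)) *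
        eLpNorm (block (radAmp E G) i) 2 := by
  rcases le_total 0 ((i : ℝ) + j) with hij | hij
  · rw [min_eq_right hij, zero_mul, zero_sub, mul_assoc]
    refine (eLpNorm_restrict_le _ _ _ _).trans
      ((eLpNorm_radWave_block_le hG hG_int i t).trans ?_)
    gcongr
    exact le_self_add
  · rw [min_eq_left hij]
    refine (eLpNorm_radWave_le (measurableSet_annulus E j)
      (fun ρ _ x _ => hJ.abs_le_const (ρ * ‖x‖)) t).trans ?_
    calc ENNReal.ofReal C * volume (annulus E j) ^ (2⁻¹ : ℝ) * ∫⁻ ρ, ‖block (radAmp E G) i ρ‖ₑ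
      _ ≤ ENNReal.ofReal C * (volume (ball (0 : E) 2) ^ (2⁻¹ : ℝ) *
            2 ^ (j * (finrank ℝ E / 2) : ℝ)) *
          (2 ^ ((i : ℝ) / 2) * eLpNorm (block (radAmp E G) i) 2) := by
        gcongr
        · exact addHaar_annulus_rpow_le E volume j
        · exact lintegral_enorm_block_le (integrable_radAmp hG_int) i
      _ = ENNReal.ofReal C * volume (ball (0 : E) 2) ^ (2⁻¹ : ℝ) *
          2 ^ (((i : ℝ) + j) * (finrank ℝ E / 2) - i * ((finrank ℝ E - 1) / 2)) *
          eLpNorm (block (radAmp E G) i) 2 := by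
        have h_exp : ((i : ℝ) + j) * (finrank ℝ E / 2) - i * ((finrank ℝ E - 1) / 2) =
            j * (finrank ℝ E / 2) + i / 2 := by ring
        rw [h_exp, two_rpow_add]
        ring
      _ ≤ _ := by
        gcongr
        exact le_add_self

theorem eLpNorm_eLpNorm_radWave_block_annulus_le
    (hJ : IsDecayingKernel (sphereKernel E) (sphereKernelDeriv E) C ((finrank ℝ E - 1) / 2))
    {u : ℝ → ℂ} (hu : Integrable u) (i j : ℤ) :
    eLpNorm (fun t => eLpNorm (radWave E (block u i) t) 2 (volume.restrict (annulus E j))) 2 ≤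
      ENNReal.ofReal C * volume (ball (0 : E) 2) ^ (2⁻¹ : ℝ) *
        2 ^ (max ((i : ℝ) + j) 0 / 2 + min ((i : ℝ) + j) 0 * (finrank ℝ E / 2) -
          i * (finrank ℝ E / 2)) * eLpNorm (block u i) 2 := by
  refine (eLpNorm_eLpNorm_radWave_le (integrable_block hu i) (hasCompactSupport_block u i)
    (measurableSet_annulus E j)
    fun ρ hρ x hx => abs_sphereKernel_mul_le_of_mem hJ hρ hx).trans ?_
  rw [ENNReal.ofReal_mul hJ.const_nonneg, ofReal_two_rpow]
  have h_exp : max ((i : ℝ) + j) 0 / 2 + min ((i : ℝ) + j) 0 * (finrank ℝ E / 2) -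
      i * (finrank ℝ E / 2) =
      -(max ((i : ℝ) + j) 0 * ((finrank ℝ E - 1) / 2)) + j * (finrank ℝ E / 2) := by
    linear_combination (finrank ℝ E / 2 : ℝ) * max_add_min ((i : ℝ) + j) 0
  rw [h_exp, two_rpow_add]
  calc _ ≤ ENNReal.ofReal C * 2 ^ (-(max ((i : ℝ) + j) 0 * ((finrank ℝ E - 1) / 2))) *
        (volume (ball (0 : E) 2) ^ (2⁻¹ : ℝ) * 2 ^ (j * (finrank ℝ E / 2) : ℝ)) *
        eLpNorm (block u i) 2 := by
        gcongr
        exact addHaar_annulus_rpow_le E volume j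
    _ = _ := by ring

theorem eLpNorm_eLpNorm_radWave_block_annulus_rpow_le
    (hJ : IsDecayingKernel (sphereKernel E) (sphereKernelDeriv E) C ((finrank ℝ E - 1) / 2))
    (hG : Measurable G) (hG_int : Integrable fun ξ : E => G ‖ξ‖) (hq : 2 ≤ q) (i j : ℤ) :
    eLpNorm (fun t => eLpNorm (radWave E (block (radAmp E G) i) t) 2
        (volume.restrict (annulus E j))) q ≤
      ((volume : Measure E).toSphere univ ^ (2⁻¹ : ℝ) +
          ENNReal.ofReal C * volume (ball (0 : E) 2) ^ (2⁻¹ : ℝ)) *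
        2 ^ (max ((i : ℝ) + j) 0 / q.toReal + min ((i : ℝ) + j) 0 * (finrank ℝ E / 2) -
          i * ((finrank ℝ E - 1) / 2 + 1 / q.toReal)) * eLpNorm (block (radAmp E G) i) 2 := by
  have hu := integrable_radAmp hG_int
  have h_top := eLpNormEssSup_le_of_ae_enorm_bound (μ := volume) (Eventually.of_forall fun t =>
    (enorm_eq_self _).trans_le (eLpNorm_radWave_block_annulus_le hJ hG hG_int i j t))
  have h_two := (eLpNorm_eLpNorm_radWave_block_annulus_le hJ hu i j).trans
    (mul_le_mul' (mul_le_mul' (le_add_self (b := (volume : Measure E).toSphere univ ^ (2⁻¹ : ℝ)))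
      le_rfl) le_rfl)
  have hθ : 2 / q.toReal ≤ 1 := two_div_toReal_le_one hq
  refine (eLpNorm_le_eLpNorm_top_rpow_mul (measurable_eLpNorm_radWave (integrable_block hu i)
    (hasCompactSupport_block _ i) _ two_ne_zero ofNat_ne_top).enorm.aemeasurable hq).trans
    (rpow_mul_rpow_le_mul_two_rpow h_top h_two (by positivity) hθ (by ring))

theorem eLpNorm_radWave_le_rpow_mul_waveMax (hr : 2 ≤ r) {u : ℝ → ℂ} (hu : Integrable u)
    (hu_supp : HasCompactSupport u) (j : ℤ) (t : ℝ) :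
    eLpNorm (radWave E u t) r (volume.restrict (annulus E j)) ≤
      eLpNorm (radWave E u t) 2 (volume.restrict (annulus E j)) ^ (2 / r.toReal) *
        waveMax u (fun ρ R => sphereKernel E (ρ * R)) (Icc (2 ^ (j : ℝ)) (2 * 2 ^ (j : ℝ))) t ^
          (1 - 2 / r.toReal) := by
  have hθ : 2 / r.toReal ≤ 1 := two_div_toReal_le_one hr
  have h_sup := eLpNormEssSup_le_of_ae_enorm_bound
    ((ae_restrict_mem (μ := volume) (measurableSet_annulus E j)).mono fun x hx =>
      enorm_waveInt_le_waveMax (u := u) (K := fun ρ R => sphereKernel E (ρ * R)) (t := t)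
        (Ico_subset_Icc_self hx))
  rw [mul_comm]
  refine (eLpNorm_le_eLpNorm_top_rpow_mul
    ((continuous_radWave hu hu_supp).uncurry_left t).enorm.measurable.aemeasurable hr).trans ?_
  exact mul_le_mul_left (ENNReal.rpow_le_rpow h_sup (by linarith)) _

variable (E) in
theorem exists_eLpNorm_eLpNorm_radWave_block_annulus_le (hq : 2 ≤ q) (hr : 2 ≤ r) :
    ∃ c ≠ ∞, ∀ G : ℝ → ℂ, Measurable G → Integrable (fun ξ : E => G ‖ξ‖) → ∀ i j : ℤ,
      eLpNorm (fun t => eLpNorm (radWave E (block (radAmp E G) i) t) r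
          (volume.restrict (annulus E j))) q ≤
        c * 2 ^ (i * (1 / 2 - 1 / q.toReal - finrank ℝ E / r.toReal) -
          max ((i : ℝ) + j) 0 * ((finrank ℝ E - 1) / 2 * (1 - 2 / r.toReal) - 1 / q.toReal) +
          min ((i : ℝ) + j) 0 * (finrank ℝ E / r.toReal)) *
          eLpNorm (block (radAmp E G) i) 2 := by
  obtain ⟨C, hJ⟩ := exists_isDecayingKernel_sphereKernel E
  set V := ENNReal.ofReal C * volume (ball (0 : E) 2) ^ (2⁻¹ : ℝ)
  set T := (volume : Measure E).toSphere univ ^ (2⁻¹ : ℝ)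
  refine ⟨ENNReal.ofReal (3 * C) + (T + V), by finiteness, fun G hG hG_int i j => ?_⟩
  have hu := integrable_block (integrable_radAmp hG_int) i
  have hu_supp := hasCompactSupport_block (radAmp E G) i
  have hθ : 2 / r.toReal ≤ 1 := two_div_toReal_le_one hr
  have h_two := (eLpNorm_eLpNorm_radWave_block_annulus_rpow_le hJ hG hG_int hq i j).trans
    (mul_le_mul' (mul_le_mul' (le_add_self (b := ENNReal.ofReal (3 * C))) le_rfl) le_rfl)
  have h_sup := (eLpNorm_waveMax_block_annulus_le hJ (integrable_radAmp hG_int) hq i j).trans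
    (mul_le_mul' (mul_le_mul' (le_self_add (b := T + V)) le_rfl) le_rfl)
  refine (eLpNorm_le_of_forall_le
    (eLpNorm_radWave_le_rpow_mul_waveMax hr hu hu_supp j)).trans ?_
  refine (eLpNorm_rpow_mul_rpow_le (measurable_eLpNorm_radWave hu hu_supp _ two_ne_zero
    ofNat_ne_top).aemeasurable (measurable_waveMax hu hu_supp hJ.continuous_uncurry_mul
      _).aemeasurable (two_pos.trans_le hq).ne' (by positivity) hθ).trans ?_
  rw [mul_comm]
  exact rpow_mul_rpow_le_mul_two_rpow h_sup h_two (by positivity) hθ (by ring)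

end MixedBlock

section RadialEstimate

variable (E : Type*) [NormedAddCommGroup E] [InnerProductSpace ℝ E] [FiniteDimensional ℝ E]
  [MeasurableSpace E] [BorelSpace E]

/-- The radial Strichartz estimate at the pair `(q, r)`, for half-waves with amplitude `G ‖ξ‖`.
The power of `‖ξ‖` on the right is the one dictated by scaling. -/
def RadialEstimate (q r : ℝ≥0∞) : Prop :=
  ∃ c ≠ ∞, ∀ G : ℝ → ℂ, Measurable G → Integrable (fun ξ : E => G ‖ξ‖) →
    eLpNorm (fun t => eLpNorm (halfWave (fun ξ : E => G ‖ξ‖) t) r) q ≤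
      c * eLpNorm (fun ξ : E =>
        ‖ξ‖ ^ (finrank ℝ E / 2 - finrank ℝ E / r.toReal - 1 / q.toReal) • G ‖ξ‖) 2

variable {E}

theorem radialEstimate_top_two : RadialEstimate E ∞ 2 := by
  refine ⟨1, one_ne_top, fun G _ hG_int => ?_⟩
  simpa using eLpNormEssSup_le_of_ae_enorm_bound (μ := (volume : Measure ℝ))
    (Eventually.of_forall fun t => (enorm_eq_self _).trans_le (eLpNorm_halfWave_two_le hG_int t))

variable {q r c : ℝ≥0∞} [Nontrivial E]

theorem radialEstimate_of_l2Norm_block (hc : c ≠ ∞)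
    (h_le : ∀ G : ℝ → ℂ, Measurable G → Integrable (fun ξ : E => G ‖ξ‖) →
      eLpNorm (fun t => eLpNorm (halfWave (fun ξ : E => G ‖ξ‖) t) r) q ≤
        c * l2Norm fun i : ℤ => 2 ^ ((i : ℝ) * (1 / 2 - finrank ℝ E / r.toReal - 1 / q.toReal)) *
          eLpNorm (block (radAmp E G) i) 2) :
    RadialEstimate E q r := by
  set γ := 1 / 2 - finrank ℝ E / r.toReal - 1 / q.toReal with hγ
  obtain ⟨c', hc', h_radAmp⟩ := exists_eLpNorm_radAmp_le E
  refine ⟨c * (2 ^ |γ| * c'), by finiteness, fun G hG hG_int => (h_le G hG hG_int).trans ?_⟩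
  have h_exp : finrank ℝ E / 2 - finrank ℝ E / r.toReal - 1 / q.toReal - (finrank ℝ E - 1) / 2 =
      γ := by
    rw [hγ]
    ring
  rw [mul_assoc c, mul_assoc (2 ^ |γ|)]
  gcongr
  refine (l2Norm_two_rpow_mul_eLpNorm_block_le _ _).trans ?_
  gcongr
  exact h_exp ▸ h_radAmp G hG _

variable {G : ℝ → ℂ}

theorem enorm_halfWave_le_tsum (hG_int : Integrable fun ξ : E => G ‖ξ‖) (t : ℝ) (x : E) :
    ‖halfWave (fun ξ => G ‖ξ‖) t x‖ₑ ≤ ∑' i, ‖radWave E (block (radAmp E G) i) t x‖ₑ := by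
  obtain ⟨C, hJ⟩ := exists_isDecayingKernel_sphereKernel E
  rw [halfWave_eq_radWave hG_int]
  exact enorm_waveInt_le_tsum (integrable_radAmp hG_int)
    (fun ρ hρ => indicator_of_notMem (notMem_Ioi.2 hρ) _) hJ.continuous_uncurry_mul
    (fun ρ _ => hJ.abs_le_const (ρ * ‖x‖)) t

theorem eLpNorm_halfWave_le_l2Norm_tsum (hr : 2 ≤ r) (hG_int : Integrable fun ξ : E => G ‖ξ‖)
    (t : ℝ) :
    eLpNorm (halfWave (fun ξ : E => G ‖ξ‖) t) r ≤ l2Norm fun j => ∑' i,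
      eLpNorm (radWave E (block (radAmp E G) i) t) r (volume.restrict (annulus E j)) := by
  have h_meas : ∀ i, Measurable (radWave E (block (radAmp E G) i) t) := fun i =>
    ((continuous_radWave (integrable_block (integrable_radAmp hG_int) i)
      (hasCompactSupport_block _ i)).uncurry_left t).measurable
  have h_sum : ∀ s : Set E, eLpNorm (halfWave (fun ξ : E => G ‖ξ‖) t) r (volume.restrict s) ≤
      ∑' i, eLpNorm (radWave E (block (radAmp E G) i) t) r (volume.restrict s) := fun s => by
    refine (eLpNorm_mono_enorm fun x => ?_).trans
      (eLpNorm_tsum_le (fun i => (h_meas i).enorm) (one_le_two.trans hr)) |>.trans_eq ?_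
    · exact enorm_halfWave_le_tsum hG_int t x
    · simp_rw [eLpNorm_enorm]
  have h_cont : Continuous (halfWave (fun ξ : E => G ‖ξ‖) t) :=
    continuous_fourierInv (integrable_fourierChar_smul (by fun_prop) hG_int)
  have h_cover := eLpNorm_le_l2Norm_eLpNorm_restrict (measurableSet_annulus E)
    (ae_mem_iUnion_annulus E volume) h_cont.enorm.measurable hr
  simp_rw [eLpNorm_enorm] at h_cover
  exact h_cover.trans (l2Norm_mono fun j => h_sum _)

theorem neg_max_mul_add_min_mul_le (x d₁ d₂ : ℝ) :
    -(max x 0 * d₁) + min x 0 * d₂ ≤ -(min d₁ d₂ * |x|) := by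
  rcases le_total 0 x with hx | hx
  · rw [max_eq_left hx, min_eq_right hx, abs_of_nonneg hx]
    nlinarith [min_le_left d₁ d₂]
  · rw [max_eq_right hx, min_eq_left hx, abs_of_nonpos hx]
    nlinarith [min_le_right d₁ d₂]

theorem radialEstimate_of_ne_top (hq : 2 ≤ q) (hr : 2 ≤ r) (hr_top : r ≠ ∞)
    (h : 1 / q.toReal < (finrank ℝ E - 1) / 2 * (1 - 2 / r.toReal)) : RadialEstimate E q r := by
  obtain ⟨c, hc, h_block⟩ := exists_eLpNorm_eLpNorm_radWave_block_annulus_le E hq hr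
  have hr_pos : 0 < r.toReal := two_pos.trans_le (two_le_toReal hr hr_top)
  have h_finrank : (0 : ℝ) < finrank ℝ E := mod_cast finrank_pos
  set d := min ((finrank ℝ E - 1) / 2 * (1 - 2 / r.toReal) - 1 / q.toReal)
    (finrank ℝ E / r.toReal) with hd
  have hd_pos : 0 < d := lt_min (sub_pos.2 h) (by positivity)
  refine radialEstimate_of_l2Norm_block
    (mul_ne_top hc (tsum_two_rpow_neg_abs_ne_top hd_pos)) fun G hG hG_int => ?_
  refine (eLpNorm_le_of_forall_le (eLpNorm_halfWave_le_l2Norm_tsum hr hG_int)).trans ?_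
  refine eLpNorm_l2Norm_tsum_le (fun i j => measurable_eLpNorm_radWave
    (integrable_block (integrable_radAmp hG_int) i) (hasCompactSupport_block _ i) _
    (two_pos.trans_le hr).ne' hr_top) hq fun i j => (h_block G hG hG_int i j).trans ?_
  rw [← mul_assoc, mul_assoc c (2 ^ (-(d * |(i : ℝ) + j|))), ← two_rpow_add]
  refine mul_le_mul' (mul_le_mul' le_rfl (ENNReal.rpow_le_rpow_of_exponent_le one_le_two ?_)) le_rfl
  have h_decay := neg_max_mul_add_min_mul_le ((i : ℝ) + j)
    ((finrank ℝ E - 1) / 2 * (1 - 2 / r.toReal) - 1 / q.toReal) (finrank ℝ E / r.toReal)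
  rw [← hd] at h_decay
  linarith

end RadialEstimate

section AlmostOrthogonality

variable {α : Type*} [MeasurableSpace α] {μ : Measure α} {q c : ℝ≥0∞} {η : ℝ}

theorem eLpNorm_mul_le_eLpNorm_ofReal_one_div {V W : α → ℝ≥0∞} (hV : Measurable V)
    (hW : Measurable W) {x y : ℝ} (hx : 0 < x) (hy : 0 < y) :
    eLpNorm (fun t => V t * W t) (ENNReal.ofReal (1 / (x + y))) μ ≤
      eLpNorm V (ENNReal.ofReal (1 / x)) μ * eLpNorm W (ENNReal.ofReal (1 / y)) μ := by
  have h_holder := ENNReal.lintegral_Lp_mul_le_Lq_mul_Lr (p := 1 / (x + y)) (q := 1 / x)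
    (r := 1 / y) (by positivity) (one_div_lt_one_div_of_lt hx (by linarith))
    (by rw [one_div_one_div, one_div_one_div, one_div_one_div]) μ hV.aemeasurable hW.aemeasurable
  have h_eLpNorm : ∀ (f : α → ℝ≥0∞) {z : ℝ}, 0 < z → eLpNorm f (ENNReal.ofReal z) μ =
      (∫⁻ t, f t ^ z ∂μ) ^ (1 / z) := fun f z hz => by
    rw [eLpNorm_eq_lintegral_rpow_enorm_toReal (by simpa using hz) ofReal_ne_top,
      ENNReal.toReal_ofReal hz.le]
    rfl
  rw [h_eLpNorm _ (by positivity), h_eLpNorm _ (by positivity), h_eLpNorm _ (by positivity)]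
  exact h_holder

theorem eLpNorm_mul_le_of_scales (hη_pos : 0 < η) (hη_lt : η < 1 / q.toReal)
    (hη_le : η ≤ 1 / 2 - 1 / q.toReal) {A B : ℝ≥0∞} {V W : α → ℝ≥0∞} (hV : Measurable V)
    (hW : Measurable W) {i k : ℝ}
    (hV_le : ∀ p, 2 ≤ p → eLpNorm V p μ ≤ c * 2 ^ (i * (1 / q.toReal - 1 / p.toReal)) * A)
    (hW_le : ∀ p, 2 ≤ p → eLpNorm W p μ ≤ c * 2 ^ (k * (1 / q.toReal - 1 / p.toReal)) * B) :
    eLpNorm (fun x => V x * W x) (q / 2) μ ≤ c ^ 2 * (2 ^ (-(η * (k - i))) * (A * B)) := by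
  have hq_top : q ≠ ∞ := fun h => by
    rw [h, toReal_top, _root_.div_zero] at hη_lt
    exact hη_lt.not_gt hη_pos
  have h_two_le : ∀ z : ℝ, 0 < z → z ≤ 1 / 2 → 2 ≤ ENNReal.ofReal (1 / z) := fun z hz hz_le => by
    rw [← ENNReal.ofReal_ofNat 2]
    exact ENNReal.ofReal_le_ofReal ((le_one_div two_pos hz).2 hz_le)
  have h_q : q / 2 = ENNReal.ofReal (1 / (1 / q.toReal - η + (1 / q.toReal + η))) := by
    have h_sum : 1 / q.toReal - η + (1 / q.toReal + η) = 2 / q.toReal := by ring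
    rw [h_sum, one_div_div, ENNReal.ofReal_div_of_pos two_pos, ENNReal.ofReal_toReal hq_top,
      ENNReal.ofReal_ofNat]
  have h_minus : 0 < 1 / q.toReal - η := by linarith
  have h_plus : 0 < 1 / q.toReal + η := by linarith
  rw [h_q]
  refine (eLpNorm_mul_le_eLpNorm_ofReal_one_div hV hW h_minus h_plus).trans
    ((mul_le_mul' (hV_le _ (h_two_le _ h_minus (by linarith)))
      (hW_le _ (h_two_le _ h_plus (by linarith)))).trans_eq ?_)
  have h_exp : -(η * (k - i)) = i * (1 / q.toReal - (1 / q.toReal - η)) +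
      k * (1 / q.toReal - (1 / q.toReal + η)) := by ring
  rw [ENNReal.toReal_ofReal (by positivity), ENNReal.toReal_ofReal (by positivity),
    one_div_one_div, one_div_one_div, h_exp, two_rpow_add]
  ring

theorem eLpNorm_tsum_sq_le {V : ℤ → α → ℝ≥0∞} (hV : ∀ i, Measurable (V i)) (hq : 2 ≤ q) :
    eLpNorm (fun x => ∑' i, V i x) q μ ^ 2 ≤
      ∑' p : ℤ × ℤ, eLpNorm (fun x => V p.1 x * V p.2 x) (q / 2) μ := by
  have h_sq : ∀ x, (∑' i, V i x) ^ 2 = ∑' p : ℤ × ℤ, V p.1 x * V p.2 x := fun x => by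
    rw [pow_two, ENNReal.tsum_prod (f := fun i k => V i x * V k x), ← ENNReal.tsum_mul_right]
    simp_rw [ENNReal.tsum_mul_left]
  rw [← eLpNorm_sq_half]
  simp_rw [h_sq]
  exact eLpNorm_tsum_le (fun p : ℤ × ℤ => (hV p.1).mul (hV p.2)) (one_le_half hq)

theorem eLpNorm_tsum_le_of_scales (hq : 2 ≤ q) (hη_pos : 0 < η) (hη_lt : η < 1 / q.toReal)
    (hη_le : η ≤ 1 / 2 - 1 / q.toReal) {V : ℤ → α → ℝ≥0∞} (hV : ∀ i, Measurable (V i))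
    {a : ℤ → ℝ≥0∞}
    (hV_le : ∀ (i : ℤ) (p : ℝ≥0∞), 2 ≤ p →
      eLpNorm (V i) p μ ≤ c * 2 ^ (i * (1 / q.toReal - 1 / p.toReal)) * a i) :
    eLpNorm (fun x => ∑' i, V i x) q μ ≤
      c * (2 * ∑' k : ℤ, 2 ^ (-(η * |(k : ℝ)|))) ^ (2⁻¹ : ℝ) * l2Norm a := by
  have h_of_le : ∀ i k : ℤ, i ≤ k → eLpNorm (fun x => V i x * V k x) (q / 2) μ ≤
      c ^ 2 * (2 ^ (-(η * |((k - i : ℤ) : ℝ)|)) * (a i * a k)) := fun i k hik => by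
    rw [abs_of_nonneg (mod_cast sub_nonneg.2 hik), Int.cast_sub]
    exact eLpNorm_mul_le_of_scales hη_pos hη_lt hη_le (hV i) (hV k) (hV_le i) (hV_le k)
  have h_pair : ∀ p : ℤ × ℤ, eLpNorm (fun x => V p.1 x * V p.2 x) (q / 2) μ ≤
      c ^ 2 * (2 ^ (-(η * |((p.2 - p.1 : ℤ) : ℝ)|)) * (a p.1 * a p.2)) := fun ⟨i, k⟩ => by
    rcases le_total i k with hik | hki
    · exact h_of_le i k hik
    · simpa only [mul_comm, Int.cast_sub, abs_sub_comm] using h_of_le k i hki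
  refine (ENNReal.pow_le_pow_left_iff two_ne_zero).1 ?_
  calc eLpNorm (fun x => ∑' i, V i x) q μ ^ 2
    _ ≤ ∑' p : ℤ × ℤ, eLpNorm (fun x => V p.1 x * V p.2 x) (q / 2) μ := eLpNorm_tsum_sq_le hV hq
    _ ≤ c ^ 2 * ((2 * ∑' k : ℤ, 2 ^ (-(η * |(k : ℝ)|))) * l2Norm a ^ 2) := by
      refine (ENNReal.tsum_le_tsum h_pair).trans ?_
      rw [ENNReal.tsum_mul_left]
      gcongr
      exact tsum_prod_mul_mul_le (fun k : ℤ => 2 ^ (-(η * |(k : ℝ)|))) a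
    _ = _ := by
      rw [mul_pow, mul_pow, ← ENNReal.rpow_two (_ ^ (2⁻¹ : ℝ)),
        ENNReal.rpow_inv_rpow two_ne_zero]
      ring

end AlmostOrthogonality

section SpaceSup

variable {E : Type*} [NormedAddCommGroup E] [InnerProductSpace ℝ E] [FiniteDimensional ℝ E]
  [Nontrivial E] [MeasurableSpace E] [BorelSpace E] {q : ℝ≥0∞}

theorem eLpNorm_eLpNorm_top_le {F : ℝ → E → ℂ} {M : ℤ → ℤ → ℝ → ℝ≥0∞}
    (hM : ∀ i j, Measurable (M i j)) {R : ℝ → ℝ≥0∞} (hR : Measurable R)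
    (h_le : ∀ t j, ∀ x ∈ annulus E j, ‖F t x‖ₑ ≤ ∑' i, M i j t + R t) (hq : 2 ≤ q)
    {c : ℝ≥0∞} {d : ℝ} {a : ℤ → ℝ≥0∞}
    (hM_le : ∀ i j : ℤ, eLpNorm (M i j) q ≤ c * 2 ^ (-(d * |(i : ℝ) + j|)) * a i) :
    eLpNorm (fun t => eLpNorm (F t) ∞) q ≤
      c * (∑' k : ℤ, 2 ^ (-(d * |(k : ℝ)|))) * l2Norm a + eLpNorm R q := by
  have h_sup : ∀ t, eLpNorm (F t) ∞ ≤ l2Norm (fun j => ∑' i, M i j t) + R t := fun t => by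
    refine eLpNormEssSup_le_of_ae_enorm_bound ?_
    filter_upwards [ae_mem_iUnion_annulus E volume] with x hx
    obtain ⟨j, hj⟩ := mem_iUnion.1 hx
    exact (h_le t j x hj).trans (add_le_add_left (le_l2Norm (fun j => ∑' i, M i j t) j) _)
  have h_meas : Measurable fun t => l2Norm fun j => ∑' i, M i j t :=
    measurable_l2Norm fun j => Measurable.tsum fun i => hM i j
  refine (eLpNorm_le_of_forall_le h_sup).trans ((eLpNorm_add_le h_meas.aestronglyMeasurable
    hR.aestronglyMeasurable (one_le_two.trans hq)).trans ?_)
  gcongr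
  exact eLpNorm_l2Norm_tsum_le hM hq hM_le

end SpaceSup

section InnerOuter

variable {J J' : ℝ → ℝ} {C m η : ℝ} {H : ℝ → ℂ} {q : ℝ≥0∞}

/-- The maximal function over `R ≤ 2 ^ (-i)` of the `i`-th frequency block, the radii at which
the kernel `J (ρ R)` has not begun to decay. -/
noncomputable def innerMax (J : ℝ → ℝ) (H : ℝ → ℂ) (i : ℤ) : ℝ → ℝ≥0∞ :=
  waveMax (block H i) (fun ρ R => J (ρ * R)) (Icc 0 (2 ^ (-(i : ℝ))))

/-- The maximal function over `2 ^ j ≤ R ≤ 2 ^ (j + 1)` of the `i`-th frequency block, set to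
zero at the radii `j < -i` that belong to `innerMax`. -/
noncomputable def outerMax (J : ℝ → ℝ) (H : ℝ → ℂ) (i j : ℤ) : ℝ → ℝ≥0∞ :=
  if 0 ≤ i + j then
    waveMax (block H i) (fun ρ R => J (ρ * R)) (Icc (2 ^ (j : ℝ)) (2 * 2 ^ (j : ℝ)))
  else 0

theorem enorm_waveInt_block_le_outerMax_add_innerMax (J : ℝ → ℝ) (H : ℝ → ℂ) (i : ℤ) {j : ℤ}
    (t : ℝ) {R : ℝ} (hR : R ∈ shell j) :
    ‖waveInt (block H i) (fun ρ R => J (ρ * R)) t R‖ₑ ≤ outerMax J H i j t + innerMax J H i t := by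
  unfold outerMax
  split_ifs with hij
  · exact (enorm_waveInt_le_waveMax (Ico_subset_Icc_self hR)).trans le_self_add
  · have h_exp : (j : ℝ) + 1 ≤ -(i : ℝ) := by
      have h_int : j + 1 ≤ -i := by omega
      exact_mod_cast h_int
    have h_le : 2 * (2 : ℝ) ^ (j : ℝ) ≤ 2 ^ (-(i : ℝ)) := by
      rw [mul_comm, ← Real.rpow_add_one two_ne_zero]
      exact Real.rpow_le_rpow_of_exponent_le one_le_two h_exp
    have hR_mem : R ∈ Icc 0 ((2 : ℝ) ^ (-(i : ℝ))) :=
      ⟨(pos_of_mem_shell hR).le, hR.2.le.trans h_le⟩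
    exact (enorm_waveInt_le_waveMax hR_mem).trans le_add_self

theorem measurable_innerMax (hJ : IsDecayingKernel J J' C m) (hH : Integrable H) (i : ℤ) :
    Measurable (innerMax J H i) :=
  measurable_waveMax (integrable_block hH i) (hasCompactSupport_block H i)
    hJ.continuous_uncurry_mul _

theorem measurable_outerMax (hJ : IsDecayingKernel J J' C m) (hH : Integrable H) (i j : ℤ) :
    Measurable (outerMax J H i j) := by
  unfold outerMax
  split_ifs
  · exact measurable_waveMax (integrable_block hH i) (hasCompactSupport_block H i)
      hJ.continuous_uncurry_mul _
  · exact measurable_zero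

theorem eLpNorm_outerMax_le (hJ : IsDecayingKernel J J' C m) (hH : Integrable H) (hq : 2 ≤ q)
    (i j : ℤ) :
    eLpNorm (outerMax J H i j) q ≤
      ENNReal.ofReal (3 * C) * 2 ^ (-((m - 1 / q.toReal) * |(i : ℝ) + j|)) *
        (2 ^ (i * (1 / 2 - 1 / q.toReal)) * eLpNorm (block H i) 2) := by
  unfold outerMax
  split_ifs with hij
  · have hij' : (0 : ℝ) ≤ (i : ℝ) + j := mod_cast hij
    refine (eLpNorm_waveMax_block_annulus_le hJ hH hq i j).trans_eq ?_
    rw [abs_of_nonneg hij', max_eq_left hij', sub_eq_neg_add, two_rpow_add,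
      mul_comm (_ - _) (_ + _)]
    ring
  · simp

theorem eLpNorm_tsum_innerMax_le (hJ : IsDecayingKernel J J' C m) (hH : Integrable H)
    (hq : 2 ≤ q) (hη_pos : 0 < η) (hη_lt : η < 1 / q.toReal) (hη_le : η ≤ 1 / 2 - 1 / q.toReal) :
    eLpNorm (fun t => ∑' i, innerMax J H i t) q ≤
      ENNReal.ofReal (3 * C) * (2 * ∑' k : ℤ, 2 ^ (-(η * |(k : ℝ)|))) ^ (2⁻¹ : ℝ) *
        l2Norm fun i : ℤ => 2 ^ (i * (1 / 2 - 1 / q.toReal)) * eLpNorm (block H i) 2 := by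
  refine eLpNorm_tsum_le_of_scales hq hη_pos hη_lt hη_le (measurable_innerMax hJ hH)
    fun i p hp => (eLpNorm_waveMax_block_core_le hJ hH hp i).trans_eq ?_
  have h_exp : (i : ℝ) * (1 / 2 - 1 / p.toReal) =
      i * (1 / q.toReal - 1 / p.toReal) + i * (1 / 2 - 1 / q.toReal) := by ring
  rw [h_exp, two_rpow_add]
  ring

theorem radialEstimate_top_of_two_lt {E : Type*} [NormedAddCommGroup E] [InnerProductSpace ℝ E]
    [FiniteDimensional ℝ E] [Nontrivial E] [MeasurableSpace E] [BorelSpace E] (hq : 2 < q)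
    (hq_top : q ≠ ∞) (h : 1 / q.toReal < (finrank ℝ E - 1) / 2) : RadialEstimate E q ∞ := by
  obtain ⟨C, hJ⟩ := exists_isDecayingKernel_sphereKernel E
  have hq_real : 2 < q.toReal := by
    simpa using (ENNReal.toReal_lt_toReal ofNat_ne_top hq_top).2 hq
  obtain ⟨η, hη_pos, hη_lt⟩ : ∃ η, 0 < η ∧ η < min (1 / q.toReal) (1 / 2 - 1 / q.toReal) :=
    exists_between (lt_min (by positivity)
      (sub_pos.2 (one_div_lt_one_div_of_lt two_pos hq_real)))
  have h_outer := tsum_two_rpow_neg_abs_ne_top (sub_pos.2 h)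
  have h_inner := tsum_two_rpow_neg_abs_ne_top hη_pos
  refine radialEstimate_of_l2Norm_block (c := ENNReal.ofReal (3 * C) * (∑' k : ℤ,
      2 ^ (-(((finrank ℝ E - 1) / 2 - 1 / q.toReal) * |(k : ℝ)|))) + ENNReal.ofReal (3 * C) *
      (2 * ∑' k : ℤ, 2 ^ (-(η * |(k : ℝ)|))) ^ (2⁻¹ : ℝ)) (by finiteness) fun G _ hG_int => ?_
  have hH := integrable_radAmp hG_int
  have h_le : ∀ t j, ∀ x ∈ annulus E j, ‖halfWave (fun ξ => G ‖ξ‖) t x‖ₑ ≤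
      ∑' i, outerMax (sphereKernel E) (radAmp E G) i j t +
        ∑' i, innerMax (sphereKernel E) (radAmp E G) i t := fun t j x hx => by
    rw [← ENNReal.tsum_add]
    exact (enorm_halfWave_le_tsum hG_int t x).trans (ENNReal.tsum_le_tsum fun i =>
      enorm_waveInt_block_le_outerMax_add_innerMax _ _ i t hx)
  simp_rw [toReal_top, _root_.div_zero, _root_.sub_zero, add_mul]
  exact (eLpNorm_eLpNorm_top_le (measurable_outerMax hJ hH)
    (Measurable.tsum (measurable_innerMax hJ hH)) h_le hq.le
    (eLpNorm_outerMax_le hJ hH hq.le)).trans (add_le_add_right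
      (eLpNorm_tsum_innerMax_le hJ hH hq.le hη_pos (hη_lt.trans_le (min_le_left _ _))
        (hη_lt.le.trans (min_le_right _ _))) _)

end InnerOuter

section MaximalFunction

/-- The centred Hardy–Littlewood maximal function on the line, restricted to dyadic radii; the
restriction costs only a constant factor and makes measurability immediate. -/
noncomputable def dyadicMax (F : ℝ → ℝ≥0∞) (t : ℝ) : ℝ≥0∞ :=
  ⨆ j : ℤ, ⨍⁻ s in closedBall t ((2 : ℝ) ^ (j : ℝ)), F s ∂volume

theorem measurable_dyadicMax {F : ℝ → ℝ≥0∞} (hF : Measurable F) : Measurable (dyadicMax F) := by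
  refine Measurable.iSup fun j => ?_
  simp_rw [setLAverage_eq, Real.volume_closedBall]
  refine Measurable.div_const ?_ _
  have h_set : MeasurableSet {p : ℝ × ℝ | dist p.2 p.1 ≤ (2 : ℝ) ^ (j : ℝ)} :=
    measurableSet_le (measurable_snd.dist measurable_fst) measurable_const
  simp_rw [← lintegral_indicator measurableSet_closedBall]
  exact ((hF.comp measurable_snd).indicator h_set).lintegral_prod_right'

theorem exists_disjoint_closedBall_of_lt_dyadicMax {F : ℝ → ℝ≥0∞} (hF : ∫⁻ s, F s ≠ ∞)
    {l : ℝ≥0∞} (hl : l ≠ 0) (hl_top : l ≠ ∞) :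
    ∃ (u : Set ℝ) (r : ℝ → ℝ), u.Countable ∧ u.PairwiseDisjoint (fun t => closedBall t (r t)) ∧
      (∀ t ∈ u, l * volume (closedBall t (r t)) ≤ ∫⁻ s in closedBall t (r t), F s) ∧
      {t | l < dyadicMax F t} ⊆ ⋃ t ∈ u, closedBall t (4 * r t) := by
  choose! j hj using fun t (ht : l < dyadicMax F t) => lt_iSup_iff.1 ht
  set r : ℝ → ℝ := fun t => 2 ^ (j t : ℝ)
  have hr : ∀ t, 0 < r t := fun t => two_rpow_pos _
  have h_avg : ∀ t, l < dyadicMax F t →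
      l * volume (closedBall t (r t)) ≤ ∫⁻ s in closedBall t (r t), F s := fun t ht => by
    rw [← measure_mul_setLAverage F measure_closedBall_lt_top.ne, mul_comm]
    exact mul_le_mul_right (hj t ht).le _
  have hr_le : ∀ t, l < dyadicMax F t → r t ≤ ((∫⁻ s, F s) / l).toReal := fun t ht => by
    have h_vol : ENNReal.ofReal (2 * r t) ≤ (∫⁻ s, F s) / l := by
      rw [ENNReal.le_div_iff_mul_le (Or.inl hl) (Or.inl hl_top), ← Real.volume_closedBall t,
        mul_comm]
      exact (h_avg t ht).trans (setLIntegral_le_lintegral _ _)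
    linarith [(ENNReal.ofReal_le_iff_le_toReal (ENNReal.div_ne_top hF hl)).1 h_vol, hr t]
  obtain ⟨u, hu, h_disj, h_cover⟩ :=
    Vitali.exists_disjoint_subfamily_covering_enlargement_closedBall
      {t | l < dyadicMax F t} id r _ hr_le 4 (by norm_num)
  refine ⟨u, r, ?_, h_disj, fun t ht => h_avg t (hu ht), fun t ht => ?_⟩
  · exact h_disj.countable_of_nonempty_interior fun t _ =>
      ⟨t, ball_subset_interior_closedBall (mem_ball_self (hr t))⟩
  · obtain ⟨b, hb, h_sub⟩ := h_cover t ht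
    exact mem_biUnion hb (h_sub (mem_closedBall_self (hr t).le))

theorem mul_volume_lt_dyadicMax_le (F : ℝ → ℝ≥0∞) {l : ℝ≥0∞} (hl : l ≠ 0) (hl_top : l ≠ ∞) :
    l * volume {t | l < dyadicMax F t} ≤ 4 * ∫⁻ s, F s := by
  rcases eq_or_ne (∫⁻ s, F s) ∞ with hF | hF
  · simp [hF]
  obtain ⟨u, r, hu, h_disj, h_avg, h_cover⟩ :=
    exists_disjoint_closedBall_of_lt_dyadicMax hF hl hl_top
  calc l * volume {t | l < dyadicMax F t}
      ≤ l * ∑' t : u, volume (closedBall (t : ℝ) (4 * r t)) :=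
        mul_le_mul_right ((measure_mono h_cover).trans (measure_biUnion_le _ hu _)) _
    _ = 4 * ∑' t : u, l * volume (closedBall (t : ℝ) (r t)) := by
        simp_rw [← ENNReal.tsum_mul_left, Real.volume_closedBall, mul_left_comm (2 : ℝ) 4,
          ENNReal.ofReal_mul (zero_le_four (α := ℝ)), ENNReal.ofReal_ofNat, mul_left_comm l 4]
    _ ≤ 4 * ∑' t : u, ∫⁻ s in closedBall (t : ℝ) (r t), F s :=
        mul_le_mul_right (ENNReal.tsum_le_tsum fun t : u => h_avg t t.2) _
    _ = 4 * ∫⁻ s in ⋃ t ∈ u, closedBall t (r t), F s := by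
        rw [lintegral_biUnion hu (fun _ _ => measurableSet_closedBall) h_disj]
    _ ≤ 4 * ∫⁻ s, F s := mul_le_mul_right (setLIntegral_le_lintegral _ _) _

theorem dyadicMax_le_add (F : ℝ → ℝ≥0∞) (l : ℝ≥0∞) (t : ℝ) :
    dyadicMax F t ≤ dyadicMax ({s | l < F s}.indicator F) t + l := by
  refine iSup_le fun j => le_trans ?_ (add_le_add_left (le_iSup _ j) l)
  have h_ne : volume (closedBall t ((2 : ℝ) ^ (j : ℝ))) ≠ 0 :=
    (measure_closedBall_pos _ _ (two_rpow_pos _)).ne'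
  have h_le : ∀ s, F s ≤ {s | l < F s}.indicator F s + l := fun s => by
    by_cases h : s ∈ {s | l < F s}
    · simp [indicator_of_mem h]
    · simpa [indicator_of_notMem h] using h
  calc ⨍⁻ s in closedBall t ((2 : ℝ) ^ (j : ℝ)), F s ∂volume
      ≤ ⨍⁻ s in closedBall t ((2 : ℝ) ^ (j : ℝ)), ({s | l < F s}.indicator F s + l) ∂volume :=
        lintegral_mono h_le
    _ = (⨍⁻ s in closedBall t ((2 : ℝ) ^ (j : ℝ)), {s | l < F s}.indicator F s ∂volume) + l := by
        rw [setLAverage_eq, lintegral_add_right _ measurable_const, ENNReal.add_div,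
          ← setLAverage_eq, ← setLAverage_eq, setLAverage_const h_ne measure_closedBall_lt_top.ne]

theorem mul_volume_two_mul_lt_dyadicMax_le (F : ℝ → ℝ≥0∞) {l : ℝ≥0∞} (hl : l ≠ 0)
    (hl_top : l ≠ ∞) :
    l * volume {t | 2 * l < dyadicMax F t} ≤ 4 * ∫⁻ s, {s | l < F s}.indicator F s := by
  refine le_trans (mul_le_mul_right (measure_mono fun t ht => ?_) _)
    (mul_volume_lt_dyadicMax_le ({s | l < F s}.indicator F) hl hl_top)
  have h_lt : 2 * l < dyadicMax F t := ht
  rw [two_mul] at h_lt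
  exact lt_of_add_lt_add_right (h_lt.trans_le (dyadicMax_le_add F l t))

theorem volume_setOf_ofReal_lt_le (x : ℝ≥0∞) :
    volume.restrict (Ioi 0) {l | ENNReal.ofReal l < x} ≤ x := by
  rcases eq_or_ne x ∞ with rfl | hx
  · exact le_top
  rw [Measure.restrict_apply' measurableSet_Ioi]
  calc volume ({l | ENNReal.ofReal l < x} ∩ Ioi 0) ≤ volume (Ioo 0 x.toReal) :=
        measure_mono fun l hl => ⟨hl.2, (ENNReal.ofReal_lt_iff_lt_toReal hl.2.le hx).1 hl.1⟩
    _ = x := by rw [Real.volume_Ioo, _root_.sub_zero, ofReal_toReal hx]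

theorem sq_le_two_mul_lintegral_ofReal_lt (x : ℝ≥0∞) :
    x ^ 2 ≤ 2 * ∫⁻ l in Ioi 0, {l | ENNReal.ofReal l < x}.indicator ENNReal.ofReal l := by
  rw [← ENNReal.rpow_natCast, ← ENNReal.le_rpow_inv_iff (by norm_num)]
  refine ENNReal.le_of_forall_nnreal_lt fun r hr => ?_
  rw [ENNReal.le_rpow_inv_iff (by norm_num), ENNReal.rpow_natCast]
  calc (r : ℝ≥0∞) ^ 2 = 2 * ENNReal.ofReal (∫ l in (0 : ℝ)..r, l) := by
        rw [integral_id, ← ENNReal.ofReal_ofNat, ← ENNReal.ofReal_mul zero_le_two,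
          mul_div_cancel₀ _ two_ne_zero]
        simp [ENNReal.ofReal_pow]
    _ = 2 * ∫⁻ l in Ioc 0 (r : ℝ), ENNReal.ofReal l := by
        rw [intervalIntegral.integral_of_le r.coe_nonneg, ofReal_integral_eq_lintegral_ofReal
          (intervalIntegral.intervalIntegrable_id (a := 0) (b := r)).1]
        exact ae_restrict_of_forall_mem measurableSet_Ioc fun l hl => hl.1.le
    _ = 2 * ∫⁻ l in Ioc 0 (r : ℝ), {l | ENNReal.ofReal l < x}.indicator ENNReal.ofReal l := by
        refine congrArg _ (setLIntegral_congr_fun measurableSet_Ioc fun l hl => ?_)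
        have hl_lt : ENNReal.ofReal l < x :=
          (ENNReal.ofReal_le_ofReal hl.2).trans_lt (by simpa using hr)
        exact (indicator_of_mem (s := {l | ENNReal.ofReal l < x}) hl_lt _).symm
    _ ≤ _ := mul_le_mul_right (lintegral_mono_set Ioc_subset_Ioi_self) _

variable {α : Type*} [MeasurableSpace α] {μ : Measure α} [SFinite μ] {f : α → ℝ≥0∞}

theorem lintegral_sq_le_lintegral_mul_measure_two_mul_lt (hf : Measurable f) :
    ∫⁻ x, f x ^ 2 ∂μ ≤
      8 * ∫⁻ l in Ioi (0 : ℝ), ENNReal.ofReal l * μ {x | 2 * ENNReal.ofReal l < f x} := by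
  have h_half : ∀ x (l : ℝ), ENNReal.ofReal l < f x / 2 ↔ 2 * ENNReal.ofReal l < f x :=
    fun x l => by rw [ENNReal.lt_div_iff_mul_lt (by simp) (by simp), mul_comm]
  have h_swap : ∀ x (l : ℝ), {l | 2 * ENNReal.ofReal l < f x}.indicator ENNReal.ofReal l =
      {x | 2 * ENNReal.ofReal l < f x}.indicator (fun _ => ENNReal.ofReal l) x := fun _ _ => rfl
  have h_meas : Measurable fun p : α × ℝ =>
      {l | 2 * ENNReal.ofReal l < f p.1}.indicator ENNReal.ofReal p.2 :=
    (ENNReal.measurable_ofReal.comp measurable_snd).indicator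
      (measurableSet_lt (by fun_prop) (by fun_prop) :
        MeasurableSet {p : α × ℝ | 2 * ENNReal.ofReal p.2 < f p.1})
  calc ∫⁻ x, f x ^ 2 ∂μ = ∫⁻ x, 4 * (f x / 2) ^ 2 ∂μ := by
        refine lintegral_congr fun x => ?_
        rw [← ENNReal.mul_div_cancel (b := f x) two_ne_zero ofNat_ne_top, mul_pow,
          ENNReal.mul_div_cancel two_ne_zero ofNat_ne_top]
        norm_num
    _ ≤ ∫⁻ x, 4 * (2 * ∫⁻ l in Ioi (0 : ℝ),
          {l | 2 * ENNReal.ofReal l < f x}.indicator ENNReal.ofReal l) ∂μ := by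
        simp_rw [← h_half]
        exact lintegral_mono fun x => mul_le_mul_right (sq_le_two_mul_lintegral_ofReal_lt _) _
    _ = 8 * ∫⁻ l in Ioi (0 : ℝ), ENNReal.ofReal l * μ {x | 2 * ENNReal.ofReal l < f x} := by
        simp_rw [← mul_assoc]
        rw [lintegral_const_mul' _ _ (by finiteness), lintegral_lintegral_swap h_meas.aemeasurable]
        simp_rw [h_swap, lintegral_indicator_const (measurableSet_lt measurable_const hf)]
        norm_num

theorem lintegral_lintegral_indicator_lt_le (hf : Measurable f) :
    ∫⁻ l in Ioi (0 : ℝ), ∫⁻ x, {x | ENNReal.ofReal l < f x}.indicator f x ∂μ ≤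
      ∫⁻ x, f x ^ 2 ∂μ := by
  have h_swap : ∀ x (l : ℝ), {x | ENNReal.ofReal l < f x}.indicator f x =
      {l | ENNReal.ofReal l < f x}.indicator (fun _ => f x) l := fun _ _ => rfl
  have h_meas : Measurable fun p : ℝ × α => {x | ENNReal.ofReal p.1 < f x}.indicator f p.2 :=
    (hf.comp measurable_snd).indicator (measurableSet_lt (by fun_prop) (by fun_prop) :
      MeasurableSet {p : ℝ × α | ENNReal.ofReal p.1 < f p.2})
  rw [lintegral_lintegral_swap h_meas.aemeasurable]
  simp_rw [h_swap, lintegral_indicator_const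
    (measurableSet_lt ENNReal.measurable_ofReal measurable_const), sq]
  exact lintegral_mono fun x => mul_le_mul_right (volume_setOf_ofReal_lt_le _) _

theorem eLpNorm_dyadicMax_le {F : ℝ → ℝ≥0∞} (hF : Measurable F) :
    eLpNorm (dyadicMax F) 2 ≤ 6 * eLpNorm F 2 := by
  have h_sq : ∀ G : ℝ → ℝ≥0∞, eLpNorm G 2 ^ 2 = ∫⁻ t, G t ^ 2 := fun G => by
    simp [← lintegral_enorm_sq_eq]
  rw [← ENNReal.pow_le_pow_left_iff two_ne_zero, mul_pow, h_sq, h_sq]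
  calc ∫⁻ t, dyadicMax F t ^ 2
      ≤ 8 * ∫⁻ l in Ioi (0 : ℝ),
          ENNReal.ofReal l * volume {t | 2 * ENNReal.ofReal l < dyadicMax F t} :=
        lintegral_sq_le_lintegral_mul_measure_two_mul_lt (measurable_dyadicMax hF)
    _ ≤ 8 * ∫⁻ l in Ioi (0 : ℝ), 4 * ∫⁻ s, {s | ENNReal.ofReal l < F s}.indicator F s :=
        mul_le_mul_right (setLIntegral_mono' measurableSet_Ioi fun l hl =>
          mul_volume_two_mul_lt_dyadicMax_le F (ENNReal.ofReal_pos.2 hl).ne' ofReal_ne_top) _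
    _ = 32 * ∫⁻ l in Ioi (0 : ℝ), ∫⁻ s, {s | ENNReal.ofReal l < F s}.indicator F s := by
        rw [lintegral_const_mul' _ _ (by finiteness), ← mul_assoc]
        norm_num
    _ ≤ 6 ^ 2 * ∫⁻ t, F t ^ 2 :=
        mul_le_mul' (by norm_num) (lintegral_lintegral_indicator_lt_le hF)

end MaximalFunction

section PoissonRepresentation

theorem eq_zero_of_damped_oscillator {F : Type*} [NormedAddCommGroup F] [InnerProductSpace ℝ F]
    {f f' f'' : ℝ → F} {a m : ℝ} (ha : 0 < a) (hm : 0 ≤ m) (hf : ∀ y, HasDerivAt f (f' y) y)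
    (hf' : ∀ y, HasDerivAt f' (f'' y) y)
    (hode : ∀ y, 0 < y → f'' y = -(2 * m / y) • f' y - a ^ 2 • f y)
    (h_zero : f 0 = 0) (h_zero' : f' 0 = 0) {y : ℝ} (hy : 0 ≤ y) : f y = 0 := by
  set energy : ℝ → ℝ := fun y => ‖f' y‖ ^ 2 + a ^ 2 * ‖f y‖ ^ 2 with h_energy
  have h_deriv : ∀ y, HasDerivAt energy
      (2 * ⟪f' y, f'' y⟫ + a ^ 2 * (2 * ⟪f y, f' y⟫)) y := fun y =>
    (hf' y).norm_sq.add ((hf y).norm_sq.const_mul _)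
  have h_damped : ∀ y, 0 < y →
      2 * ⟪f' y, f'' y⟫ + a ^ 2 * (2 * ⟪f y, f' y⟫) = -(4 * m / y * ‖f' y‖ ^ 2) := fun y hy => by
    rw [hode y hy, inner_sub_right, inner_smul_right, inner_smul_right,
      real_inner_self_eq_norm_sq, real_inner_comm (f y)]
    ring
  have h_anti : AntitoneOn energy (Ici 0) := by
    refine antitoneOn_of_hasDerivWithinAt_nonpos (convex_Ici 0)
      (fun z _ => (h_deriv z).continuousAt.continuousWithinAt)
      (fun z _ => (h_deriv z).hasDerivWithinAt) fun z hz => ?_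
    rw [interior_Ici] at hz
    have hz0 : 0 < z := hz
    rw [h_damped z hz0]
    exact neg_nonpos.2 (by positivity)
  have h_le : ‖f' y‖ ^ 2 + a ^ 2 * ‖f y‖ ^ 2 ≤ 0 := by
    simpa [h_energy, h_zero, h_zero'] using h_anti self_mem_Ici hy hy
  have h_sq : a ^ 2 * ‖f y‖ ^ 2 = 0 :=
    le_antisymm (by linarith [sq_nonneg ‖f' y‖]) (by positivity)
  simpa [ha.ne'] using h_sq

/-- The density `(1 - s ^ 2) ^ p` on `[-1, 1]`, which for `p = (n - 3) / 2` is up to a constant the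
image of the surface measure of the unit sphere of `ℝⁿ` under a coordinate. -/
noncomputable def poissonWeight (p : ℝ) : ℝ → ℂ :=
  (Icc (-1) 1).indicator fun s => ((1 - s ^ 2) ^ p : ℝ)

variable {p : ℝ}

theorem enorm_poissonWeight_le (hp : 0 ≤ p) (s : ℝ) :
    ‖poissonWeight p s‖ₑ ≤ (Icc (-1) 1).indicator 1 s := by
  by_cases hs : s ∈ Icc (-1 : ℝ) 1
  · have h_nonneg : 0 ≤ 1 - s ^ 2 := by nlinarith [hs.1, hs.2]
    rw [poissonWeight, indicator_of_mem hs, indicator_of_mem hs, ← ofReal_norm,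
      Complex.norm_of_nonneg (Real.rpow_nonneg h_nonneg p)]
    exact ENNReal.ofReal_le_one.2 (Real.rpow_le_one h_nonneg (by nlinarith) hp)
  · simp [poissonWeight, hs]

theorem integrable_mul_poissonWeight (hp : 0 ≤ p) {h : ℝ → ℂ} (hh : Continuous h) :
    Integrable fun s => h s * poissonWeight p s := by
  have h_cont : Continuous fun s : ℝ => h s * (((1 - s ^ 2) ^ p : ℝ) : ℂ) :=
    hh.mul (Complex.continuous_ofReal.comp
      ((Real.continuous_rpow_const hp).comp (by fun_prop)))
  convert! (integrable_indicator_iff measurableSet_Icc).2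
    (h_cont.integrableOn_Icc (μ := volume) (a := -1) (b := 1)) using 2 with s
  by_cases hs : s ∈ Icc (-1 : ℝ) 1 <;> simp [poissonWeight, hs]

theorem integrable_poissonWeight (hp : 0 ≤ p) : Integrable (poissonWeight p) := by
  simpa using integrable_mul_poissonWeight hp (continuous_const (y := 1))

theorem hasDerivAt_fourier_poissonWeight (hp : 0 ≤ p) (y : ℝ) :
    HasDerivAt (𝓕 (poissonWeight p))
      (𝓕 (fun s : ℝ => (-2 * π * Complex.I * s) • poissonWeight p s) y) y :=
  Real.hasDerivAt_fourier (integrable_poissonWeight hp)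
    (by simpa using integrable_mul_poissonWeight hp Complex.continuous_ofReal) y

theorem hasDerivAt_fourier_smul_poissonWeight (hp : 0 ≤ p) (y : ℝ) :
    HasDerivAt (𝓕 fun s : ℝ => (-2 * π * Complex.I * s) • poissonWeight p s)
      (𝓕 (fun s : ℝ => (-2 * π * Complex.I * s) • (-2 * π * Complex.I * s) • poissonWeight p s) y)
      y := by
  refine Real.hasDerivAt_fourier (integrable_mul_poissonWeight hp (by fun_prop)) ?_ y
  simp only [Complex.real_smul, ← mul_assoc]
  exact integrable_mul_poissonWeight hp (by fun_prop)

theorem integral_deriv_fourierChar_mul_poissonWeight (hp : 0 ≤ p) (y : ℝ) :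
    ∫ s : ℝ, (𝐞 (-(s * y)) : ℂ) * (2 * (p + 1) * s + 2 * π * Complex.I * y * (1 - s ^ 2)) *
      poissonWeight p s = 0 := by
  set D : ℝ → ℂ := fun s => (𝐞 (-(s * y)) : ℂ) *
    (2 * (p + 1) * s + 2 * π * Complex.I * y * (1 - s ^ 2)) * ((1 - s ^ 2) ^ p : ℝ)
  have h_deriv : ∀ s ∈ Ioo (-1 : ℝ) 1, HasDerivAt
      (fun s : ℝ => -((𝐞 (-(s * y)) : ℂ) * (((1 - s ^ 2) ^ (p + 1) : ℝ) : ℂ))) (D s) s := by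
    intro s hs
    have h_nonneg : 0 ≤ 1 - s ^ 2 := by nlinarith [hs.1, hs.2]
    have h_char := (Real.hasDerivAt_fourierChar (-(s * y))).scomp s
      ((hasDerivAt_id s).mul_const y).neg
    have h_pow := ((((hasDerivAt_pow 2 s).const_sub 1).rpow_const (p := p + 1)
      (Or.inr (by linarith))).ofReal_comp)
    convert! (h_char.mul h_pow).neg using 1
    rw [add_sub_cancel_right, Real.rpow_add_one' h_nonneg (by linarith)]
    simp [D]
    ring
  have h_cont : Continuous D := by
    have := Real.continuous_rpow_const hp
    fun_prop
  have h_zero := intervalIntegral.integral_eq_sub_of_hasDerivAt_of_le (by norm_num)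
    (Continuous.continuousOn (by
      have := Real.continuous_rpow_const (by linarith : 0 ≤ p + 1)
      fun_prop)) h_deriv (h_cont.intervalIntegrable _ _)
  rw [intervalIntegral.integral_of_le (by norm_num), ← integral_Icc_eq_integral_Ioc,
    ← integral_indicator measurableSet_Icc] at h_zero
  convert! h_zero using 2
  · ext s
    by_cases hs : s ∈ Icc (-1 : ℝ) 1 <;> simp [poissonWeight, D, hs]
  · have : p + 1 ≠ 0 := by linarith
    simp [this]

theorem fourier_poissonWeight_ode (hp : 0 ≤ p) (y : ℝ) :
    y * 𝓕 (fun s : ℝ => (-2 * π * Complex.I * s) • (-2 * π * Complex.I * s) • poissonWeight p s) y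
      + 2 * (p + 1) * 𝓕 (fun s : ℝ => (-2 * π * Complex.I * s) • poissonWeight p s) y
      + y * (2 * π) ^ 2 * 𝓕 (poissonWeight p) y = 0 := by
  have h_int : ∀ h : ℝ → ℂ, Continuous h →
      Integrable fun s => 𝐞 (-(s * y)) • (h s * poissonWeight p s) := fun h hh => by
    simp only [Circle.smul_def, smul_eq_mul, ← mul_assoc]
    exact integrable_mul_poissonWeight hp (by fun_prop)
  have h_zero := h_int 1 continuous_const
  have h_one := h_int (fun s => -2 * π * Complex.I * s) (by fun_prop)
  have h_two := h_int (fun s => -2 * π * Complex.I * s * (-2 * π * Complex.I * s)) (by fun_prop)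
  simp only [Pi.one_apply, one_mul] at h_zero
  simp only [mul_assoc (-2 * π * Complex.I * _)] at h_two
  simp only [Real.fourier_real_eq, smul_eq_mul]
  rw [← integral_const_mul, ← integral_const_mul, ← integral_const_mul,
    ← integral_add (h_two.const_mul _) (h_one.const_mul _)]
  refine (integral_add ((h_two.const_mul _).add (h_one.const_mul _))
    (h_zero.const_mul _)).symm.trans ?_
  have h_parts := integral_deriv_fourierChar_mul_poissonWeight hp y
  rw [← mul_eq_zero_iff_left (a := -2 * π * Complex.I) (by simp), ← integral_const_mul] at h_parts
  convert! h_parts using 2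
  ext s
  simp only [Pi.add_apply, Circle.smul_def, smul_eq_mul]
  linear_combination (4 * π ^ 2 * y * (𝐞 (-(s * y)) : ℂ) * poissonWeight p s) * Complex.I_sq

theorem fourier_poissonWeight_zero_ne_zero (hp : 0 ≤ p) : 𝓕 (poissonWeight p) 0 ≠ 0 := by
  have h_pos : 0 < ∫ s in (-1 : ℝ)..1, (1 - s ^ 2) ^ p := by
    have := Real.continuous_rpow_const hp
    refine intervalIntegral.intervalIntegral_pos_of_pos_on
      (Continuous.intervalIntegrable (by fun_prop) _ _) (fun s hs => ?_) (by norm_num)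
    exact Real.rpow_pos_of_pos (by nlinarith [hs.1, hs.2]) p
  rw [Real.fourier_real_eq]
  simp only [mul_zero, neg_zero, AddChar.map_zero_eq_one, one_smul, poissonWeight]
  rw [integral_indicator measurableSet_Icc, integral_complex_ofReal,
    integral_Icc_eq_integral_Ioc, ← intervalIntegral.integral_of_le (by norm_num)]
  exact_mod_cast h_pos.ne'

variable (E : Type*) [NormedAddCommGroup E] [InnerProductSpace ℝ E] [FiniteDimensional ℝ E]
  [Nontrivial E] [MeasurableSpace E] [BorelSpace E]

/- Poisson's integral for Bessel functions: both sides solve the same damped oscillator equation,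
with zero velocity at the origin. -/
theorem exists_sphereKernel_eq_fourier_poissonWeight (h : 3 ≤ finrank ℝ E) :
    ∃ c : ℂ, ∀ y, 0 ≤ y →
      (sphereKernel E y : ℂ) = c * 𝓕 (poissonWeight ((finrank ℝ E - 3) / 2)) y := by
  set p : ℝ := (finrank ℝ E - 3) / 2 with hp_def
  have hp : 0 ≤ p := div_nonneg (sub_nonneg.2 (by exact_mod_cast h)) zero_le_two
  set c : ℂ := sphereKernel E 0 / 𝓕 (poissonWeight p) 0 with hc
  refine ⟨c, fun y hy => sub_eq_zero.1 <| eq_zero_of_damped_oscillator Real.two_pi_pos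
    (m := p + 1) (by linarith)
    (fun y => (hasDerivAt_sphereKernel E y).ofReal_comp.sub
      ((hasDerivAt_fourier_poissonWeight hp y).const_mul c))
    (fun y => (hasDerivAt_sphereKernelDeriv E y).ofReal_comp.sub
      ((hasDerivAt_fourier_smul_poissonWeight hp y).const_mul c))
    (fun y hy => ?_) ?_ ?_ hy⟩
  · have hy' : (y : ℂ) ≠ 0 := by exact_mod_cast hy.ne'
    rw [sphereKernel_ode E hy, show ((finrank ℝ E - 1) / 2 : ℝ) = p + 1 by rw [hp_def]; ring]
    have h_ode := fourier_poissonWeight_ode hp y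
    simp only [Complex.real_smul, Pi.sub_apply]
    push_cast
    linear_combination (norm := skip) -c / y * h_ode
    field_simp
    ring
  · simp [hc, fourier_poissonWeight_zero_ne_zero hp]
  · have h_ode := fourier_poissonWeight_ode hp 0
    have hp' : (p : ℂ) + 1 ≠ 0 := by exact_mod_cast (by linarith : p + 1 ≠ 0)
    simp only [Complex.ofReal_zero, zero_mul, zero_add, add_zero, mul_eq_zero,
      OfNat.ofNat_ne_zero, hp', false_or] at h_ode
    rw [h_ode, mul_zero, sub_zero]
    simp [sphereKernelDeriv, sphereCosDeriv]

end PoissonRepresentation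

section Endpoint

theorem lintegral_Icc_comp_sub_mul (F : ℝ → ℝ≥0∞) (t : ℝ) {R : ℝ} (hR : 0 < R) :
    ∫⁻ s in Icc (-1) 1, F (t - s * R) = ENNReal.ofReal R⁻¹ * ∫⁻ s in closedBall t R, F s := by
  have h_mem : ∀ s, t - s * R ∈ closedBall t R ↔ s ∈ Icc (-1 : ℝ) 1 := fun s => by
    rw [Real.closedBall_eq_Icc]
    constructor <;> rintro ⟨h₁, h₂⟩ <;> constructor <;> nlinarith
  have h_map := (measurableEmbedding_mulRight₀ hR.ne').lintegral_map (μ := volume)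
    fun x => (closedBall t R).indicator F (t - x)
  rw [Real.map_volume_mul_right hR.ne', lintegral_smul_measure,
    lintegral_sub_left_eq_self (fun x => (closedBall t R).indicator F x),
    lintegral_indicator measurableSet_closedBall, abs_of_pos (inv_pos.2 hR)] at h_map
  rw [← smul_eq_mul, h_map, ← lintegral_indicator measurableSet_Icc]
  congr 1 with s
  by_cases hs : s ∈ Icc (-1 : ℝ) 1
  · rw [indicator_of_mem hs, indicator_of_mem ((h_mem s).2 hs)]
  · rw [indicator_of_notMem hs, indicator_of_notMem ((h_mem s).not.2 hs)]

theorem lintegral_Icc_comp_sub_mul_le (F : ℝ → ℝ≥0∞) (t : ℝ) {R : ℝ} (hR : 0 < R) :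
    ∫⁻ s in Icc (-1) 1, F (t - s * R) ≤ 4 * dyadicMax F t := by
  obtain ⟨j, hj_le, hj_lt⟩ : ∃ j, R ∈ shell j := mem_iUnion.1 (iUnion_shell ▸ hR)
  have h_succ : 2 * (2 : ℝ) ^ (j : ℝ) = 2 ^ ((j + 1 : ℤ) : ℝ) := by
    rw [Int.cast_add, Int.cast_one, Real.rpow_add_one two_ne_zero, mul_comm]
  set S := (2 : ℝ) ^ ((j + 1 : ℤ) : ℝ)
  have hS : 2 * S ≤ 4 * R := by linarith
  calc ∫⁻ s in Icc (-1) 1, F (t - s * R)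
    _ ≤ ENNReal.ofReal R⁻¹ * ∫⁻ s in closedBall t S, F s := by
      rw [lintegral_Icc_comp_sub_mul F t hR]
      gcongr
      exact h_succ ▸ hj_lt.le
    _ ≤ ENNReal.ofReal R⁻¹ * (ENNReal.ofReal (4 * R) * dyadicMax F t) := by
      rw [← measure_mul_setLAverage F measure_closedBall_lt_top.ne, Real.volume_closedBall]
      gcongr
      exact le_iSup (fun j : ℤ => ⨍⁻ s in closedBall t ((2 : ℝ) ^ (j : ℝ)), F s ∂volume) (j + 1)
    _ = 4 * dyadicMax F t := by
      rw [← mul_assoc, ← ENNReal.ofReal_mul (by positivity),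
        show R⁻¹ * (4 * R) = 4 by field_simp, ENNReal.ofReal_ofNat]

variable {E : Type*} [NormedAddCommGroup E] [InnerProductSpace ℝ E] [FiniteDimensional ℝ E]
  [Nontrivial E] [MeasurableSpace E] [BorelSpace E] {G : ℝ → ℂ}

theorem integral_fourier_mul_smul {W u : ℝ → ℂ} (hW : Integrable W) (hu : Integrable u)
    (t R : ℝ) :
    ∫ ρ, 𝐞 (t * ρ) • (𝓕 W (ρ * R) * u ρ) = ∫ s, W s * 𝓕⁻ u (t - s * R) := by
  have h_flip := VectorFourier.integral_fourierIntegral_smul_eq_flip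
    (L := R • LinearMap.mul ℝ ℝ) Real.continuous_fourierChar
    (by simp only [LinearMap.smul_apply, LinearMap.mul_apply_apply, smul_eq_mul]; fun_prop) hW
    (integrable_fourierChar_smul (φ := fun ρ => t * ρ) (by fun_prop) hu)
  refine Eq.trans ?_ (h_flip.trans ?_)
  · congr 1 with ρ
    rw [Real.fourier_real_eq, VectorFourier.fourierIntegral, smul_comm (_ : ℂ) (𝐞 (t * ρ)),
      smul_eq_mul]
    congr! 6
    simp only [LinearMap.smul_apply, LinearMap.mul_apply_apply, smul_eq_mul]
    ring
  · congr 1 with s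
    rw [Real.fourierInv_eq, VectorFourier.fourierIntegral, smul_eq_mul]
    congr 2 with ρ
    rw [smul_smul, ← AddChar.map_add_eq_mul]
    congr 2
    simp only [LinearMap.flip_apply, LinearMap.smul_apply, LinearMap.mul_apply_apply, smul_eq_mul,
      RCLike.inner_apply, conj_trivial]
    ring

variable (E) in
theorem exists_enorm_halfWave_le_dyadicMax (h : 3 ≤ finrank ℝ E) :
    ∃ c ≠ ∞, ∀ G : ℝ → ℂ, Integrable (fun ξ : E => G ‖ξ‖) → ∀ t, ∀ x : E, x ≠ 0 →
      ‖halfWave (fun ξ => G ‖ξ‖) t x‖ₑ ≤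
        c * dyadicMax (fun t => ‖𝓕⁻ (radAmp E G) t‖ₑ) t := by
  obtain ⟨c, hc⟩ := exists_sphereKernel_eq_fourier_poissonWeight E h
  set p : ℝ := (finrank ℝ E - 3) / 2
  have hp : 0 ≤ p := div_nonneg (sub_nonneg.2 (by exact_mod_cast h)) zero_le_two
  refine ⟨‖c‖ₑ * 4, by finiteness, fun G hG t x hx => ?_⟩
  have h_poisson : halfWave (fun ξ => G ‖ξ‖) t x =
      c * ∫ s, poissonWeight p s * 𝓕⁻ (radAmp E G) (t - s * ‖x‖) := by
    rw [← integral_fourier_mul_smul (integrable_poissonWeight hp)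
      (integrable_radAmp hG), halfWave_radial hG, waveInt_eq_integral,
      ← integral_const_mul]
    congr 1 with ρ
    by_cases hρ : 0 < ρ
    · rw [← Complex.coe_smul, hc _ (by positivity)]
      simp only [Circle.smul_def, smul_eq_mul]
      ring
    · simp [radAmp, hρ]
  rw [h_poisson, enorm_mul, mul_assoc]
  gcongr
  calc ‖∫ s, poissonWeight p s * 𝓕⁻ (radAmp E G) (t - s * ‖x‖)‖ₑ
    _ ≤ ∫⁻ s, (Icc (-1) 1).indicator (fun s => ‖𝓕⁻ (radAmp E G) (t - s * ‖x‖)‖ₑ) s := by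
      refine (enorm_integral_le_lintegral_enorm _).trans (lintegral_mono fun s => ?_)
      have h_weight := enorm_poissonWeight_le hp s
      by_cases hs : s ∈ Icc (-1 : ℝ) 1
      · rw [indicator_of_mem hs] at h_weight ⊢
        exact (enorm_mul _ _).trans_le (mul_le_of_le_one_left' h_weight)
      · simp [poissonWeight, hs]
    _ ≤ _ := by
      rw [lintegral_indicator measurableSet_Icc]
      exact lintegral_Icc_comp_sub_mul_le (fun t => ‖𝓕⁻ (radAmp E G) t‖ₑ) t (norm_pos_iff.2 hx)

variable (E) in
theorem exists_eLpNorm_eLpNorm_halfWave_le_radAmp (h : 3 ≤ finrank ℝ E) :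
    ∃ c ≠ ∞, ∀ G : ℝ → ℂ, Integrable (fun ξ : E => G ‖ξ‖) →
      eLpNorm (fun t => eLpNorm (halfWave (fun ξ : E => G ‖ξ‖) t) ∞) 2 ≤
        c * eLpNorm (radAmp E G) 2 := by
  obtain ⟨c, hc, h_le⟩ := exists_enorm_halfWave_le_dyadicMax E h
  refine ⟨c * 6, by finiteness, fun G hG => ?_⟩
  have hu_int : Integrable (radAmp E G) := integrable_radAmp hG
  have h_meas : Measurable fun t => ‖𝓕⁻ (radAmp E G) t‖ₑ :=
    (continuous_fourierInv hu_int).enorm.measurable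
  have h_sup : ∀ t, eLpNorm (halfWave (fun ξ : E => G ‖ξ‖) t) ∞ ≤
      c * dyadicMax (fun t => ‖𝓕⁻ (radAmp E G) t‖ₑ) t := fun t => by
    rw [eLpNorm_exponent_top]
    exact eLpNormEssSup_le_of_ae_enorm_bound
      ((Measure.ae_ne volume (0 : E)).mono fun x hx => h_le G hG t x hx)
  refine (eLpNorm_le_mul_eLpNorm_of_ae_le_mul'' 2
    (measurable_dyadicMax h_meas).aestronglyMeasurable
    (Eventually.of_forall fun t => by simpa only [enorm_eq_self] using h_sup t)).trans ?_
  rw [mul_assoc]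
  gcongr
  refine (eLpNorm_dyadicMax_le h_meas).trans ?_
  gcongr
  exact (eLpNorm_enorm _).trans_le (eLpNorm_fourierInv_le hu_int)

theorem radialEstimate_two_top (h : 3 ≤ finrank ℝ E) : RadialEstimate E 2 ∞ := by
  obtain ⟨c, hc, h_wave⟩ := exists_eLpNorm_eLpNorm_halfWave_le_radAmp E h
  obtain ⟨c', hc', h_radAmp⟩ := exists_eLpNorm_radAmp_le E
  refine ⟨c * c', by finiteness, fun G hG hG_int => ?_⟩
  have h_exp : (finrank ℝ E / 2 - finrank ℝ E / (∞ : ℝ≥0∞).toReal - 1 / (2 : ℝ≥0∞).toReal -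
      (finrank ℝ E - 1) / 2 : ℝ) = 0 := by
    rw [ENNReal.toReal_top, ENNReal.toReal_ofNat]
    ring
  have h_data : eLpNorm (radAmp E G) 2 ≤ c' * eLpNorm (fun ξ : E =>
      ‖ξ‖ ^ (finrank ℝ E / 2 - finrank ℝ E / (∞ : ℝ≥0∞).toReal - 1 / (2 : ℝ≥0∞).toReal) •
        G ‖ξ‖) 2 := by
    refine Eq.trans_le ?_ (h_radAmp G hG _)
    simp only [h_exp, Real.rpow_zero, one_smul]
    rw [← eLpNorm_indicator_eq_eLpNorm_restrict measurableSet_Ioi, radAmp, indicator_indicator,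
      inter_self]
  rw [mul_assoc]
  refine (h_wave G hG_int).trans ?_
  gcongr

end Endpoint

section Assembly

variable {E : Type*} [NormedAddCommGroup E] [InnerProductSpace ℝ E] [FiniteDimensional ℝ E]
  [MeasurableSpace E] [BorelSpace E]

theorem one_div_toReal_add_lt {n : ℕ} {q r : ℝ≥0∞} (hn : 1 ≤ n) (hq : q ≠ 0) (hr : r ≠ 0)
    (h : 1 / q + ((n : ℝ≥0∞) - 1) / r < ((n : ℝ≥0∞) - 1) / 2) :
    1 / q.toReal + (n - 1) / r.toReal < ((n : ℝ) - 1) / 2 := by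
  have h_toReal := (ENNReal.toReal_lt_toReal (by finiteness) (by finiteness)).2 h
  rwa [ENNReal.toReal_add (by finiteness) (by finiteness), ENNReal.toReal_div, ENNReal.toReal_div,
    ENNReal.toReal_div, ENNReal.toReal_sub_of_le (by exact_mod_cast hn) (by finiteness),
    ENNReal.toReal_natCast, ENNReal.toReal_one, ENNReal.toReal_ofNat] at h_toReal

theorem radialEstimate_of_admissible [Nontrivial E] {q r : ℝ≥0∞}
    (hadm : RadWaveAdmissible (finrank ℝ E) q r) : RadialEstimate E q r := by
  obtain ⟨hq, hr, ⟨h_ne, h⟩ | ⟨rfl, rfl⟩⟩ := hadm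
  · have h_real := one_div_toReal_add_lt finrank_pos (two_pos.trans_le hq).ne'
      (two_pos.trans_le hr).ne' h
    by_cases hr_top : r = ∞
    · subst hr_top
      rw [ENNReal.toReal_top, _root_.div_zero, add_zero] at h_real
      rcases hq.eq_or_lt with rfl | hq_two
      · rw [ENNReal.toReal_ofNat] at h_real
        exact radialEstimate_two_top (by exact_mod_cast (by linarith : (2 : ℝ) < finrank ℝ E))
      · exact radialEstimate_top_of_two_lt hq_two (fun hq_top => h_ne ⟨hq_top, rfl⟩) h_real
    · refine radialEstimate_of_ne_top hq hr hr_top ((lt_sub_iff_add_lt.2 h_real).trans_eq ?_)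
      ring
  · exact radialEstimate_top_two

theorem fourier_eq_of_norm_eq {f : E → ℂ} (hf : ∀ x y, ‖x‖ = ‖y‖ → f x = f y) {ξ η : E}
    (h : ‖ξ‖ = ‖η‖) : 𝓕 f ξ = 𝓕 f η := by
  have h_comp := Real.fourier_comp_linearIsometry (Submodule.reflection (ℝ ∙ (ξ - η))ᗮ) f ξ
  rwa [Submodule.reflection_sub h, (funext fun x => hf _ _ (LinearIsometryEquiv.norm_map _ x) :
    f ∘ Submodule.reflection (ℝ ∙ (ξ - η))ᗮ = f)] at h_comp

/-- The radial profile `ρ ^ σ f̂(ρ e)` of the Fourier transform of `|D| ^ σ f` along a unit vector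
`e`. -/
noncomputable def freqProfile [Nontrivial E] (σ : ℝ) (f : E → ℂ) (ρ : ℝ) : ℂ :=
  ρ ^ σ • 𝓕 f (ρ • unitVector E)

theorem measurable_freqProfile [Nontrivial E] (σ : ℝ) {f : E → ℂ} (hf : Integrable f) :
    Measurable (freqProfile σ f) :=
  (measurable_id.pow_const σ).smul ((continuous_fourier hf).comp (by fun_prop)).measurable

theorem freqProfile_norm [Nontrivial E] (σ : ℝ) {f : E → ℂ} (hf : ∀ x y, ‖x‖ = ‖y‖ → f x = f y)
    (ξ : E) : freqProfile σ f ‖ξ‖ = ‖ξ‖ ^ σ • 𝓕 f ξ := by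
  rw [freqProfile, fourier_eq_of_norm_eq hf]
  simp [norm_smul_unitVector]

theorem integral_exp_eq_halfWave (w : E → ℝ) (g : E → ℂ) (a t : ℝ) :
    (fun x => ∫ ξ, Complex.exp (2 * π * ⟪x, ξ⟫ * Complex.I) * (w ξ : ℂ) *
      Complex.exp (a * (2 * π * t * ‖ξ‖) * Complex.I) * g ξ) =
      halfWave (fun ξ => w ξ • g ξ) (a * t) := by
  ext x
  rw [halfWave, Real.fourierInv_eq]
  congr 1 with ξ
  simp only [Circle.smul_def, Real.fourierChar_apply, smul_eq_mul, Complex.real_smul,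
    real_inner_comm x ξ]
  push_cast
  ring_nf

theorem eLpNorm_comp_mul_left (F : ℝ → ℝ≥0∞) {a : ℝ} (ha : a ≠ 0) (q : ℝ≥0∞) :
    eLpNorm (fun t => F (a * t)) q =
      ENNReal.ofReal |a⁻¹| ^ (1 / q).toReal * eLpNorm F q := by
  have h_map := (measurableEmbedding_mulLeft₀ ha).eLpNorm_map_measure (g := F) (p := q)
    (μ := volume)
  rw [Real.map_volume_mul_left ha, eLpNorm_smul_measure_of_ne_zero (by simpa using ha)] at h_map
  exact h_map.symm

theorem timeNorm_le_eLpNorm {q : ℝ≥0∞} (hq : q ≠ 0) (F : ℝ → ℝ≥0∞) :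
    timeNorm q F ≤ eLpNorm F q := by
  refine Eq.trans_le ?_ (eLpNorm_restrict_le F q volume (Ioi 0))
  rw [timeNorm]
  split_ifs with h
  · rw [h, eLpNorm_exponent_top]
    rfl
  · rw [eLpNorm_eq_lintegral_rpow_enorm_toReal hq h]
    rfl

variable [Nontrivial E]

theorem eLpNorm_rpow_smul_freqProfile {f : E → ℂ} (hf : ∀ x y, ‖x‖ = ‖y‖ → f x = f y)
    (α σ : ℝ) (p : ℝ≥0∞) :
    eLpNorm (fun ξ : E => ‖ξ‖ ^ α • freqProfile σ f ‖ξ‖) p =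
      eLpNorm (fun ξ => ‖ξ‖ ^ (α + σ) • 𝓕 f ξ) p := by
  refine eLpNorm_congr_ae ((Measure.ae_ne volume (0 : E)).mono fun ξ hξ => ?_)
  simp only [freqProfile_norm σ hf, smul_smul, Real.rpow_add (norm_pos_iff.2 hξ)]

end Assembly

end RadialStrichartz

open RadialStrichartz in
theorem stmt_7_general {E : Type*} [NormedAddCommGroup E] [InnerProductSpace ℝ E]
    [FiniteDimensional ℝ E] [Nontrivial E] [MeasurableSpace E] [BorelSpace E]
    (σ : ℝ) (q r : ℝ≥0∞) (s ε : ℝ) (hε : ε ≠ 0)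
    (hadm : RadWaveAdmissible (Module.finrank ℝ E) q r)
    (hscal : s = Module.finrank ℝ E / 2 - Module.finrank ℝ E / r.toReal - 1 / q.toReal + σ) :
    ∃ C : ℝ, 0 ≤ C ∧ ∀ f : E → ℂ, Integrable f → (∀ x y, ‖x‖ = ‖y‖ → f x = f y) →
      Integrable (fun ξ => ‖ξ‖ ^ σ * ‖𝓕 f ξ‖) →
      eLpNorm (fun t : ℝ => eLpNorm (fun x : E => ∫ ξ : E,
          Complex.exp (2 * π * ⟪x, ξ⟫ * Complex.I) * ((‖ξ‖ ^ σ : ℝ) : ℂ) *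
            Complex.exp (ε * (2 * π * t * ‖ξ‖) * Complex.I) * 𝓕 f ξ) r) q ≤
        ENNReal.ofReal C * eLpNorm (fun ξ => ‖ξ‖ ^ s • 𝓕 f ξ) 2 := by
  obtain ⟨c, hc, h_radial⟩ := radialEstimate_of_admissible hadm
  set T := ENNReal.ofReal |ε⁻¹| ^ (1 / q).toReal
  refine ⟨(T * c).toReal, toReal_nonneg, fun f hf_int hf hf_freq => ?_⟩
  have hG := measurable_freqProfile σ hf_int
  have hG_norm := freqProfile_norm σ hf
  have hG_int : Integrable fun ξ : E => freqProfile σ f ‖ξ‖ :=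
    hf_freq.mono (hG.comp measurable_norm).aestronglyMeasurable
      (Filter.Eventually.of_forall fun ξ => by simp [hG_norm])
  simp only [integral_exp_eq_halfWave (fun ξ : E => ‖ξ‖ ^ σ), ← hG_norm]
  rw [eLpNorm_comp_mul_left
    (fun t => eLpNorm (halfWave (fun ξ : E => freqProfile σ f ‖ξ‖) t) r volume) hε,
    ENNReal.ofReal_toReal (by finiteness), mul_assoc, hscal, ← eLpNorm_rpow_smul_freqProfile hf]
  gcongr
  exact h_radial _ hG hG_int

/-- **Homogeneous radial Strichartz estimate for the half-wave propagators.**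
For `n ≥ 2`, `σ ∈ ℝ`, spherically symmetric Schwartz `f` on `ℝⁿ`, a radially wave-admissible
pair `(q, r)`, `s = n/2 - n/r - 1/q + σ`, and either sign `ε = ±1`, the half wave
`v_±(t) = |D|^σ e^{± i t |D|} f` satisfies
`‖v_±‖_{L^q_t((0,∞)) L^r_x} ≲ ‖f‖_{Ḣ^s}`, provided the right-hand side is finite and the
defining frequency integral converges absolutely. -/
theorem stmt_7 (n : ℕ) (hn : 2 ≤ n) (σ : ℝ) (q r : ℝ≥0∞) (s : ℝ) (ε : ℝ)
    (hε : ε = 1 ∨ ε = -1)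
    (hadm : RadWaveAdmissible n q r)
    (hscal : s = (n : ℝ) / 2 - (n : ℝ) / r.toReal - 1 / q.toReal + σ) :
    ∃ C : ℝ, 0 ≤ C ∧
      ∀ f : SchwartzMap (EuclideanSpace ℝ (Fin n)) ℂ,
        (∀ x y : EuclideanSpace ℝ (Fin n), ‖x‖ = ‖y‖ → f x = f y) →
        eLpNorm (fun ξ : EuclideanSpace ℝ (Fin n) => (‖ξ‖ ^ s : ℝ) • 𝓕 ⇑f ξ) 2 volume < ⊤ →
        Integrable (fun ξ : EuclideanSpace ℝ (Fin n) => ‖ξ‖ ^ σ * ‖𝓕 ⇑f ξ‖) volume →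
        timeNorm q (fun t =>
            eLpNorm (fun x : EuclideanSpace ℝ (Fin n) =>
              ∫ ξ : EuclideanSpace ℝ (Fin n),
                Complex.exp (2 * Real.pi * ⟪x, ξ⟫ * Complex.I) *
                  ((‖ξ‖ ^ σ : ℝ) : ℂ) *
                    Complex.exp (ε * (2 * Real.pi * t * ‖ξ‖) * Complex.I) *
                      𝓕 ⇑f ξ) r volume)
          ≤ ENNReal.ofReal C *
            eLpNorm (fun ξ : EuclideanSpace ℝ (Fin n) => (‖ξ‖ ^ s : ℝ) • 𝓕 ⇑f ξ) 2 volume := by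
  have : NeZero n := ⟨by omega⟩
  obtain ⟨C, hC, h_le⟩ := stmt_7_general (E := EuclideanSpace ℝ (Fin n)) σ q r s ε
    (by rcases hε with rfl | rfl <;> norm_num) (by simpa using hadm) (by simpa using hscal)
  exact ⟨C, hC, fun f hf _ h_int => (RadialStrichartz.timeNorm_le_eLpNorm
    (two_pos.trans_le hadm.1).ne' _).trans (h_le f f.integrable hf h_int)⟩
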